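/- Let Q be an affine quiver, k an algebraically closed field, and α a positive real root of Q. Then there is exactly one isomorphism class of indecomposable representations of Q over k with dimension vector α. -/

import Mathlib

open scoped BigOperators

/-- A finite quiver: finite sets of vertices and arrows with source and target maps. -/
structure FinQuiver where
  V : Type
  A : Type
  [fintypeV : Fintype V]
  [fintypeA : Fintype A]
  [decEqV : DecidableEq V]
  src : A → V
  tgt : A → V

attribute [instance] FinQuiver.fintypeV FinQuiver.fintypeA FinQuiver.decEqV

namespace FinQuiver

variable (Q : FinQuiver)

/-- The Euler form of a finite quiver. -/
def eulerForm (x y : Q.V → ℤ) : ℤ :=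
  (∑ i : Q.V, x i * y i) - ∑ a : Q.A, x (Q.src a) * y (Q.tgt a)

/-- The Tits form of a finite quiver. -/
def titsForm (x : Q.V → ℤ) : ℤ := Q.eulerForm x x

/-- The quiver has no loops. -/
def NoLoops : Prop := ∀ a : Q.A, Q.src a ≠ Q.tgt a

/-- The underlying (simple) graph of a quiver without loops. -/
def graph : SimpleGraph Q.V where
  Adj i j := i ≠ j ∧ ∃ a : Q.A, (Q.src a = i ∧ Q.tgt a = j) ∨ (Q.src a = j ∧ Q.tgt a = i)
  symm := by
    constructor
    rintro i j ⟨hij, a, h⟩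
    exact ⟨hij.symm, a, h.symm⟩
  loopless := by
    constructor
    rintro i ⟨hii, -⟩
    exact hii rfl

/-- The quiver has no oriented cycles. -/
def Acyclic : Prop :=
  ¬ ∃ (n : ℕ) (g : Fin (n + 1) → Q.A), ∀ k, Q.tgt (g k) = Q.src (g (k + 1))

/-- The double quiver: for each arrow `a : i → j` add a reverse arrow `a* : j → i`. -/
def double : FinQuiver where
  V := Q.V
  A := Q.A ⊕ Q.A
  src := Sum.elim Q.src Q.tgt
  tgt := Sum.elim Q.tgt Q.src

/-- Positive roots: nonzero, nonnegative integer vectors with Tits form at most 1. -/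
def PosRoot (x : Q.V → ℤ) : Prop := (∀ i, 0 ≤ x i) ∧ x ≠ 0 ∧ Q.titsForm x ≤ 1

end FinQuiver

/-- An affine quiver: connected, no loops, no oriented cycles, Tits form positive
semidefinite but not positive definite; `δ` is the minimal positive imaginary root,
generating the radical of the symmetrized Euler form. -/
structure AffineQuiver extends FinQuiver where
  noLoops : toFinQuiver.NoLoops
  connected : toFinQuiver.graph.Connected
  acyclic : toFinQuiver.Acyclic
  posSemidef : ∀ x : V → ℤ, 0 ≤ toFinQuiver.titsForm x
  notPosDef : ∃ x : V → ℤ, x ≠ 0 ∧ toFinQuiver.titsForm x = 0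
  δ : V → ℤ
  delta_pos : ∀ i, 0 < δ i
  radical_iff : ∀ x : V → ℤ,
    (∀ y : V → ℤ, toFinQuiver.eulerForm x y + toFinQuiver.eulerForm y x = 0) ↔
      ∃ m : ℤ, x = m • δ

/-- The defect `∂(x) = e(δ, x)`. -/
def AffineQuiver.defect (Q : AffineQuiver) (x : Q.V → ℤ) : ℤ :=
  Q.eulerForm Q.δ x


section MatrixRep

variable (Q : FinQuiver) (k : Type) [Field k]

/-- The space of representations of `Q` on the fixed vector spaces `k^{d i}`,
in matrix form. -/
def MRep (d : Q.V → ℕ) : Type :=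
  ∀ a : Q.A, Matrix (Fin (d (Q.tgt a))) (Fin (d (Q.src a))) k

variable {Q k}

/-- A family of subspaces is a subrepresentation of `x` if it is stable under all the
arrow maps of `x`. -/
def MSub {d : Q.V → ℕ} (x : MRep Q k d) (U : ∀ i, Submodule k (Fin (d i) → k)) : Prop :=
  ∀ a : Q.A, ∀ v ∈ U (Q.src a), (x a).mulVec v ∈ U (Q.tgt a)

/-- A representation is indecomposable if it is nonzero and is not the internal direct
sum of two nonzero subrepresentations. -/
def MIndec {d : Q.V → ℕ} (x : MRep Q k d) : Prop :=
  (∃ i, 0 < d i) ∧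
    ∀ U W : ∀ i, Submodule k (Fin (d i) → k), MSub x U → MSub x W →
      (∀ i, IsCompl (U i) (W i)) →
        (∀ i, U i = ⊥) ∨ (∀ i, W i = ⊥)

/-- Isomorphism of representations: simultaneous conjugation by a family of invertible
matrices. -/
def MIso {d : Q.V → ℕ} (x y : MRep Q k d) : Prop :=
  ∃ g : ∀ i, GL (Fin (d i)) k,
    ∀ a : Q.A, y a = ((g (Q.tgt a) : Matrix (Fin (d (Q.tgt a))) (Fin (d (Q.tgt a))) k) * x a) *
      (((g (Q.src a))⁻¹ : GL (Fin (d (Q.src a))) k) : Matrix (Fin (d (Q.src a))) (Fin (d (Q.src a))) k)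

/-- Extension of scalars along a field extension: apply the field embedding to all
matrix entries. -/
def mapRep {d : Q.V → ℕ} (K : Type) [Field K] [Algebra k K] (x : MRep Q k d) :
    MRep Q K d :=
  fun a => (x a).map (algebraMap k K)

/-- A representation over `k` is absolutely indecomposable if it remains indecomposable
after extension of scalars to an algebraic closure of `k`. -/
def MAbsIndec {d : Q.V → ℕ} (x : MRep Q k d) : Prop :=
  MIndec x ∧ MIndec (mapRep (AlgebraicClosure k) x)

end MatrixRep



namespace QR

/-- Representations of a quiver. -/
structure Rp (Q : FinQuiver) (k : Type) [Field k] where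
  X : Q.V → Type
  [acg : ∀ i, AddCommGroup (X i)]
  [mod : ∀ i, Module k (X i)]
  [fd : ∀ i, FiniteDimensional k (X i)]
  m : ∀ a : Q.A, X (Q.src a) →ₗ[k] X (Q.tgt a)

attribute [instance] Rp.acg Rp.mod Rp.fd

variable {Q : FinQuiver} {k : Type} [Field k]

abbrev C0 (X Y : Rp Q k) : Type := ∀ i, X.X i →ₗ[k] Y.X i
abbrev C1 (X Y : Rp Q k) : Type := ∀ a, X.X (Q.src a) →ₗ[k] Y.X (Q.tgt a)

/-- composition of families -/
def cc {X Y Z : Rp Q k} (g : C0 Y Z) (f : C0 X Y) : C0 X Z := fun i => g i ∘ₗ f i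

notation:80 f:81 " ⊚ " g:80 => cc f g

def one (X : Rp Q k) : C0 X X := fun _ => LinearMap.id

def lw {X Y Z : Rp Q k} (g : C0 Y Z) (z : C1 X Y) : C1 X Z := fun a => g (Q.tgt a) ∘ₗ z a
def rk {X Y Z : Rp Q k} (z : C1 Y Z) (f : C0 X Y) : C1 X Z := fun a => z a ∘ₗ f (Q.src a)

/-- the differential -/
def dd (X Y : Rp Q k) : C0 X Y →ₗ[k] C1 X Y where
  toFun f := fun a => Y.m a ∘ₗ f (Q.src a) - f (Q.tgt a) ∘ₗ X.m a
  map_add' f g := by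
    funext a; ext v; simp; abel
  map_smul' c f := by
    funext a; ext v; simp [smul_sub]

def IsHom {X Y : Rp Q k} (f : C0 X Y) : Prop := dd X Y f = 0

section basics
variable {W X Y Z : Rp Q k}

lemma dd_apply (f : C0 X Y) (a) (v) : dd X Y f a v = Y.m a (f _ v) - f _ (X.m a v) := rfl

lemma isHom_iff {f : C0 X Y} : IsHom f ↔ ∀ a v, Y.m a (f _ v) = f _ (X.m a v) := by
  constructor
  · intro h a v
    have := congrArg (fun z => z a v) h
    exact sub_eq_zero.mp this
  · intro h
    funext a; ext v
    exact sub_eq_zero.mpr (h a v)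

@[simp] lemma cc_apply (g : C0 Y Z) (f : C0 X Y) (i) (v) : (g ⊚ f) i v = g i (f i v) := rfl
@[simp] lemma one_apply (i) (v : X.X i) : one X i v = v := rfl
@[simp] lemma lw_apply (g : C0 Y Z) (z : C1 X Y) (a) (v) : lw g z a v = g _ (z a v) := rfl
@[simp] lemma rk_apply (z : C1 Y Z) (f : C0 X Y) (a) (v) : rk z f a v = z a (f _ v) := rfl

lemma ext0 {f g : C0 X Y} (h : ∀ i v, f i v = g i v) : f = g := by
  funext i; ext v; exact h i v
lemma ext1 {f g : C1 X Y} (h : ∀ i v, f i v = g i v) : f = g := by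
  funext i; ext v; exact h i v

lemma cc_assoc (h : C0 Y Z) (g : C0 X Y) (f : C0 W X) : (h ⊚ g) ⊚ f = h ⊚ g ⊚ f := rfl
@[simp] lemma one_cc (f : C0 X Y) : one Y ⊚ f = f := rfl
@[simp] lemma cc_one (f : C0 X Y) : f ⊚ one X = f := rfl
@[simp] lemma cc_zero (f : C0 Y Z) : f ⊚ (0 : C0 X Y) = 0 := by apply ext0; intros; simp
@[simp] lemma zero_cc (f : C0 X Y) : (0 : C0 Y Z) ⊚ f = 0 := by apply ext0; intros; simp
lemma cc_add (f : C0 Y Z) (g h : C0 X Y) : f ⊚ (g + h) = f ⊚ g + f ⊚ h := by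
  apply ext0; intros; simp
lemma add_cc (f g : C0 Y Z) (h : C0 X Y) : (f + g) ⊚ h = f ⊚ h + g ⊚ h := by
  apply ext0; intros; simp
lemma cc_sub (f : C0 Y Z) (g h : C0 X Y) : f ⊚ (g - h) = f ⊚ g - f ⊚ h := by
  apply ext0; intros; simp
lemma sub_cc (f g : C0 Y Z) (h : C0 X Y) : (f - g) ⊚ h = f ⊚ h - g ⊚ h := by
  apply ext0; intros; simp
lemma cc_smul (c : k) (f : C0 Y Z) (g : C0 X Y) : f ⊚ (c • g) = c • (f ⊚ g) := by
  apply ext0; intros; simp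
lemma smul_cc (c : k) (f : C0 Y Z) (g : C0 X Y) : (c • f) ⊚ g = c • (f ⊚ g) := by
  apply ext0; intros; simp
lemma cc_neg (f : C0 Y Z) (g : C0 X Y) : f ⊚ (-g) = -(f ⊚ g) := by
  apply ext0; intros; simp
lemma neg_cc (f : C0 Y Z) (g : C0 X Y) : (-f) ⊚ g = -(f ⊚ g) := by
  apply ext0; intros; simp

lemma lw_lw (h : C0 Y Z) (g : C0 X Y) (z : C1 W X) : lw h (lw g z) = lw (h ⊚ g) z := rfl
lemma rk_rk (z : C1 Y Z) (g : C0 X Y) (f : C0 W X) : rk (rk z g) f = rk z (g ⊚ f) := rfl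
lemma lw_rk (h : C0 Y Z) (z : C1 X Y) (f : C0 W X) : lw h (rk z f) = rk (lw h z) f := rfl
@[simp] lemma lw_one (z : C1 X Y) : lw (one Y) z = z := rfl
@[simp] lemma rk_one (z : C1 X Y) : rk z (one X) = z := rfl
@[simp] lemma lw_zero (f : C0 Y Z) : lw f (0 : C1 X Y) = 0 := by apply ext1; intros; simp
@[simp] lemma zero_lw (f : C1 X Y) : lw (0 : C0 Y Z) f = 0 := by apply ext1; intros; simp
@[simp] lemma rk_zero (f : C1 Y Z) : rk f (0 : C0 X Y) = 0 := by apply ext1; intros; simp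
@[simp] lemma zero_rk (f : C0 X Y) : rk (0 : C1 Y Z) f = 0 := by apply ext1; intros; simp
lemma lw_add (f : C0 Y Z) (g h : C1 X Y) : lw f (g + h) = lw f g + lw f h := by
  apply ext1; intros; simp
lemma add_lw (f g : C0 Y Z) (h : C1 X Y) : lw (f + g) h = lw f h + lw g h := by
  apply ext1; intros; simp
lemma lw_sub (f : C0 Y Z) (g h : C1 X Y) : lw f (g - h) = lw f g - lw f h := by
  apply ext1; intros; simp
lemma sub_lw (f g : C0 Y Z) (h : C1 X Y) : lw (f - g) h = lw f h - lw g h := by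
  apply ext1; intros; simp
lemma lw_smul (c : k) (f : C0 Y Z) (g : C1 X Y) : lw f (c • g) = c • lw f g := by
  apply ext1; intros; simp
lemma smul_lw (c : k) (f : C0 Y Z) (g : C1 X Y) : lw (c • f) g = c • lw f g := by
  apply ext1; intros; simp
lemma lw_neg (f : C0 Y Z) (g : C1 X Y) : lw f (-g) = - lw f g := by
  apply ext1; intros; simp
lemma rk_add (f : C1 Y Z) (g h : C0 X Y) : rk f (g + h) = rk f g + rk f h := by
  apply ext1; intros; simp
lemma add_rk (f g : C1 Y Z) (h : C0 X Y) : rk (f + g) h = rk f h + rk g h := by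
  apply ext1; intros; simp
lemma rk_sub (f : C1 Y Z) (g h : C0 X Y) : rk f (g - h) = rk f g - rk f h := by
  apply ext1; intros; simp
lemma sub_rk (f g : C1 Y Z) (h : C0 X Y) : rk (f - g) h = rk f h - rk g h := by
  apply ext1; intros; simp
lemma rk_smul (c : k) (f : C1 Y Z) (g : C0 X Y) : rk f (c • g) = c • rk f g := by
  apply ext1; intros; simp
lemma smul_rk (c : k) (f : C1 Y Z) (g : C0 X Y) : rk (c • f) g = c • rk f g := by
  apply ext1; intros; simp
lemma neg_rk (f : C1 Y Z) (g : C0 X Y) : rk (-f) g = - rk f g := by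
  apply ext1; intros; simp

def lwL (g : C0 Y Z) : C1 X Y →ₗ[k] C1 X Z where
  toFun z := lw g z
  map_add' := lw_add g
  map_smul' c z := lw_smul c g z
def rkL (f : C0 X Y) : C1 Y Z →ₗ[k] C1 X Z where
  toFun z := rk z f
  map_add' z w := add_rk z w f
  map_smul' c z := smul_rk c z f
def ccL (g : C0 Y Z) : C0 X Y →ₗ[k] C0 X Z where
  toFun z := g ⊚ z
  map_add' := cc_add g
  map_smul' c z := cc_smul c g z
def ccR (f : C0 X Y) : C0 Y Z →ₗ[k] C0 X Z where
  toFun z := z ⊚ f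
  map_add' z w := add_cc z w f
  map_smul' c z := smul_cc c z f
@[simp] lemma lwL_apply (g : C0 Y Z) (z : C1 X Y) : lwL g z = lw g z := rfl
@[simp] lemma rkL_apply (f : C0 X Y) (z : C1 Y Z) : rkL f z = rk z f := rfl
@[simp] lemma ccL_apply (g : C0 Y Z) (z : C0 X Y) : ccL g z = g ⊚ z := rfl
@[simp] lemma ccR_apply (f : C0 X Y) (z : C0 Y Z) : ccR f z = z ⊚ f := rfl

lemma leib (g : C0 Y Z) (f : C0 X Y) :
    dd X Z (g ⊚ f) = rk (dd Y Z g) f + lw g (dd X Y f) := by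
  apply ext1; intro a v
  simp [dd_apply]

lemma IsHom.leibL {g : C0 Y Z} (hg : IsHom g) (f : C0 X Y) :
    dd X Z (g ⊚ f) = lw g (dd X Y f) := by
  rw [leib, hg]; simp
lemma IsHom.leibR {f : C0 X Y} (hf : IsHom f) (g : C0 Y Z) :
    dd X Z (g ⊚ f) = rk (dd Y Z g) f := by
  rw [leib, hf]; simp
lemma IsHom.comp {g : C0 Y Z} (hg : IsHom g) {f : C0 X Y} (hf : IsHom f) : IsHom (g ⊚ f) := by
  unfold IsHom; rw [hg.leibL, hf]; simp
lemma isHom_one (X : Rp Q k) : IsHom (one X) := by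
  rw [isHom_iff]; intros; rfl
lemma isHom_zero : IsHom (0 : C0 X Y) := map_zero _
lemma IsHom.add {f g : C0 X Y} (hf : IsHom f) (hg : IsHom g) : IsHom (f + g) := by
  unfold IsHom at *; rw [map_add, hf, hg, add_zero]
lemma IsHom.sub {f g : C0 X Y} (hf : IsHom f) (hg : IsHom g) : IsHom (f - g) := by
  unfold IsHom at *; rw [map_sub, hf, hg, sub_zero]
lemma IsHom.neg {f : C0 X Y} (hf : IsHom f) : IsHom (-f) := by
  unfold IsHom at *; rw [map_neg, hf, neg_zero]
lemma IsHom.smul {f : C0 X Y} (hf : IsHom f) (c : k) : IsHom (c • f) := by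
  unfold IsHom at *; rw [map_smul, hf, smul_zero]

def Inj (f : C0 X Y) : Prop := ∀ i, Function.Injective (f i)
def Surj (f : C0 X Y) : Prop := ∀ i, Function.Surjective (f i)

lemma Inj.comp {g : C0 Y Z} {f : C0 X Y} (hg : Inj g) (hf : Inj f) : Inj (g ⊚ f) :=
  fun i => (hg i).comp (hf i)
lemma Surj.comp {g : C0 Y Z} {f : C0 X Y} (hg : Surj g) (hf : Surj f) : Surj (g ⊚ f) :=
  fun i => (hg i).comp (hf i)
lemma Inj.of_comp {g : C0 Y Z} {f : C0 X Y} (h : Inj (g ⊚ f)) : Inj f :=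
  fun i => Function.Injective.of_comp (f := g i) (h i)
lemma Surj.of_comp {g : C0 Y Z} {f : C0 X Y} (h : Surj (g ⊚ f)) : Surj g :=
  fun i => Function.Surjective.of_comp (g := f i) (h i)
lemma Inj.of_left {g : C0 Y X} {f : C0 X Y} (h : g ⊚ f = one X) : Inj f := by
  apply Inj.of_comp (g := g); rw [h]; exact fun i => Function.injective_id
lemma Surj.of_right {g : C0 Y X} {f : C0 X Y} (h : g ⊚ f = one X) : Surj g := by
  apply Surj.of_comp (f := f); rw [h]; exact fun i => Function.surjective_id
lemma Inj.cancel {g : C0 Y Z} (hg : Inj g) {f f' : C0 X Y} (h : g ⊚ f = g ⊚ f') : f = f' := by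
  apply ext0; intro i v; apply hg i
  exact congrArg (fun z => z i v) h
lemma Inj.cancel0 {g : C0 Y Z} (hg : Inj g) {f : C0 X Y} (h : g ⊚ f = 0) : f = 0 := by
  apply hg.cancel; rw [h]; simp
lemma Surj.cancel {f : C0 X Y} (hf : Surj f) {g g' : C0 Y Z} (h : g ⊚ f = g' ⊚ f) : g = g' := by
  apply ext0; intro i v; obtain ⟨w, rfl⟩ := hf i v
  exact congrArg (fun z => z i w) h
lemma Surj.cancel0 {f : C0 X Y} (hf : Surj f) {g : C0 Y Z} (h : g ⊚ f = 0) : g = 0 := by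
  apply hf.cancel; rw [h]; simp
lemma Inj.lw_cancel0 {g : C0 Y Z} (hg : Inj g) {f : C1 X Y} (h : lw g f = 0) : f = 0 := by
  apply ext1; intro i v; apply hg
  have := congrArg (fun z => z i v) h
  simpa using this
lemma Surj.rk_cancel0 {f : C0 X Y} (hf : Surj f) {g : C1 Y Z} (h : rk g f = 0) : g = 0 := by
  apply ext1; intro i v; obtain ⟨w, rfl⟩ := hf _ v
  exact congrArg (fun z => z i w) h

/-- If composite with an injective hom is hom then it is hom. -/
lemma IsHom.of_inj {g : C0 Y Z} (hg : IsHom g) (hi : Inj g) {f : C0 X Y} (h : IsHom (g ⊚ f)) :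
    IsHom f := by
  unfold IsHom at h; rw [hg.leibL] at h; exact hi.lw_cancel0 h
lemma IsHom.of_surj {f : C0 X Y} (hf : IsHom f) (hs : Surj f) {g : C0 Y Z} (h : IsHom (g ⊚ f)) :
    IsHom g := by
  unfold IsHom at h; rw [hf.leibR] at h; exact hs.rk_cancel0 h

def Iso (X Y : Rp Q k) : Prop :=
  ∃ (f : C0 X Y) (g : C0 Y X), IsHom f ∧ IsHom g ∧ g ⊚ f = one X ∧ f ⊚ g = one Y

lemma Iso.refl (X : Rp Q k) : Iso X X := ⟨one X, one X, isHom_one X, isHom_one X, rfl, rfl⟩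
lemma Iso.symm (h : Iso X Y) : Iso Y X := by
  obtain ⟨f, g, hf, hg, h1, h2⟩ := h; exact ⟨g, f, hg, hf, h2, h1⟩
lemma Iso.trans (h : Iso X Y) (h' : Iso Y Z) : Iso X Z := by
  obtain ⟨f, g, hf, hg, h1, h2⟩ := h
  obtain ⟨f', g', hf', hg', h1', h2'⟩ := h'
  refine ⟨f' ⊚ f, g ⊚ g', hf'.comp hf, hg.comp hg', ?_, ?_⟩
  · rw [cc_assoc, ← cc_assoc g', h1', one_cc, h1]
  · rw [cc_assoc, ← cc_assoc f, h2, one_cc, h2']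

lemma exists_inv {f : C0 X Y} (hf : IsHom f) (hi : Inj f) (hs : Surj f) :
    ∃ g : C0 Y X, IsHom g ∧ g ⊚ f = one X ∧ f ⊚ g = one Y := by
  let e : ∀ i, X.X i ≃ₗ[k] Y.X i := fun i => LinearEquiv.ofBijective (f i) ⟨hi i, hs i⟩
  have h2 : f ⊚ (fun i => ((e i).symm : Y.X i →ₗ[k] X.X i)) = one Y := by
    apply ext0; intro i v; exact (e i).apply_symm_apply v
  refine ⟨fun i => (e i).symm, ?_, ?_, h2⟩
  · apply hf.of_inj hi
    rw [h2]; exact isHom_one Y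
  · apply ext0; intro i v; exact (e i).symm_apply_apply v

lemma Iso.of_bij {f : C0 X Y} (hf : IsHom f) (hi : Inj f) (hs : Surj f) : Iso X Y := by
  obtain ⟨g, hg, h1, h2⟩ := exists_inv hf hi hs
  exact ⟨f, g, hf, hg, h1, h2⟩

/-- dimension vector -/
noncomputable def dv (X : Rp Q k) : Q.V → ℤ := fun i => (Module.finrank k (X.X i) : ℤ)
noncomputable def td (X : Rp Q k) : ℕ := ∑ i, Module.finrank k (X.X i)

lemma dv_nonneg (X : Rp Q k) (i) : 0 ≤ dv X i := Int.natCast_nonneg _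
lemma td_eq (X : Rp Q k) : (td X : ℤ) = ∑ i, dv X i := by simp [td, dv]

lemma td_eq_of_dv (h : dv X = dv Y) : td X = td Y := by
  zify; rw [td_eq, td_eq, h]

lemma Iso.dv_eq (h : Iso X Y) : dv X = dv Y := by
  obtain ⟨f, g, hf, hg, h1, h2⟩ := h
  funext i
  have : Module.finrank k (X.X i) = Module.finrank k (Y.X i) :=
    LinearEquiv.finrank_eq (LinearEquiv.ofBijective (f i) ⟨Inj.of_left h1 i, Surj.of_right h2 i⟩)
  simp [dv, this]

lemma Inj.dv_le {f : C0 X Y} (h : Inj f) (i) : dv X i ≤ dv Y i := by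
  have := LinearMap.finrank_le_finrank_of_injective (h i)
  simpa [dv] using this
lemma Surj.dv_le {f : C0 X Y} (h : Surj f) (i) : dv Y i ≤ dv X i := by
  have := LinearMap.finrank_le_finrank_of_surjective (h i)
  simpa [dv] using this
lemma Inj.td_le {f : C0 X Y} (h : Inj f) : td X ≤ td Y := by
  zify; rw [td_eq, td_eq]; exact Finset.sum_le_sum (fun i _ => h.dv_le i)
lemma Surj.td_le {f : C0 X Y} (h : Surj f) : td Y ≤ td X := by
  zify; rw [td_eq, td_eq]; exact Finset.sum_le_sum (fun i _ => h.dv_le i)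
lemma dv_eq_of_td (h : ∀ i, dv X i ≤ dv Y i) (ht : td Y ≤ td X) : dv X = dv Y := by
  zify at ht; rw [td_eq, td_eq] at ht
  have h1 : ∑ i, dv X i = ∑ i, dv Y i := le_antisymm (Finset.sum_le_sum (fun i _ => h i)) ht
  funext i
  exact (Finset.sum_eq_sum_iff_of_le (fun i _ => h i)).mp h1 i (Finset.mem_univ i)
lemma Inj.surj_of_td {f : C0 X Y} (h : Inj f) (ht : td Y ≤ td X) : Surj f := by
  have := dv_eq_of_td h.dv_le ht
  intro i
  have h3 : Module.finrank k (X.X i) = Module.finrank k (Y.X i) := by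
    have := congrFun this i; simpa [dv] using this
  exact (LinearMap.injective_iff_surjective_of_finrank_eq_finrank h3).mp (h i)
lemma Surj.inj_of_td {f : C0 X Y} (h : Surj f) (ht : td X ≤ td Y) : Inj f := by
  have := dv_eq_of_td h.dv_le ht
  intro i
  have h3 : Module.finrank k (X.X i) = Module.finrank k (Y.X i) := by
    have := congrFun this i; simpa [dv] using this.symm
  exact (LinearMap.injective_iff_surjective_of_finrank_eq_finrank h3).mpr (h i)

lemma td_eq_zero_iff : td X = 0 ↔ one X = 0 := by
  constructor
  · intro h
    have h1 : ∀ i, Module.finrank k (X.X i) = 0 := by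
      intro i
      exact Finset.sum_eq_zero_iff.mp h i (Finset.mem_univ i)
    apply ext0; intro i v
    have := Module.finrank_zero_iff.mp (h1 i)
    exact Subsingleton.elim _ _
  · intro h
    apply Finset.sum_eq_zero
    intro i _
    rw [Module.finrank_zero_iff]
    refine ⟨fun a b => ?_⟩
    have h1 : ∀ a : X.X i, a = 0 := fun a => congrArg (fun z => z i a) h
    rw [h1 a, h1 b]
lemma td_pos_iff : 0 < td X ↔ one X ≠ 0 := by
  rw [Nat.pos_iff_ne_zero, Ne, td_eq_zero_iff]
lemma td_eq_zero_iff_dv : td X = 0 ↔ dv X = 0 := by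
  constructor
  · intro h; funext i
    have := Finset.sum_eq_zero_iff.mp h i (Finset.mem_univ i)
    simp [dv, this]
  · intro h; zify; rw [td_eq, h]; simp
lemma zero_of_td_left (h : td X = 0) (f : C0 X Y) : f = 0 := by
  rw [← cc_one f, td_eq_zero_iff.mp h]; simp
lemma zero_of_td_right (h : td Y = 0) (f : C0 X Y) : f = 0 := by
  rw [← one_cc f, td_eq_zero_iff.mp h]; simp

noncomputable def hom (X Y : Rp Q k) : ℕ := Module.finrank k (LinearMap.ker (dd X Y))
noncomputable def ext (X Y : Rp Q k) : ℕ := Module.finrank k (C1 X Y ⧸ LinearMap.range (dd X Y))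

lemma hom_sub_ext (X Y : Rp Q k) : (hom X Y : ℤ) - ext X Y = Q.eulerForm (dv X) (dv Y) := by
  have h1 := LinearMap.finrank_range_add_finrank_ker (dd X Y)
  have h2 := Submodule.finrank_quotient_add_finrank (LinearMap.range (dd X Y))
  have h3 : Module.finrank k (C0 X Y) = ∑ i, Module.finrank k (X.X i) * Module.finrank k (Y.X i) := by
    rw [Module.finrank_pi_fintype]
    exact Finset.sum_congr rfl (fun i _ => Module.finrank_linearMap k k _ _)
  have h4 : Module.finrank k (C1 X Y) = ∑ a, Module.finrank k (X.X (Q.src a)) * Module.finrank k (Y.X (Q.tgt a)) := by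
    rw [Module.finrank_pi_fintype]
    exact Finset.sum_congr rfl (fun i _ => Module.finrank_linearMap k k _ _)
  unfold FinQuiver.eulerForm hom ext dv
  zify at h1 h2 h3 h4
  rw [← h3, ← h4]
  linarith

lemma hom_eq_zero_iff : hom X Y = 0 ↔ ∀ f : C0 X Y, IsHom f → f = 0 := by
  unfold hom; rw [Submodule.finrank_eq_zero, LinearMap.ker_eq_bot']; rfl
lemma hom_pos {f : C0 X Y} (hf : IsHom f) (h : f ≠ 0) : 1 ≤ hom X Y := by
  rw [Nat.one_le_iff_ne_zero, Ne, hom_eq_zero_iff]; intro h'; exact h (h' f hf)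
lemma exists_hom (h : hom X Y ≠ 0) : ∃ f : C0 X Y, IsHom f ∧ f ≠ 0 := by
  rw [Ne, hom_eq_zero_iff] at h; push Not at h; exact h
lemma ext_eq_zero_iff : ext X Y = 0 ↔ ∀ z : C1 X Y, ∃ f, dd X Y f = z := by
  unfold ext
  rw [Module.finrank_zero_iff, Submodule.Quotient.subsingleton_iff, LinearMap.range_eq_top]
  rfl
lemma exists_ext (h : ext X Y ≠ 0) : ∃ z : C1 X Y, ∀ f, dd X Y f ≠ z := by
  rw [Ne, ext_eq_zero_iff] at h; push Not at h; exact h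

lemma hom_le_of {X' Y' : Rp Q k} (F : C0 X Y →ₗ[k] C0 X' Y') (h : ∀ f, IsHom f → IsHom (F f))
    (hi : ∀ f, IsHom f → F f = 0 → f = 0) : hom X Y ≤ hom X' Y' := by
  refine LinearMap.finrank_le_finrank_of_injective (f := LinearMap.restrict F (p := LinearMap.ker (dd X Y)) (q := LinearMap.ker (dd X' Y')) h) ?_
  rw [← LinearMap.ker_eq_bot, LinearMap.ker_eq_bot']
  rintro ⟨f, hf⟩ h0
  have : F f = 0 := congrArg Subtype.val h0
  exact Subtype.ext (hi f hf this)
lemma ext_le_of {X' Y' : Rp Q k} (F : C1 X Y →ₗ[k] C1 X' Y')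
    (h : ∀ f, ∃ g, dd X' Y' g = F (dd X Y f))
    (hs : ∀ z, ∃ w g, F w + dd X' Y' g = z) : ext X' Y' ≤ ext X Y := by
  have h' : LinearMap.range (dd X Y) ≤ (LinearMap.range (dd X' Y')).comap F := by
    rintro _ ⟨f, rfl⟩; exact h f
  refine LinearMap.finrank_le_finrank_of_surjective (f := Submodule.mapQ _ _ F h') ?_
  intro z
  obtain ⟨z, rfl⟩ := Submodule.Quotient.mk_surjective _ z
  obtain ⟨w, g, rfl⟩ := hs z
  refine ⟨Submodule.Quotient.mk w, ?_⟩
  rw [Submodule.mapQ_apply, Submodule.Quotient.eq]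
  exact ⟨-g, by rw [map_neg]; abel⟩

/-- hom/ext monotonicity -/
lemma hom_le_left_inj {g : C0 Y Z} (hg : IsHom g) (hi : Inj g) : hom X Y ≤ hom X Z :=
  hom_le_of (ccL g) (fun _ hf => hg.comp hf) (fun _ _ h => hi.cancel0 h)
lemma hom_le_right_surj {g : C0 X Y} (hg : IsHom g) (hi : Surj g) : hom Y Z ≤ hom X Z :=
  hom_le_of (ccR g) (fun _ hf => IsHom.comp hf hg) (fun _ _ h => hi.cancel0 h)

lemma Surj.exists_sec {f : C0 X Y} (h : Surj f) : ∃ g : C0 Y X, f ⊚ g = one Y := by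
  choose g hg using fun i => (f i).exists_rightInverse_of_surjective (LinearMap.range_eq_top.mpr (h i))
  exact ⟨g, by funext i; exact hg i⟩
lemma Inj.exists_ret {f : C0 X Y} (h : Inj f) : ∃ g : C0 Y X, g ⊚ f = one X := by
  choose g hg using fun i => (f i).exists_leftInverse_of_injective (LinearMap.ker_eq_bot.mpr (h i))
  exact ⟨g, by funext i; exact hg i⟩

lemma ext_le_surj {g : C0 Y Z} (hg : IsHom g) (hs : Surj g) : ext X Z ≤ ext X Y := by
  obtain ⟨s, hs⟩ := hs.exists_sec
  refine ext_le_of (lwL g) (fun f => ⟨g ⊚ f, hg.leibL f⟩) (fun z => ⟨lw s z, 0, ?_⟩)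
  rw [lwL_apply, lw_lw, hs]; simp
lemma ext_le_inj {g : C0 X Y} (hg : IsHom g) (hs : Inj g) : ext X Z ≤ ext Y Z := by
  obtain ⟨s, hs⟩ := hs.exists_ret
  refine ext_le_of (rkL g) (fun f => ⟨f ⊚ g, hg.leibR f⟩) (fun z => ⟨rk z s, 0, ?_⟩)
  rw [rkL_apply, rk_rk, hs]; simp

lemma Iso.hom_left (h : Iso X Y) : hom X Z = hom Y Z := by
  obtain ⟨f, g, hf, hg, h1, h2⟩ := h
  exact le_antisymm (hom_le_right_surj hg (Surj.of_right h1)) (hom_le_right_surj hf (Surj.of_right h2))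
lemma Iso.hom_right (h : Iso X Y) : hom Z X = hom Z Y := by
  obtain ⟨f, g, hf, hg, h1, h2⟩ := h
  exact le_antisymm (hom_le_left_inj hf (Inj.of_left h1)) (hom_le_left_inj hg (Inj.of_left h2))
lemma Iso.ext_left (h : Iso X Y) : ext X Z = ext Y Z := by
  obtain ⟨f, g, hf, hg, h1, h2⟩ := h
  exact le_antisymm (ext_le_inj hf (Inj.of_left h1)) (ext_le_inj hg (Inj.of_left h2))
lemma Iso.ext_right (h : Iso X Y) : ext Z X = ext Z Y := by
  obtain ⟨f, g, hf, hg, h1, h2⟩ := h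
  exact le_antisymm (ext_le_surj hg (Surj.of_right h1)) (ext_le_surj hf (Surj.of_right h2))

end basics

/-- short exact sequences with chosen vertexwise splittings -/
structure SES (A B C : Rp Q k) where
  i : C0 A B
  p : C0 B C
  s : C0 C B
  r : C0 B A
  hi : IsHom i
  hp : IsHom p
  ri : r ⊚ i = one A
  ps : p ⊚ s = one C
  sum : i ⊚ r + s ⊚ p = one B
  pi : p ⊚ i = 0
  rs : r ⊚ s = 0

namespace SES
variable {A B C X Y : Rp Q k}

lemma inj (S : SES A B C) : Inj S.i := Inj.of_left S.ri
lemma surj (S : SES A B C) : Surj S.p := Surj.of_right S.ps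

def z (S : SES A B C) : C1 C A := lw S.r (dd C B S.s)

lemma iz (S : SES A B C) : lw S.i S.z = dd C B S.s := by
  have h : lw S.p (dd C B S.s) = 0 := by
    rw [← S.hp.leibL, S.ps]; exact isHom_one C
  calc lw S.i S.z = lw (S.i ⊚ S.r) (dd C B S.s) := rfl
    _ = lw (one B - S.s ⊚ S.p) (dd C B S.s) := by rw [← S.sum]; simp
    _ = _ := by rw [sub_lw, lw_one, ← lw_lw, h]; simp

lemma zp (S : SES A B C) : rk S.z S.p = - dd B A S.r := by
  have h : rk (dd B A S.r) S.i = 0 := by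
    rw [← S.hi.leibR, S.ri]; exact isHom_one A
  have h2 : dd C A (S.r ⊚ S.s) = 0 := by rw [S.rs]; simp
  rw [leib] at h2
  have h3 : S.z = - rk (dd B A S.r) S.s := by
    rw [eq_neg_iff_add_eq_zero, add_comm]; exact h2
  rw [h3, neg_rk, rk_rk]
  congr 1
  have : S.s ⊚ S.p = one B - S.i ⊚ S.r := by rw [← S.sum]; simp
  rw [this, rk_sub, rk_one, ← rk_rk, h]; simp

/-- extension of homs along `i` -/
lemma extend (S : SES A B C) {f : C0 A Y} (hf : IsHom f) {h : C0 C Y} (hh : dd C Y h = lw f S.z) :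
    ∃ F : C0 B Y, IsHom F ∧ F ⊚ S.i = f := by
  refine ⟨f ⊚ S.r + h ⊚ S.p, ?_, ?_⟩
  · unfold IsHom
    rw [map_add, hf.leibL, S.hp.leibR, hh, ← lw_rk, S.zp, lw_neg]; simp
  · rw [add_cc, cc_assoc, cc_assoc, S.ri, S.pi]; simp
lemma extend_conv (S : SES A B C) {F : C0 B Y} (hF : IsHom F) : dd C Y (F ⊚ S.s) = lw (F ⊚ S.i) S.z := by
  rw [hF.leibL, ← S.iz]; rfl
lemma lift (S : SES A B C) {g : C0 X C} (hg : IsHom g) {h : C0 X A} (hh : dd X A h = rk S.z g) :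
    ∃ G : C0 X B, IsHom G ∧ S.p ⊚ G = g := by
  refine ⟨S.s ⊚ g - S.i ⊚ h, ?_, ?_⟩
  · unfold IsHom
    rw [map_sub, hg.leibR, S.hi.leibL, hh, lw_rk, S.iz]; simp
  · rw [cc_sub, ← cc_assoc, ← cc_assoc, S.ps, S.pi]; simp
lemma lift_conv (S : SES A B C) {G : C0 X B} (hG : IsHom G) : dd X A (-(S.r ⊚ G)) = rk S.z (S.p ⊚ G) := by
  rw [map_neg, hG.leibR, ← rk_rk, S.zp, neg_rk]

lemma factor_i (S : SES A B C) {f : C0 X B} (hf : IsHom f) (h : S.p ⊚ f = 0) : IsHom (S.r ⊚ f) ∧ S.i ⊚ S.r ⊚ f = f := by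
  have : S.i ⊚ S.r ⊚ f = f := by
    have := congrArg (fun w => w ⊚ f) S.sum
    simp only [add_cc, cc_assoc, h, cc_zero, add_zero, one_cc] at this
    exact this
  exact ⟨S.hi.of_inj S.inj (by rw [this]; exact hf), this⟩
lemma factor_p (S : SES A B C) {f : C0 B X} (hf : IsHom f) (h : f ⊚ S.i = 0) : IsHom (f ⊚ S.s) ∧ (f ⊚ S.s) ⊚ S.p = f := by
  have : (f ⊚ S.s) ⊚ S.p = f := by
    have := congrArg (fun w => f ⊚ w) S.sum
    simp only [cc_add, ← cc_assoc, h, zero_cc, zero_add, cc_one] at this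
    exact this
  exact ⟨S.hp.of_surj S.surj (by rw [this]; exact hf), this⟩

lemma dv_add (S : SES A B C) : dv B = dv A + dv C := by
  funext j
  have h := LinearMap.finrank_range_add_finrank_ker (S.p j)
  rw [LinearMap.range_eq_top.mpr (S.surj j), finrank_top] at h
  have h2 : LinearMap.ker (S.p j) = LinearMap.range (S.i j) := by
    ext v; constructor
    · intro hv
      refine ⟨S.r j v, ?_⟩
      have := congrArg (fun w => w j v) S.sum
      simp only [Pi.add_apply, LinearMap.add_apply, cc_apply, one_apply] at this
      rw [LinearMap.mem_ker.mp hv, map_zero, add_zero] at this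
      exact this
    · rintro ⟨w, rfl⟩
      exact congrArg (fun z => z j w) S.pi
  rw [h2, LinearMap.finrank_range_of_inj (S.inj j)] at h
  simp only [dv, Pi.add_apply]
  zify at h; linarith
lemma td_add (S : SES A B C) : td B = td A + td C := by
  zify; simp only [td_eq]; rw [S.dv_add]; simp [Finset.sum_add_distrib]

lemma ext_mid (S : SES A B C) {w : C1 X B} {h : C0 X C} (hh : dd X C h = lw S.p w) :
    ∃ (w' : C1 X A) (g : C0 X B), w = lw S.i w' + dd X B g := by
  refine ⟨lw S.r (w - dd X B (S.s ⊚ h)), S.s ⊚ h, ?_⟩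
  have h0 : lw S.p (w - dd X B (S.s ⊚ h)) = 0 := by
    rw [lw_sub, ← S.hp.leibL, ← cc_assoc, S.ps, one_cc, hh, sub_self]
  have h1 := congrArg (fun u => lw u (w - dd X B (S.s ⊚ h))) S.sum
  simp only [add_lw, ← lw_lw, h0, lw_zero, add_zero, lw_one] at h1
  rw [h1]; simp
lemma ext_mid' (S : SES A B C) {w : C1 B X} {h : C0 A X} (hh : dd A X h = rk w S.i) :
    ∃ (w' : C1 C X) (g : C0 B X), w = rk w' S.p + dd B X g := by
  refine ⟨rk (w - dd B X (h ⊚ S.r)) S.s, h ⊚ S.r, ?_⟩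
  have h0 : rk (w - dd B X (h ⊚ S.r)) S.i = 0 := by
    rw [sub_rk, ← S.hi.leibR, cc_assoc, S.ri, cc_one, hh, sub_self]
  have h1 := congrArg (fun u => rk (w - dd B X (h ⊚ S.r)) u) S.sum
  simp only [rk_add, ← rk_rk, h0, zero_rk, zero_add, rk_one] at h1
  rw [h1]; simp

lemma ext_zero_r (S : SES A B C) (h1 : ext X A = 0) (h2 : ext X C = 0) : ext X B = 0 := by
  rw [ext_eq_zero_iff] at *
  intro w
  obtain ⟨h, hh⟩ := h2 (lw S.p w)
  obtain ⟨w', g, rfl⟩ := S.ext_mid hh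
  obtain ⟨g', rfl⟩ := h1 w'
  exact ⟨S.i ⊚ g' + g, by rw [map_add, S.hi.leibL]⟩
lemma ext_zero_l (S : SES A B C) (h1 : ext A X = 0) (h2 : ext C X = 0) : ext B X = 0 := by
  rw [ext_eq_zero_iff] at *
  intro w
  obtain ⟨h, hh⟩ := h1 (rk w S.i)
  obtain ⟨w', g, rfl⟩ := S.ext_mid' hh
  obtain ⟨g', rfl⟩ := h2 w'
  exact ⟨g' ⊚ S.p + g, by rw [map_add, S.hp.leibR]⟩
lemma hom_zero_r (S : SES A B C) (h1 : hom X A = 0) (h2 : hom X C = 0) : hom X B = 0 := by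
  rw [hom_eq_zero_iff] at *
  intro f hf
  obtain ⟨h3, h4⟩ := S.factor_i hf (h2 _ (S.hp.comp hf))
  rw [← h4, h1 _ h3]; simp
lemma hom_zero_l (S : SES A B C) (h1 : hom A X = 0) (h2 : hom C X = 0) : hom B X = 0 := by
  rw [hom_eq_zero_iff] at *
  intro f hf
  obtain ⟨h3, h4⟩ := S.factor_p hf (h1 _ (hf.comp S.hi))
  rw [← h4, h2 _ h3]; simp
/-- connecting map -/
lemma conn (S : SES A B C) {w : C1 X A} {h : C0 X B} (hh : dd X B h = lw S.i w) :
    IsHom (S.p ⊚ h) ∧ w = rk S.z (S.p ⊚ h) + dd X A (S.r ⊚ h) := by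
  constructor
  · unfold IsHom; rw [S.hp.leibL, hh, lw_lw, S.pi]; simp
  · rw [leib, ← rk_rk, S.zp, neg_rk, hh, lw_lw, S.ri]; simp
lemma conn' (S : SES A B C) {w : C1 C X} {h : C0 B X} (hh : dd B X h = rk w S.p) :
    IsHom (h ⊚ S.i) ∧ w = dd C X (h ⊚ S.s) - lw (h ⊚ S.i) S.z := by
  constructor
  · unfold IsHom; rw [S.hi.leibR, hh, rk_rk, S.pi]; simp
  · rw [leib, ← lw_lw, S.iz, hh, rk_rk, S.ps]; simp
end SES

section constructions
variable {X Y Z : Rp Q k}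

abbrev kerRep (f : C0 X Y) (hf : IsHom f) : Rp Q k where
  X i := LinearMap.ker (f i)
  m a := (X.m a).restrict (fun v hv => by
    have := isHom_iff.mp hf a v
    rw [LinearMap.mem_ker] at hv ⊢
    rw [← this, hv, map_zero])

abbrev quotRep (f : C0 X Y) (hf : IsHom f) : Rp Q k where
  X i := Y.X i ⧸ LinearMap.range (f i)
  m a := Submodule.mapQ _ _ (Y.m a) (by
    rintro _ ⟨v, rfl⟩
    exact ⟨X.m a v, (isHom_iff.mp hf a v).symm⟩)

abbrev imRep (f : C0 X Y) (hf : IsHom f) : Rp Q k where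
  X i := LinearMap.range (f i)
  m a := (Y.m a).restrict (by
    rintro _ ⟨v, rfl⟩
    exact ⟨X.m a v, (isHom_iff.mp hf a v).symm⟩)

lemma ses_of {A B C : Rp Q k} {i : C0 A B} {p : C0 B C} (hi : IsHom i) (hp : IsHom p) (ii : Inj i) (sp : Surj p)
    (h0 : p ⊚ i = 0) (hex : ∀ j v, p j v = 0 → ∃ w, i j w = v) :
    ∃ S : SES A B C, S.i = i ∧ S.p = p := by
  obtain ⟨s, hs⟩ := sp.exists_sec
  have h1 : ∀ j (v : B.X j), ∃ w, i j w = v - s j (p j v) := by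
    intro j v; apply hex
    have := congrArg (fun z => z j (p j v)) hs
    simp only [cc_apply, one_apply] at this
    rw [map_sub, this, sub_self]
  choose r hr using h1
  let r' : C0 B A := fun j =>
    { toFun := r j
      map_add' := fun v w => by
        apply ii j; rw [map_add, hr, hr, hr]; simp only [map_add]; abel
      map_smul' := fun c w => by
        apply ii j; rw [RingHom.id_apply, map_smul, hr, hr]; simp only [map_smul, smul_sub] }
  have hr' : ∀ j v, i j (r' j v) = v - s j (p j v) := hr
  refine ⟨⟨i, p, s, r', hi, hp, ?_, hs, ?_, h0, ?_⟩, rfl, rfl⟩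
  · apply ext0; intro j v; apply ii j
    have : p j (i j v) = 0 := congrArg (fun z => z j v) h0
    rw [cc_apply, hr', this]; simp
  · apply ext0; intro j v
    simp [hr']
  · apply ext0; intro j v; apply ii j
    have := congrArg (fun z => z j v) hs
    simp only [cc_apply, one_apply] at this
    rw [cc_apply, hr', this]; simp

lemma ses_of_surj {f : C0 X Y} (hf : IsHom f) (hs : Surj f) :
    ∃ (K : Rp Q k) (S : SES K X Y), S.p = f := by
  obtain ⟨S, -, h⟩ := ses_of (A := kerRep f hf) (i := fun i => (LinearMap.ker (f i)).subtype) (p := f)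
    (by refine isHom_iff.mpr ?_; intros; rfl) hf (fun i => Subtype.val_injective) hs
    (by apply ext0; intro i v; exact v.2) (fun j v hv => ⟨⟨v, hv⟩, rfl⟩)
  exact ⟨_, S, h⟩
lemma ses_of_inj {f : C0 X Y} (hf : IsHom f) (hs : Inj f) :
    ∃ (K : Rp Q k) (S : SES X Y K), S.i = f := by
  obtain ⟨S, h, -⟩ := ses_of (C := quotRep f hf) (p := fun i => (LinearMap.range (f i)).mkQ) (i := f)
    hf (by refine isHom_iff.mpr ?_; intros; rfl) hs (fun i => Submodule.mkQ_surjective _)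
    (by apply ext0; intro i v; exact (Submodule.Quotient.mk_eq_zero _).mpr ⟨v, rfl⟩)
    (fun j v hv => (Submodule.Quotient.mk_eq_zero _).mp hv)
  exact ⟨_, S, h⟩
lemma image_factor {f : C0 X Y} (hf : IsHom f) :
    ∃ (I : Rp Q k) (p : C0 X I) (j : C0 I Y), IsHom p ∧ IsHom j ∧ Surj p ∧ Inj j ∧ j ⊚ p = f := by
  refine ⟨imRep f hf, fun i => (f i).rangeRestrict, fun i => (LinearMap.range (f i)).subtype, ?_, ?_, ?_, ?_, rfl⟩
  · refine isHom_iff.mpr ?_; intro a v; apply Subtype.ext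
    exact isHom_iff.mp hf a v
  · refine isHom_iff.mpr ?_; intros; rfl
  · intro i; exact LinearMap.surjective_rangeRestrict _
  · intro i; exact Subtype.val_injective

/-- the extension of `C` by `A` with class `z` -/
abbrev extRep (A C : Rp Q k) (z : C1 C A) : Rp Q k where
  X i := A.X i × C.X i
  m a := LinearMap.prod (LinearMap.coprod (A.m a) (z a)) ((C.m a) ∘ₗ LinearMap.snd k _ _)

def extSES (A C : Rp Q k) (z : C1 C A) : SES A (extRep A C z) C where
  i _ := LinearMap.inl k _ _
  p _ := LinearMap.snd k _ _
  s _ := LinearMap.inr k _ _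
  r _ := LinearMap.fst k _ _
  hi := by refine isHom_iff.mpr ?_; intro a v; simp [extRep]
  hp := by refine isHom_iff.mpr ?_; intro a v; simp [extRep]
  ri := by apply ext0; intro i v; simp [cc_apply]
  ps := by apply ext0; intro i v; simp [cc_apply]
  sum := by
    apply ext0; intro i v
    change (LinearMap.inl k (A.X i) (C.X i)) v.1 + (LinearMap.inr k (A.X i) (C.X i)) v.2 = v
    simp
  pi := by apply ext0; intro i v; simp [cc_apply]
  rs := by apply ext0; intro i v; simp [cc_apply]

lemma extSES_z (A C : Rp Q k) (z : C1 C A) : (extSES A C z).z = z := by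
  apply ext1; intro a v
  change (A.m a 0 + z a v) - 0 = z a v
  simp

/-- change structure maps -/
abbrev withMaps (X : Rp Q k) (m : C1 X X) : Rp Q k := { X := X.X, m := m }

/-- transport of structure to another family of spaces with the same dims -/
lemma exists_withMaps (h : dv X = dv Y) : ∃ m : C1 X X, Iso (withMaps X m) Y := by
  have e : ∀ i, Nonempty (X.X i ≃ₗ[k] Y.X i) := fun i => by
    apply FiniteDimensional.nonempty_linearEquiv_of_finrank_eq
    have := congrFun h i
    simpa [dv] using this
  have e := fun i => (e i).some
  refine ⟨fun a => (e _).symm.toLinearMap ∘ₗ Y.m a ∘ₗ (e _).toLinearMap, ?_⟩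
  refine Iso.of_bij (f := fun i => (e i).toLinearMap) ?_ (fun i => (e i).injective) (fun i => (e i).surjective)
  refine isHom_iff.mpr ?_; intro a v
  simp

end constructions
end QR


namespace QR
variable {Q : FinQuiver} {k : Type} [Field k]

section indec
variable {W X Y Z U V : Rp Q k}

def Indec (X : Rp Q k) : Prop :=
  one X ≠ 0 ∧ ∀ e : C0 X X, IsHom e → e ⊚ e = e → e = 0 ∨ e = one X

def Brick (X : Rp Q k) : Prop := hom X X = 1

lemma split_idem {e : C0 X X} (he : IsHom e) (h : e ⊚ e = e) :
    ∃ (I : Rp Q k) (p : C0 X I) (j : C0 I X), IsHom p ∧ IsHom j ∧ p ⊚ j = one I ∧ j ⊚ p = e := by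
  obtain ⟨I, p, j, hp, hj, sp, ij, hjp⟩ := image_factor he
  refine ⟨I, p, j, hp, hj, ?_, hjp⟩
  apply ij.cancel; apply sp.cancel
  rw [cc_one, hjp]
  calc (j ⊚ p ⊚ j) ⊚ p = (j ⊚ p) ⊚ (j ⊚ p) := rfl
    _ = e := by rw [hjp, h]

lemma idem_compl {e : C0 X X} (h : e ⊚ e = e) : (one X - e) ⊚ (one X - e) = one X - e := by
  simp only [cc_sub, sub_cc, cc_one, one_cc, h]; abel

lemma split_of_not_indec (h0 : one X ≠ 0) (h : ¬ Indec X) :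
    ∃ (U V : Rp Q k) (S : SES U X V), IsHom S.s ∧ IsHom S.r ∧ one U ≠ 0 ∧ one V ≠ 0 := by
  unfold Indec at h
  push Not at h
  obtain ⟨e, he, hee, h1, h2⟩ := h h0
  obtain ⟨U, p, j, hp, hj, hpj, hjp⟩ := split_idem he hee
  obtain ⟨V, p', j', hp', hj', hpj', hjp'⟩ := split_idem ((isHom_one X).sub he) (idem_compl hee)
  have h3 : j' ⊚ (p' ⊚ j) = 0 := by
    apply (Surj.of_right hpj).cancel0
    calc (j' ⊚ p' ⊚ j) ⊚ p = (j' ⊚ p') ⊚ (j ⊚ p) := rfl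
      _ = 0 := by rw [hjp, hjp', sub_cc, one_cc, hee, sub_self]
  have h4 : j ⊚ (p ⊚ j') = 0 := by
    apply (Surj.of_right hpj').cancel0
    calc (j ⊚ p ⊚ j') ⊚ p' = (j ⊚ p) ⊚ (j' ⊚ p') := rfl
      _ = 0 := by rw [hjp, hjp', cc_sub, cc_one, hee, sub_self]
  refine ⟨U, V, ⟨j, p', j', p, hj, hp', hpj, hpj', ?_, (Inj.of_left hpj').cancel0 h3,
    (Inj.of_left hpj).cancel0 h4⟩, hj', hp, ?_, ?_⟩
  · rw [hjp, hjp']; abel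
  · intro h; apply h1; rw [← hjp, ← one_cc p, h]; simp
  · intro h; apply h2
    have h5 : one X - e = 0 := by rw [← hjp', ← one_cc p', h]; simp
    exact (sub_eq_zero.mp h5).symm

/-- swapping a split sequence -/
def SES.swap (S : SES U X V) (hs : IsHom S.s) (hr : IsHom S.r) : SES V X U where
  i := S.s
  p := S.r
  s := S.i
  r := S.p
  hi := hs
  hp := hr
  ri := S.ps
  ps := S.ri
  sum := by rw [add_comm]; exact S.sum
  pi := S.rs
  rs := S.pi

lemma indec_smd (hX : Indec X) {j : C0 Y X} {p : C0 X Y} (hj : IsHom j) (hp : IsHom p)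
    (h : p ⊚ j = one Y) (h0 : one Y ≠ 0) : j ⊚ p = one X := by
  rcases hX.2 (j ⊚ p) (hj.comp hp) (by
    calc (j ⊚ p) ⊚ j ⊚ p = j ⊚ (p ⊚ j) ⊚ p := rfl
      _ = j ⊚ p := by rw [h]; rfl) with h1 | h1
  · exfalso; apply h0
    calc one Y = (p ⊚ j) ⊚ (p ⊚ j) := by rw [h]; rfl
      _ = p ⊚ (j ⊚ p) ⊚ j := rfl
      _ = 0 := by rw [h1]; simp
  · exact h1

lemma Indec.iso (hX : Indec X) (h : Iso X Y) : Indec Y := by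
  obtain ⟨f, g, hf, hg, h1, h2⟩ := h
  refine ⟨?_, ?_⟩
  · intro h0; apply hX.1
    rw [← h1, ← one_cc f, h0]; simp
  · intro e he hee
    have hid : (g ⊚ e ⊚ f) ⊚ (g ⊚ e ⊚ f) = g ⊚ e ⊚ f := by
      calc (g ⊚ e ⊚ f) ⊚ (g ⊚ e ⊚ f) = g ⊚ e ⊚ (f ⊚ g) ⊚ e ⊚ f := rfl
        _ = g ⊚ (e ⊚ e) ⊚ f := by rw [h2]; rfl
        _ = _ := by rw [hee]
    have hr : f ⊚ (g ⊚ e ⊚ f) ⊚ g = e := by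
      calc f ⊚ (g ⊚ e ⊚ f) ⊚ g = (f ⊚ g) ⊚ e ⊚ (f ⊚ g) := rfl
        _ = e := by rw [h2]; rfl
    rcases hX.2 _ (hg.comp (he.comp hf)) hid with h | h
    · left; rw [← hr, h]; simp
    · right; rw [← hr, h, one_cc, h2]

lemma isHom_pow {f : C0 X X} (hf : IsHom f) (n : ℕ) : IsHom (f ^ n) := by
  induction n with
  | zero => exact isHom_one X
  | succ n ih => rw [pow_succ]; exact ih.comp hf

lemma fitting (hX : Indec X) {f : C0 X X} (hf : IsHom f) :
    (∃ n, f ^ n = 0) ∨ (Inj f ∧ Surj f) := by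
  have hker : ∀ i v, (f ^ (2 * td X)) i v = 0 → (f ^ td X) i v = 0 := by
    intro i v hv
    have hle : Module.finrank k (X.X i) ≤ td X := 
      Finset.single_le_sum (f := fun i => Module.finrank k (X.X i)) (fun _ _ => Nat.zero_le _) (Finset.mem_univ i)
    have h1 := Module.End.ker_pow_eq_ker_pow_finrank_of_le (f := f i) hle
    have h2 := Module.End.ker_pow_eq_ker_pow_finrank_of_le (f := f i) (m := 2 * td X) (by omega)
    have : v ∈ LinearMap.ker ((f i) ^ (td X)) := by rw [h1, ← h2]; exact hv
    exact this
  set g := f ^ td X with hg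
  have hgh : IsHom g := isHom_pow hf _
  have hgg : g ⊚ g = f ^ (2 * td X) := by rw [two_mul, pow_add]; rfl
  rw [← hgg] at hker
  obtain ⟨I, p, j, hp, hj, sp, ij, hjp⟩ := image_factor hgh
  have hinj : Inj (p ⊚ j) := by
    intro i
    rw [injective_iff_map_eq_zero]
    intro v hv
    obtain ⟨u, rfl⟩ := sp i v
    have h0 : (g ⊚ g) i u = 0 := by
      rw [← hjp]
      simp only [cc_apply] at hv ⊢
      rw [hv, map_zero]
    have := hker i u h0
    rw [← hjp] at this
    exact ij i (by rw [map_zero]; exact this)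
  obtain ⟨w, hw, hw1, hw2⟩ := exists_inv (hp.comp hj) hinj (hinj.surj_of_td le_rfl)
  rcases hX.2 (j ⊚ w ⊚ p) (hj.comp (hw.comp hp)) (by
    calc (j ⊚ w ⊚ p) ⊚ (j ⊚ w ⊚ p) = j ⊚ (w ⊚ (p ⊚ j)) ⊚ w ⊚ p := rfl
      _ = j ⊚ w ⊚ p := by rw [hw1]; rfl) with h | h
  · left
    refine ⟨2 * td X, ?_⟩
    rw [← hgg, ← hjp]
    calc (j ⊚ p) ⊚ (j ⊚ p) = j ⊚ (p ⊚ j) ⊚ one I ⊚ p := rfl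
      _ = (j ⊚ p) ⊚ (j ⊚ w ⊚ p) ⊚ (j ⊚ p) := by
        rw [← hw1]; rfl
      _ = 0 := by rw [h]; simp
  · right
    have hpi : Inj p := by
      apply Inj.of_comp (g := j ⊚ w); rw [cc_assoc, h]; exact Inj.of_left (g := one X) rfl
    have hgi : Inj g := by rw [← hjp]; exact ij.comp hpi
    have hn : td X ≠ 0 := fun h0 => hX.1 (td_eq_zero_iff.mp h0)
    have hfi : Inj f := by
      obtain ⟨m, hm⟩ := Nat.exists_eq_succ_of_ne_zero hn
      rw [hg, hm, pow_succ] at hgi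
      exact Inj.of_comp (g := f ^ m) hgi
    exact ⟨hfi, hfi.surj_of_td le_rfl⟩

lemma exists_smd (n : ℕ) : ∀ {I K : Rp Q k} (u : C0 I K), IsHom u → u ≠ 0 → td K ≤ n →
    ∃ (D : Rp Q k) (i : C0 D K) (r : C0 K D), Indec D ∧ IsHom i ∧ IsHom r ∧ r ⊚ i = one D ∧ r ⊚ u ≠ 0 := by
  induction n with
  | zero =>
    intro I K u hu h0 hn
    exact absurd (zero_of_td_right (by omega) u) h0
  | succ n ih =>
    intro I K u hu h0 hn
    have hK : one K ≠ 0 := by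
      intro h; apply h0; rw [← one_cc u, h]; simp
    by_cases hI : Indec K
    · exact ⟨K, one K, one K, hI, isHom_one K, isHom_one K, rfl, h0⟩
    obtain ⟨U, V, S, hs, hr, hU, hV⟩ := split_of_not_indec hK hI
    have htd := S.td_add
    have hU' := td_pos_iff.mpr hU
    have hV' := td_pos_iff.mpr hV
    by_cases h1 : S.r ⊚ u = 0
    · have h2 : S.p ⊚ u ≠ 0 := by
        intro h2; apply h0
        rw [← one_cc u, ← S.sum, add_cc, cc_assoc, cc_assoc, h1, h2]; simp
      obtain ⟨D, i, r, hD, hi, hr', hri, hru⟩ := ih (S.p ⊚ u) (S.hp.comp hu) h2 (by omega)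
      refine ⟨D, S.s ⊚ i, r ⊚ S.p, hD, hs.comp hi, hr'.comp S.hp, ?_, hru⟩
      calc (r ⊚ S.p) ⊚ (S.s ⊚ i) = r ⊚ (S.p ⊚ S.s) ⊚ i := rfl
        _ = one D := by rw [S.ps, one_cc, hri]
    · obtain ⟨D, i, r, hD, hi, hr', hri, hru⟩ := ih (S.r ⊚ u) (hr.comp hu) h1 (by omega)
      refine ⟨D, S.i ⊚ i, r ⊚ S.r, hD, S.hi.comp hi, hr'.comp hr, ?_, hru⟩
      calc (r ⊚ S.r) ⊚ (S.i ⊚ i) = r ⊚ (S.r ⊚ S.i) ⊚ i := rfl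
        _ = one D := by rw [S.ri, one_cc, hri]

lemma Brick.one_ne (h : Brick X) : one X ≠ 0 := by
  intro h0
  have : hom X X = 0 := by
    rw [hom_eq_zero_iff]; intro f _; rw [← one_cc f, h0]; simp
  unfold Brick at h; omega

lemma Brick.scalar (h : Brick X) {f : C0 X X} (hf : IsHom f) : ∃ c : k, f = c • one X := by
  have h1 : (⟨one X, isHom_one X⟩ : LinearMap.ker (dd X X)) ≠ 0 := by
    intro h0; exact h.one_ne (congrArg Subtype.val h0)
  obtain ⟨c, hc⟩ := (finrank_eq_one_iff_of_nonzero' _ h1).mp h ⟨f, hf⟩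
  exact ⟨c, (congrArg Subtype.val hc).symm⟩

lemma brick_of_scalar (h0 : one X ≠ 0) (h : ∀ f : C0 X X, IsHom f → ∃ c : k, f = c • one X) : Brick X := by
  have h1 : (⟨one X, isHom_one X⟩ : LinearMap.ker (dd X X)) ≠ 0 := by
    intro h'; exact h0 (congrArg Subtype.val h')
  refine (finrank_eq_one_iff_of_nonzero' _ h1).mpr ?_
  rintro ⟨f, hf⟩
  obtain ⟨c, hc⟩ := h f hf
  exact ⟨c, Subtype.ext hc.symm⟩

lemma Brick.indec (h : Brick X) : Indec X := by
  refine ⟨h.one_ne, fun e he hee => ?_⟩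
  obtain ⟨c, rfl⟩ := h.scalar he
  rw [smul_cc, one_cc, smul_smul] at hee
  have h1 : (c * c - c) • one X = 0 := by rw [sub_smul, hee, sub_self]
  have h2 : c * c - c = 0 := (smul_eq_zero.mp h1).resolve_right h.one_ne
  have h3 : c * (c - 1) = 0 := by rw [← h2]; ring
  rcases mul_eq_zero.mp h3 with h4 | h4
  · left; rw [h4]; simp
  · right; rw [sub_eq_zero.mp h4]; simp

lemma Brick.iso (h : Brick X) (hi : Iso X Y) : Brick Y := by
  unfold Brick; rw [← hi.hom_left, ← hi.hom_right]; exact h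

/-- nonzero endomorphisms of a brick are isomorphisms -/
lemma Brick.inj (h : Brick X) {f : C0 X X} (hf : IsHom f) (h0 : f ≠ 0) : Inj f := by
  obtain ⟨c, rfl⟩ := h.scalar hf
  have hc : c ≠ 0 := by rintro rfl; apply h0; simp
  intro i v w hvw
  exact smul_right_injective _ hc hvw

variable [IsAlgClosed k]

lemma exists_nilp_of_not_brick (hX : Indec X) (hb : ¬ Brick X) :
    ∃ f : C0 X X, IsHom f ∧ f ≠ 0 ∧ f ⊚ f = 0 := by
  have : ¬ ∀ f : C0 X X, IsHom f → ∃ c : k, f = c • one X := fun h => hb (brick_of_scalar hX.1 h)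
  push Not at this
  obtain ⟨f, hf, hfc⟩ := this
  have : ∃ i, Nontrivial (X.X i) := by
    by_contra hn
    push Not at hn
    apply hX.1; apply ext0; intro i v
    have := hn i
    exact Subsingleton.elim _ _
  obtain ⟨i, hi⟩ := this
  obtain ⟨c, hc⟩ := Module.End.exists_eigenvalue (f i)
  obtain ⟨v, hv⟩ := hc.exists_hasEigenvector
  have hθ : IsHom (f - c • one X) := hf.sub ((isHom_one X).smul c)
  rcases fitting hX hθ with ⟨n, hn⟩ | ⟨h, -⟩
  · have hne : f - c • one X ≠ 0 := sub_ne_zero.mpr (hfc c)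
    set g := f - c • one X
    have hex : ∃ n, g ^ n = 0 := ⟨n, hn⟩
    classical
    set N := Nat.find hex with hN
    have hN0 : g ^ N = 0 := Nat.find_spec hex
    have hN2 : 2 ≤ N := by
      by_contra h
      have : N = 0 ∨ N = 1 := by omega
      rcases this with h | h
      · rw [h] at hN0; exact hX.1 hN0
      · rw [h, pow_one] at hN0; exact hne hN0
    refine ⟨g ^ (N - 1), isHom_pow hθ _, Nat.find_min hex (by omega), ?_⟩
    calc (g ^ (N - 1)) ⊚ (g ^ (N - 1)) = g ^ (N - 1) * g ^ (N - 1) := rfl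
      _ = g ^ N * g ^ (N - 2) := by rw [← pow_add, ← pow_add]; congr 1; omega
      _ = 0 := by rw [hN0, zero_mul]
  · exfalso
    apply hv.2
    apply h i
    rw [map_zero]
    simp [hv.apply_eq_smul]

lemma brick_lemma (n : ℕ) : ∀ {X : Rp Q k}, td X ≤ n → Indec X → ¬ Brick X →
    ∃ (U : Rp Q k) (j : C0 U X), Brick U ∧ ext U U ≠ 0 ∧ IsHom j ∧ Inj j := by
  induction n with
  | zero => intro X hn hX; exact absurd (td_eq_zero_iff.mp (by omega)) hX.1
  | succ n ih =>
    intro X hn hX hb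
    let P : ℕ → Prop := fun m => ∃ (I : Rp Q k) (p : C0 X I) (j : C0 I X), IsHom p ∧ IsHom j ∧ Surj p ∧ Inj j ∧
      p ⊚ j = 0 ∧ one I ≠ 0 ∧ td I = m
    have hex : ∃ m, P m := by
      obtain ⟨f, hf, h0, hff⟩ := exists_nilp_of_not_brick hX hb
      obtain ⟨I, p, j, hp, hj, sp, ij, hjp⟩ := image_factor hf
      refine ⟨td I, I, p, j, hp, hj, sp, ij, ?_, ?_, rfl⟩
      · apply ij.cancel0; apply sp.cancel0
        calc (j ⊚ p ⊚ j) ⊚ p = (j ⊚ p) ⊚ (j ⊚ p) := rfl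
          _ = 0 := by rw [hjp, hff]
      · intro h; apply h0; rw [← hjp, ← one_cc p, h]; simp
    classical
    obtain ⟨I, p, j, hp, hj, sp, ij, hpj, hI, htd⟩ := Nat.find_spec hex
    have hmin : ∀ m, P m → Nat.find hex ≤ m := fun m hm => Nat.find_min' hex hm
    obtain ⟨K, S, rfl⟩ := ses_of_surj hp sp
    obtain ⟨hu, hiu⟩ := S.factor_i hj hpj
    set u := S.r ⊚ j
    have hu0 : u ≠ 0 := by
      intro h; rw [h] at hiu
      apply hI
      apply ij.cancel0; rw [cc_one, ← hiu]; simp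
    obtain ⟨D, i, r, hD, hi, hr, hri, hru⟩ := exists_smd _ u hu hu0 le_rfl
    have hv : Inj (r ⊚ u) := by
      obtain ⟨I', p', j', hp', hj', sp', ij', hjp'⟩ := image_factor (hr.comp hu)
      have h1 : td I ≤ td I' := by
        rw [htd]
        apply hmin
        refine ⟨I', p' ⊚ S.p, S.i ⊚ i ⊚ j', hp'.comp hp, S.hi.comp (hi.comp hj'), sp'.comp sp,
          S.inj.comp ((Inj.of_left hri).comp ij'), ?_, ?_, rfl⟩
        · calc (p' ⊚ S.p) ⊚ S.i ⊚ i ⊚ j' = p' ⊚ (S.p ⊚ S.i) ⊚ i ⊚ j' := rfl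
            _ = 0 := by rw [S.pi]; simp
        · intro h; apply hru; rw [← hjp', ← one_cc p', h]; simp
      have := sp'.inj_of_td h1
      rw [← hjp']; exact ij'.comp this
    have htdX := S.td_add
    have hIpos := td_pos_iff.mpr hI
    have hDK : td D ≤ td K := (Inj.of_left hri).td_le
    have hext : ext I D ≠ 0 := by
      intro h0
      obtain ⟨h, hh⟩ := ext_eq_zero_iff.mp h0 (lw r S.z)
      obtain ⟨F, hF, hFi⟩ := S.extend hr hh
      have h3 := indec_smd hX (S.hi.comp hi) hF (by rw [← cc_assoc, hFi, hri]) hD.1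
      have : Inj F := Inj.of_left h3
      have := this.td_le
      omega
    have hDD : ext D D ≠ 0 := by
      have := ext_le_inj (Z := D) (hr.comp hu) hv
      omega
    by_cases hDb : Brick D
    · exact ⟨D, S.i ⊚ i, hDb, hDD, S.hi.comp hi, S.inj.comp (Inj.of_left hri)⟩
    · obtain ⟨U, j, h1, h2, h3, h4⟩ := ih (by omega) hD hDb
      exact ⟨U, S.i ⊚ i ⊚ j, h1, h2, S.hi.comp (hi.comp h3), S.inj.comp ((Inj.of_left hri).comp h4)⟩

end indec

section minend
variable {W X Y Z A B C U V : Rp Q k}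

def homMap (Y : Rp Q k) (S : SES A B C) : LinearMap.ker (dd B Y) →ₗ[k] LinearMap.ker (dd A Y) :=
  LinearMap.restrict (ccR S.i) (fun _ hf => IsHom.comp hf S.hi)

lemma finrank_ker_homMap (Y : Rp Q k) (S : SES A B C) :
    Module.finrank k (LinearMap.ker (homMap Y S)) ≤ hom C Y := by
  let F : LinearMap.ker (homMap Y S) →ₗ[k] LinearMap.ker (dd C Y) :=
    { toFun := fun f => ⟨f.1.1 ⊚ S.s, (S.factor_p f.1.2 (congrArg Subtype.val f.2)).1⟩
      map_add' := fun f g => by apply Subtype.ext; exact add_cc _ _ _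
      map_smul' := fun c g => by apply Subtype.ext; exact smul_cc _ _ _ }
  refine LinearMap.finrank_le_finrank_of_injective (f := F) ?_
  intro f g hfg
  have h1 : f.1.1 ⊚ S.s = g.1.1 ⊚ S.s := congrArg Subtype.val hfg
  have h2 := (S.factor_p f.1.2 (congrArg Subtype.val f.2)).2
  have h3 := (S.factor_p g.1.2 (congrArg Subtype.val g.2)).2
  rw [h1, h3] at h2
  exact Subtype.ext (Subtype.ext h2.symm)

lemma hom_le_add_l (Y : Rp Q k) (S : SES A B C) : hom B Y ≤ hom A Y + hom C Y := by
  have h1 := LinearMap.finrank_range_add_finrank_ker (homMap Y S)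
  have h2 := finrank_ker_homMap Y S
  have h3 : Module.finrank k (LinearMap.range (homMap Y S)) ≤ hom A Y := Submodule.finrank_le _
  change _ = hom B Y at h1
  omega

lemma hom_lt_add_l (Y : Rp Q k) (S : SES A B C) {f : C0 A Y} (hf : IsHom f)
    (h : ∀ F : C0 B Y, IsHom F → F ⊚ S.i ≠ f) : hom B Y < hom A Y + hom C Y := by
  have h1 := LinearMap.finrank_range_add_finrank_ker (homMap Y S)
  have h2 := finrank_ker_homMap Y S
  have h3 : Module.finrank k (LinearMap.range (homMap Y S)) < hom A Y := by
    apply Submodule.finrank_lt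
    intro h4
    have : (⟨f, hf⟩ : LinearMap.ker (dd A Y)) ∈ LinearMap.range (homMap Y S) := by
      rw [h4]; trivial
    obtain ⟨F, hF⟩ := this
    exact h F.1 F.2 (congrArg Subtype.val hF)
  change _ = hom B Y at h1
  omega

lemma hom_le_add_r (Y : Rp Q k) (S : SES A B C) : hom Y B ≤ hom Y A + hom Y C := by
  let G : LinearMap.ker (dd Y B) →ₗ[k] LinearMap.ker (dd Y C) :=
    LinearMap.restrict (ccL S.p) (fun _ hf => S.hp.comp hf)
  have h1 := LinearMap.finrank_range_add_finrank_ker G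
  have h3 : Module.finrank k (LinearMap.range G) ≤ hom Y C := Submodule.finrank_le _
  have h2 : Module.finrank k (LinearMap.ker G) ≤ hom Y A := by
    let F : LinearMap.ker G →ₗ[k] LinearMap.ker (dd Y A) :=
      { toFun := fun f => ⟨S.r ⊚ f.1.1, (S.factor_i f.1.2 (congrArg Subtype.val f.2)).1⟩
        map_add' := fun f g => by apply Subtype.ext; exact cc_add _ _ _
        map_smul' := fun c g => by apply Subtype.ext; exact cc_smul _ _ _ }
    refine LinearMap.finrank_le_finrank_of_injective (f := F) ?_
    intro f g hfg
    have h1 : S.r ⊚ f.1.1 = S.r ⊚ g.1.1 := congrArg Subtype.val hfg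
    have h2 := (S.factor_i f.1.2 (congrArg Subtype.val f.2)).2
    have h3 := (S.factor_i g.1.2 (congrArg Subtype.val g.2)).2
    rw [h1, h3] at h2
    exact Subtype.ext (Subtype.ext h2.symm)
  change _ = hom Y B at h1
  omega

lemma hom_split_r (Y : Rp Q k) (S : SES A B C) (hs : IsHom S.s) : hom Y A + hom Y C ≤ hom Y B := by
  let F : LinearMap.ker (dd Y A) × LinearMap.ker (dd Y C) →ₗ[k] LinearMap.ker (dd Y B) :=
    LinearMap.coprod (LinearMap.restrict (ccL S.i) (fun _ hf => S.hi.comp hf))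
      (LinearMap.restrict (ccL S.s) (fun _ hf => hs.comp hf))
  have := LinearMap.finrank_le_finrank_of_injective (f := F) (by
    rw [← LinearMap.ker_eq_bot, LinearMap.ker_eq_bot']
    rintro ⟨f, g⟩ h
    have h : S.i ⊚ f.1 + S.s ⊚ g.1 = 0 := congrArg Subtype.val h
    have h1 := congrArg (fun u => S.r ⊚ u) h
    simp only [cc_add, ← cc_assoc, S.ri, S.rs, one_cc, zero_cc, add_zero, cc_zero] at h1
    have h2 := congrArg (fun u => S.p ⊚ u) h
    simp only [cc_add, ← cc_assoc, S.ps, S.pi, one_cc, zero_cc, zero_add, cc_zero] at h2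
    exact Prod.ext (Subtype.ext h1) (Subtype.ext h2))
  rwa [Module.finrank_prod] at this

lemma hom_split_l (Y : Rp Q k) (S : SES A B C) (hr : IsHom S.r) : hom A Y + hom C Y ≤ hom B Y := by
  let F : LinearMap.ker (dd A Y) × LinearMap.ker (dd C Y) →ₗ[k] LinearMap.ker (dd B Y) :=
    LinearMap.coprod (LinearMap.restrict (ccR S.r) (fun _ hf => IsHom.comp hf hr))
      (LinearMap.restrict (ccR S.p) (fun _ hf => IsHom.comp hf S.hp))
  have := LinearMap.finrank_le_finrank_of_injective (f := F) (by
    rw [← LinearMap.ker_eq_bot, LinearMap.ker_eq_bot']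
    rintro ⟨f, g⟩ h
    have h : f.1 ⊚ S.r + g.1 ⊚ S.p = 0 := congrArg Subtype.val h
    have h1 := congrArg (fun u => u ⊚ S.i) h
    simp only [add_cc, cc_assoc, S.ri, S.pi, cc_one, zero_cc, add_zero, cc_zero] at h1
    have h2 := congrArg (fun u => u ⊚ S.s) h
    simp only [add_cc, cc_assoc, S.ps, S.rs, cc_one, zero_cc, zero_add, cc_zero] at h2
    exact Prod.ext (Subtype.ext h1) (Subtype.ext h2))
  rwa [Module.finrank_prod] at this

/-- nonsplit extensions have fewer endomorphisms -/
lemma hom_nonsplit (S : SES U X V) (hs : IsHom S.s) (hr : IsHom S.r) (T : SES U Z V)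
    (hT : ∀ f, dd V U f ≠ T.z) : hom Z Z < hom X X := by
  have h1 := hom_le_add_r Z T
  have h2 := hom_le_add_l V T
  have h3 : hom Z U < hom U U + hom V U := by
    refine hom_lt_add_l U T (isHom_one U) (fun F hF h => ?_)
    have := T.extend_conv hF
    rw [h, lw_one] at this
    exact hT _ this
  have h4 := hom_split_r X S hs
  have h5 := hom_split_l U S hr
  have h6 := hom_split_l V S hr
  omega

def MinEnd (X : Rp Q k) : Prop := ∀ Y : Rp Q k, dv Y = dv X → hom X X ≤ hom Y Y

lemma exists_rep (k : Type) [Field k] {α : Q.V → ℤ} (h : ∀ i, 0 ≤ α i) : ∃ X : Rp Q k, dv X = α := by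
  refine ⟨{ X := fun i => Fin (α i).toNat → k, m := fun _ => 0 }, ?_⟩
  funext i
  simp [dv, h i]

lemma exists_minEnd (k : Type) [Field k] {α : Q.V → ℤ} (h : ∀ i, 0 ≤ α i) : ∃ X : Rp Q k, dv X = α ∧ MinEnd X := by
  classical
  have hex : ∃ n, ∃ X : Rp Q k, dv X = α ∧ hom X X = n := by
    obtain ⟨X, hX⟩ := exists_rep k h; exact ⟨_, X, hX, rfl⟩
  obtain ⟨X, hX, hn⟩ := Nat.find_spec hex
  refine ⟨X, hX, fun Y hY => ?_⟩
  rw [hn]; exact Nat.find_min' hex ⟨Y, hY.trans hX, rfl⟩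

lemma MinEnd.ext_zero (h : MinEnd X) (S : SES U X V) (hs : IsHom S.s) (hr : IsHom S.r) : ext V U = 0 := by
  by_contra h0
  obtain ⟨z, hz⟩ := exists_ext h0
  have h1 := hom_nonsplit S hs hr (extSES U V z) (by rw [extSES_z]; exact hz)
  have h2 := h (extRep U V z) (by rw [S.dv_add, (extSES U V z).dv_add])
  omega

end minend
end QR


namespace QR

section pencil
variable {k : Type} [Field k] {U W : Type} [AddCommGroup U] [Module k U] [AddCommGroup W] [Module k W]

lemma pencil_inj [FiniteDimensional k U] (M0 M1 : U →ₗ[k] W) (h : Function.Injective M0) :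
    {t : k | ¬ Function.Injective (M0 + t • M1)}.Finite := by
  obtain ⟨L, hL⟩ := M0.exists_leftInverse_of_injective (LinearMap.ker_eq_bot.mpr h)
  let A : Module.End k U := L ∘ₗ M1
  have hfin : {c : k | A.HasEigenvalue c}.Finite := Module.End.finite_hasEigenvalue A
  refine (hfin.image (fun c => -c⁻¹)).subset ?_
  intro t ht
  simp only [Set.mem_ofPred_eq] at ht
  rw [injective_iff_map_eq_zero] at ht
  push Not at ht
  obtain ⟨v, hv, hv0⟩ := ht
  have h1 : v + t • A v = 0 := by
    have := congrArg L hv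
    simp only [LinearMap.add_apply, LinearMap.smul_apply, map_add, map_smul, map_zero] at this
    rw [← this]
    have h2 : L (M0 v) = v := congrArg (fun g => g v) hL
    rw [h2]; rfl
  have ht0 : t ≠ 0 := by
    rintro rfl; apply hv0; simpa using h1
  refine ⟨-t⁻¹, ?_, by simp⟩
  apply Module.End.hasEigenvalue_of_hasEigenvector (x := v)
  refine ⟨?_, hv0⟩
  rw [Module.End.mem_eigenspace_iff]
  have h3 : t • A v = -v := by rw [eq_neg_iff_add_eq_zero, add_comm]; exact h1
  calc A v = t⁻¹ • t • A v := by rw [smul_smul, inv_mul_cancel₀ ht0, one_smul]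
    _ = _ := by rw [h3]; simp

variable [FiniteDimensional k U] 

lemma pencil_ker (M0 M1 : U →ₗ[k] W) :
    {t : k | Module.finrank k (LinearMap.ker M0) < Module.finrank k (LinearMap.ker (M0 + t • M1))}.Finite := by
  obtain ⟨C, hC⟩ := Submodule.exists_isCompl (LinearMap.ker M0)
  have hinj : Function.Injective (M0 ∘ₗ C.subtype) := by
    rw [injective_iff_map_eq_zero]
    intro v hv
    have := hC.disjoint
    rw [Submodule.disjoint_def] at this
    exact Subtype.ext (this v hv v.2)
  refine (pencil_inj (M0 ∘ₗ C.subtype) (M1 ∘ₗ C.subtype) hinj).subset ?_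
  intro t ht
  simp only [Set.mem_ofPred_eq] at ht ⊢
  intro hi
  have hd : Disjoint (LinearMap.ker (M0 + t • M1)) C := by
    rw [Submodule.disjoint_def]
    intro v hv hvC
    have : (⟨v, hvC⟩ : C) = 0 := by
      apply hi; rw [map_zero]; exact hv
    exact congrArg Subtype.val this
  have h1 := Submodule.finrank_add_finrank_le_of_disjoint hd
  have h2 := Submodule.finrank_add_eq_of_isCompl hC
  omega

lemma pencil_deriv (M0 M1 : U →ₗ[k] W) : 
    {t : k | ¬ ∀ v, (M0 + t • M1) v = 0 → ∃ w, (M0 + t • M1) w = M1 v}.Finite := by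
  classical
  by_cases hk : Finite k
  · exact Set.toFinite _
  have hk' : Infinite k := not_finite_iff_infinite.mp hk
  have hex : ∃ d, ∃ t : k, Module.finrank k (LinearMap.ker (M0 + t • M1)) = d := ⟨_, 0, rfl⟩
  obtain ⟨t0, ht0⟩ := Nat.find_spec hex
  have hmin : ∀ t : k, Nat.find hex ≤ Module.finrank k (LinearMap.ker (M0 + t • M1)) :=
    fun t => Nat.find_min' hex ⟨t, rfl⟩
  set d := Nat.find hex
  have key : ∀ t1 : k, Module.finrank k (LinearMap.ker (M0 + t1 • M1)) = d →
      ∀ v, (M0 + t1 • M1) v = 0 → ∃ w, (M0 + t1 • M1) w = M1 v := by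
    intro t1 ht1 v hv
    by_contra hno
    push Not at hno
    set N := M0 + t1 • M1 with hN
    obtain ⟨C, hC⟩ := Submodule.exists_isCompl (LinearMap.ker N)
    let A0 : (C × k) →ₗ[k] W := LinearMap.coprod (N ∘ₗ C.subtype) (LinearMap.toSpanSingleton k W (M1 v))
    let A1 : (C × k) →ₗ[k] W := LinearMap.coprod (M1 ∘ₗ C.subtype) 0
    have hA0 : Function.Injective A0 := by
      rw [injective_iff_map_eq_zero]
      rintro ⟨c, x⟩ h
      have h : N c + x • M1 v = 0 := by simpa [A0] using h
      have hx : x = 0 := by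
        by_contra hx
        apply hno (-(x⁻¹ • (c : U)))
        have : N c = -(x • M1 v) := eq_neg_of_add_eq_zero_left h
        rw [map_neg, map_smul, this, smul_neg, smul_smul, inv_mul_cancel₀ hx, one_smul, neg_neg]
      subst hx
      rw [zero_smul, add_zero] at h
      have h3 := hC.disjoint
      rw [Submodule.disjoint_def] at h3
      have : (c : U) = 0 := h3 c h c.2
      exact Prod.ext (Subtype.ext this) rfl
    have hfin := pencil_inj A0 A1 hA0
    obtain ⟨s, hs⟩ := ((hfin.union (Set.finite_singleton (0:k))).infinite_compl).nonempty
    simp only [Set.mem_compl_iff, Set.mem_union, Set.mem_ofPred_eq, Set.mem_singleton_iff, not_or, not_not] at hs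
    obtain ⟨hs, hs0⟩ := hs
    have hv0 : v ∈ LinearMap.ker N := hv
    let B : (C × k) →ₗ[k] U := LinearMap.coprod C.subtype (LinearMap.toSpanSingleton k U (s⁻¹ • v))
    have hB : ∀ c, (M0 + (t1 + s) • M1) (B c) = (A0 + s • A1) c := by
      rintro ⟨c, x⟩
      have e1 : (M0 + (t1 + s) • M1) = N + s • M1 := by rw [hN, add_smul, add_assoc]
      rw [e1]
      simp only [B, A0, A1, LinearMap.coprod_apply, LinearMap.add_apply, LinearMap.smul_apply, map_add,
        Submodule.subtype_apply, LinearMap.toSpanSingleton_apply, map_smul, LinearMap.comp_apply,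
        LinearMap.zero_apply, add_zero, smul_add]
      have : N v = 0 := hv
      rw [this, smul_zero, smul_zero, smul_smul s⁻¹, inv_mul_cancel₀ hs0, one_smul]
      abel
    have hBi : Function.Injective B := by
      intro a b hab
      apply hs
      rw [← hB, ← hB, hab]
    have hd : Disjoint (LinearMap.ker (M0 + (t1 + s) • M1)) (LinearMap.range B) := by
      rw [Submodule.disjoint_def]
      rintro _ hu ⟨c, rfl⟩
      have : c = 0 := by
        apply hs; rw [map_zero, ← hB]; exact hu
      rw [this, map_zero]
    have h1 := Submodule.finrank_add_finrank_le_of_disjoint hd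
    rw [LinearMap.finrank_range_of_inj hBi, Module.finrank_prod, Module.finrank_self] at h1
    have h2 := Submodule.finrank_add_eq_of_isCompl hC
    have h3 := hmin (t1 + s)
    omega
  have h4 := pencil_ker (M0 + t0 • M1) M1
  refine ((h4.image (fun t => t + t0))).subset ?_
  intro t ht
  refine ⟨t - t0, ?_, by ring⟩
  simp only [Set.mem_ofPred_eq] at ht ⊢
  have e1 : M0 + t0 • M1 + (t - t0) • M1 = M0 + t • M1 := by rw [sub_smul]; abel
  rw [e1, ht0]
  refine lt_of_le_of_ne (hmin t) ?_
  intro h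
  exact ht (key t h.symm)

end pencil

section forms
variable {Q : FinQuiver}

lemma e_add_l (x y z : Q.V → ℤ) : Q.eulerForm (x + y) z = Q.eulerForm x z + Q.eulerForm y z := by
  simp only [FinQuiver.eulerForm, Pi.add_apply, add_mul, Finset.sum_add_distrib]; ring
lemma e_add_r (x y z : Q.V → ℤ) : Q.eulerForm z (x + y) = Q.eulerForm z x + Q.eulerForm z y := by
  simp only [FinQuiver.eulerForm, Pi.add_apply, mul_add, Finset.sum_add_distrib]; ring
lemma e_smul_l (m : ℤ) (x z : Q.V → ℤ) : Q.eulerForm (m • x) z = m * Q.eulerForm x z := by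
  simp only [FinQuiver.eulerForm, Pi.smul_apply, smul_eq_mul, mul_sub, Finset.mul_sum, mul_assoc]
lemma e_smul_r (m : ℤ) (x z : Q.V → ℤ) : Q.eulerForm z (m • x) = m * Q.eulerForm z x := by
  simp only [FinQuiver.eulerForm, Pi.smul_apply, smul_eq_mul, mul_sub, Finset.mul_sum, mul_left_comm]
lemma e_zero_l (z : Q.V → ℤ) : Q.eulerForm 0 z = 0 := by simp [FinQuiver.eulerForm]
lemma e_zero_r (z : Q.V → ℤ) : Q.eulerForm z 0 = 0 := by simp [FinQuiver.eulerForm]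
lemma e_sub_l (x y z : Q.V → ℤ) : Q.eulerForm (x - y) z = Q.eulerForm x z - Q.eulerForm y z := by
  have := e_add_l (x - y) y z
  rw [sub_add_cancel] at this; linarith
lemma e_sub_r (x y z : Q.V → ℤ) : Q.eulerForm z (x - y) = Q.eulerForm z x - Q.eulerForm z y := by
  have := e_add_r (x - y) y z
  rw [sub_add_cancel] at this; linarith
lemma e_sum_r {ι : Type} (s : Finset ι) (f : ι → Q.V → ℤ) (z : Q.V → ℤ) :
    Q.eulerForm z (∑ j ∈ s, f j) = ∑ j ∈ s, Q.eulerForm z (f j) := by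
  classical
  induction s using Finset.induction_on with
  | empty => simp [e_zero_r]
  | insert a s ha ih => rw [Finset.sum_insert ha, Finset.sum_insert ha, e_add_r, ih]
lemma e_sum_l {ι : Type} (s : Finset ι) (f : ι → Q.V → ℤ) (z : Q.V → ℤ) :
    Q.eulerForm (∑ j ∈ s, f j) z = ∑ j ∈ s, Q.eulerForm (f j) z := by
  classical
  induction s using Finset.induction_on with
  | empty => simp [e_zero_l]
  | insert a s ha ih => rw [Finset.sum_insert ha, Finset.sum_insert ha, e_add_l, ih]

/-- The properties of affine quivers that are used; a self-dual list. -/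
structure Aff (Q : FinQuiver) (δ : Q.V → ℤ) : Prop where
  ne : Nonempty Q.V
  pos : ∀ i, 0 < δ i
  psd : ∀ x, 0 ≤ Q.eulerForm x x
  rad : ∀ x : Q.V → ℤ, (∀ y, Q.eulerForm x y + Q.eulerForm y x = 0) ↔ ∃ m : ℤ, x = m • δ
  pex : ∀ j, ∃ p : Q.V → ℤ, (∀ i, 0 ≤ p i) ∧ ∀ y, Q.eulerForm p y = y j
  pex' : ∀ j, ∃ p : Q.V → ℤ, (∀ i, 0 ≤ p i) ∧ ∀ y, Q.eulerForm y p = y j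

variable {δ : Q.V → ℤ} (H : Aff Q δ)
namespace Aff

lemma sym (H : Aff Q δ) (y) : Q.eulerForm y δ = - Q.eulerForm δ y := by
  have := (H.rad δ).mpr ⟨1, by simp⟩ y
  linarith
lemma dd (H : Aff Q δ) : Q.eulerForm δ δ = 0 := by have := H.sym δ; linarith

lemma of_q0 (H : Aff Q δ) {x} (h : Q.eulerForm x x = 0) : ∃ m : ℤ, x = m • δ := by
  rw [← H.rad]
  intro y
  set s := Q.eulerForm x y + Q.eulerForm y x with hs
  have h1 : ∀ n : ℤ, 0 ≤ n * s + Q.eulerForm y y := by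
    intro n
    have := H.psd (n • x + y)
    simp only [e_add_l, e_add_r, e_smul_l, e_smul_r, h] at this
    rw [hs]; linarith
  by_contra h0
  have hq := H.psd y
  have h2 := h1 (-(s * (Q.eulerForm y y + 1)))
  have h3 : 1 ≤ s * s := by
    have : 0 < s * s := mul_self_pos.mpr h0
    omega
  nlinarith

lemma q_add (H : Aff Q δ) (x) (m : ℤ) : Q.eulerForm (x + m • δ) (x + m • δ) = Q.eulerForm x x := by
  simp only [e_add_l, e_add_r, e_smul_l, e_smul_r, H.sym x, H.dd]; ring

lemma mult_pos (H : Aff Q δ) {x : Q.V → ℤ} {m : ℤ} (hx : x = m • δ) (h0 : ∀ i, 0 ≤ x i) (hne : x ≠ 0) : 1 ≤ m := by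
  by_contra h
  have h1 : m ≤ 0 := by omega
  rcases h1.lt_or_eq with h2 | h2
  · obtain ⟨i⟩ := H.ne
    have := h0 i
    rw [hx] at this
    simp only [Pi.smul_apply, smul_eq_mul] at this
    nlinarith [H.pos i]
  · apply hne; rw [hx, h2]; simp

lemma sum_pos (H : Aff Q δ) : 0 < ∑ i, δ i := by
  obtain ⟨i⟩ := H.ne
  exact Finset.sum_pos (fun i _ => H.pos i) ⟨i, Finset.mem_univ i⟩

lemma nondeg (H : Aff Q δ) {x y : Q.V → ℤ} (h : ∀ z, (∀ i, 0 ≤ z i) → Q.eulerForm z x = Q.eulerForm z y) : x = y := by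
  funext j
  obtain ⟨p, hp, hpj⟩ := H.pex j
  rw [← hpj x, ← hpj y, h p hp]

/-- positivity of roots -/
lemma root_sign (H : Aff Q δ) {x : Q.V → ℤ} (h : Q.eulerForm x x = 1) : (∀ i, 0 ≤ x i) ∨ (∀ i, x i ≤ 0) := by
  let a : Q.V → ℤ := fun i => max (x i) 0
  let b : Q.V → ℤ := fun i => max (-x i) 0
  have hx : x = a - b := by
    funext i
    simp only [a, b, Pi.sub_apply]
    rcases le_total (x i) 0 with h | h
    · rw [max_eq_right h, max_eq_left (by linarith)]; ring
    · rw [max_eq_left h, max_eq_right (by linarith)]; ring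
  have ha : ∀ i, 0 ≤ a i := fun i => le_max_right _ _
  have hb : ∀ i, 0 ≤ b i := fun i => le_max_right _ _
  have hab : ∀ i, a i * b i = 0 := by
    intro i; simp only [a, b]
    rcases le_total (x i) 0 with h | h
    · rw [max_eq_right h, zero_mul]
    · rw [max_eq_right (a := -x i) (by linarith), mul_zero]
  have h1 : Q.eulerForm a b ≤ 0 := by
    unfold FinQuiver.eulerForm
    simp only [hab, Finset.sum_const_zero, zero_sub, Left.neg_nonpos_iff]
    exact Finset.sum_nonneg (fun e _ => mul_nonneg (ha _) (hb _))
  have h2 : Q.eulerForm b a ≤ 0 := by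
    unfold FinQuiver.eulerForm
    simp only [mul_comm (b _), hab, Finset.sum_const_zero, zero_sub, Left.neg_nonpos_iff]
    exact Finset.sum_nonneg (fun e _ => mul_nonneg (ha _) (hb _))
  have h3 : Q.eulerForm x x = Q.eulerForm a a + Q.eulerForm b b - Q.eulerForm a b - Q.eulerForm b a := by
    rw [hx]; simp only [e_sub_l, e_sub_r]; ring
  have h4 := H.psd a
  have h5 := H.psd b
  have key : ∀ u v : Q.V → ℤ, (∀ i, 0 ≤ u i) → (∀ i, u i * v i = 0) → Q.eulerForm u u = 0 → (∀ i, u i = 0) ∨ (∀ i, v i = 0) := by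
    intro u v hu huv h0
    obtain ⟨m, hm⟩ := H.of_q0 h0
    by_cases hu0 : u = 0
    · left; intro i; rw [hu0]; rfl
    · right; intro i
      have hm1 := H.mult_pos hm hu hu0
      have : u i ≠ 0 := by
        rw [hm]; simp only [Pi.smul_apply, smul_eq_mul]
        have := H.pos i
        positivity
      exact (mul_eq_zero.mp (huv i)).resolve_left this
  have hor : (∀ i, a i = 0) ∨ (∀ i, b i = 0) := by
    have : Q.eulerForm a a = 0 ∨ Q.eulerForm b b = 0 := by omega
    rcases this with h | h
    · exact key a b ha hab h
    · exact (key b a hb (fun i => by rw [mul_comm]; exact hab i) h).symm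
  rcases hor with h | h
  · right; intro i; have := h i; simp only [a] at this; exact max_eq_right_iff.mp this
  · left; intro i; have := h i; simp only [b] at this
    have := max_eq_right_iff.mp this; linarith
end Aff

variable {k : Type} [Field k]

/-- `α` is not regular and large. -/
def Good (δ α : Q.V → ℤ) : Prop := Q.eulerForm δ α ≠ 0 ∨ ∃ i, α i < δ i

lemma dv_ne {X : Rp Q k} (h : one X ≠ 0) : dv X ≠ 0 := by
  intro h0; exact h (td_eq_zero_iff.mp (td_eq_zero_iff_dv.mpr h0))
lemma one_ne_of_dv {X : Rp Q k} (h : dv X ≠ 0) : one X ≠ 0 := by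
  intro h0; exact h (td_eq_zero_iff_dv.mp (td_eq_zero_iff.mpr h0))

lemma MinEnd.decomp {X : Rp Q k} (hm : MinEnd X) (h0 : one X ≠ 0) (hn : ¬ Indec X) :
    ∃ u v : Q.V → ℤ, (∀ i, 0 ≤ u i) ∧ (∀ i, 0 ≤ v i) ∧ u ≠ 0 ∧ v ≠ 0 ∧ dv X = u + v ∧
      0 ≤ Q.eulerForm u v ∧ 0 ≤ Q.eulerForm v u := by
  obtain ⟨U, V, S, hs, hr, hU, hV⟩ := split_of_not_indec h0 hn
  have h1 := hm.ext_zero S hs hr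
  have h2 := hm.ext_zero (S.swap hs hr) S.hi S.hp
  refine ⟨dv U, dv V, dv_nonneg U, dv_nonneg V, dv_ne hU, dv_ne hV, S.dv_add, ?_, ?_⟩
  · rw [← hom_sub_ext, h2]; simp
  · rw [← hom_sub_ext, h1]; simp

lemma exists_indec (H : Aff Q δ) (k : Type) [Field k] {α : Q.V → ℤ} (hα : ∀ i, 0 ≤ α i) (hq : Q.eulerForm α α = 1)
    (hg : Good δ α) : ∃ X : Rp Q k, dv X = α ∧ Indec X := by
  obtain ⟨X, hX, hm⟩ := exists_minEnd k hα
  refine ⟨X, hX, ?_⟩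
  have hne : α ≠ 0 := by rintro rfl; simp [e_zero_l] at hq
  by_contra hn
  obtain ⟨u, v, hu, hv, hu0, hv0, huv, h1, h2⟩ := hm.decomp (one_ne_of_dv (by rw [hX]; exact hne)) hn
  rw [hX] at huv
  have h3 := H.psd u
  have h4 := H.psd v
  have h5 : Q.eulerForm α α = Q.eulerForm u u + Q.eulerForm v v + Q.eulerForm u v + Q.eulerForm v u := by
    rw [huv]; simp only [e_add_l, e_add_r]; ring
  have key : ∀ u v : Q.V → ℤ, (∀ i, 0 ≤ u i) → (∀ i, 0 ≤ v i) → u ≠ 0 → α = u + v → 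
      0 ≤ Q.eulerForm u v → 0 ≤ Q.eulerForm v u → Q.eulerForm u u ≠ 0 := by
    intro u v hu hv hu0 huv h1 h2 h0
    obtain ⟨m, hm⟩ := H.of_q0 h0
    have hm1 := H.mult_pos hm hu hu0
    rcases hg with hg | ⟨i, hi⟩
    · apply hg
      rw [hm, e_smul_l] at h1
      rw [hm, e_smul_r, H.sym] at h2
      have h6 : Q.eulerForm δ v = 0 := by nlinarith
      rw [huv, e_add_r, hm, e_smul_r, H.dd, h6]; simp
    · have : α i = m * δ i + v i := by rw [huv, hm]; simp
      nlinarith [hv i, H.pos i]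
  have h6 := key u v hu hv hu0 huv h1 h2
  have h7 := key v u hv hu hv0 (by rw [huv, add_comm]) h2 h1
  omega

variable [IsAlgClosed k]

lemma imag_sub (H : Aff Q δ) {X : Rp Q k} (hX : Indec X) (hb : ¬ Brick X) : 
    ∃ (U : Rp Q k) (j : C0 U X), Brick U ∧ IsHom j ∧ Inj j ∧ ∃ r : ℤ, 1 ≤ r ∧ dv U = r • δ := by
  obtain ⟨U, j, h1, h2, h3, h4⟩ := brick_lemma _ le_rfl hX hb
  refine ⟨U, j, h1, h3, h4, ?_⟩
  have h5 := hom_sub_ext U U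
  have h6 := H.psd (dv U)
  have h7 : hom U U = 1 := h1
  have h8 : Q.eulerForm (dv U) (dv U) = 0 := by omega
  obtain ⟨r, hr⟩ := H.of_q0 h8
  exact ⟨r, H.mult_pos hr (dv_nonneg U) (dv_ne h1.one_ne), hr⟩

lemma brick_of_small (H : Aff Q δ) {X : Rp Q k} (hX : Indec X) (h : ∃ i, dv X i < δ i) : Brick X := by
  by_contra hb
  obtain ⟨U, j, h1, h2, h3, r, hr, hU⟩ := imag_sub H hX hb
  obtain ⟨i, hi⟩ := h
  have := h3.dv_le i
  rw [hU] at this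
  simp only [Pi.smul_apply, smul_eq_mul] at this
  nlinarith [H.pos i]

lemma exists_T (H : Aff Q δ) (k : Type) [Field k] [IsAlgClosed k] : ∃ T : Rp Q k, dv T = δ ∧ Brick T := by
  obtain ⟨X, hX, hm⟩ := exists_minEnd k (fun i => (H.pos i).le)
  refine ⟨X, hX, ?_⟩
  have hne : δ ≠ 0 := by
    obtain ⟨i⟩ := H.ne
    intro h; have := H.pos i; rw [h] at this; simp at this
  have hX0 : one X ≠ 0 := one_ne_of_dv (by rw [hX]; exact hne)
  have hi : Indec X := by
    by_contra hn
    obtain ⟨u, v, hu, hv, hu0, hv0, huv, h1, h2⟩ := hm.decomp hX0 hn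
    rw [hX] at huv
    have h3 := H.psd u
    have h4 := H.psd v
    have h5 : Q.eulerForm δ δ = Q.eulerForm u u + Q.eulerForm v v + Q.eulerForm u v + Q.eulerForm v u := by
      conv_lhs => rw [huv]
      simp only [e_add_l, e_add_r]; ring
    rw [H.dd] at h5
    obtain ⟨m, hm⟩ := H.of_q0 (x := u) (by omega)
    obtain ⟨n, hn⟩ := H.of_q0 (x := v) (by omega)
    have hm1 := H.mult_pos hm hu hu0
    have hn1 := H.mult_pos hn hv hv0
    obtain ⟨i⟩ := H.ne
    have : δ i = m * δ i + n * δ i := by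
      conv_lhs => rw [huv, hm, hn]
      simp
    nlinarith [H.pos i]
  by_contra hb
  obtain ⟨U, j, h1, h2, h3, r, hr, hU⟩ := imag_sub H hi hb
  have : Iso U X := by
    refine Iso.of_bij h2 h3 (h3.surj_of_td ?_)
    zify; rw [td_eq, td_eq, hX, hU]
    refine Finset.sum_le_sum (fun i _ => ?_)
    simp only [Pi.smul_apply, smul_eq_mul]
    nlinarith [H.pos i]
  exact hb (h1.iso this)

end forms
end QR


namespace QR
variable {Q : FinQuiver} {δ : Q.V → ℤ} {k : Type} [Field k]

section pert
variable {A X Y Z : Rp Q k}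

/-- perturbation of a representation -/
abbrev pert (X : Rp Q k) (w : C1 X X) (t : k) : Rp Q k := withMaps X (X.m + t • w)

def rkW (w : C1 X X) : C0 A X →ₗ[k] C1 A X where
  toFun f := rk w f
  map_add' := rk_add w
  map_smul' c f := rk_smul c w f
def lwW (w : C1 X X) : C0 X A →ₗ[k] C1 X A where
  toFun f := lw f w
  map_add' f g := add_lw f g w
  map_smul' c f := smul_lw c f w

lemma dd_pert_r (w : C1 X X) (t : k) : dd A (pert X w t) = (dd A X + t • rkW w : C0 A X →ₗ[k] C1 A X) := by
  refine LinearMap.ext (fun f => funext (fun a => LinearMap.ext (fun v => ?_)))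
  change (X.m a + t • w a) (f _ v) - f _ (A.m a v) = (X.m a (f _ v) - f _ (A.m a v)) + t • (w a (f _ v))
  rw [LinearMap.add_apply, LinearMap.smul_apply]; abel
lemma dd_pert_l (w : C1 X X) (t : k) : dd (pert X w t) A = (dd X A + t • (- lwW w) : C0 X A →ₗ[k] C1 X A) := by
  refine LinearMap.ext (fun f => funext (fun a => LinearMap.ext (fun v => ?_)))
  change A.m a (f _ v) - f _ ((X.m a + t • w a) v) = (A.m a (f _ v) - f _ (X.m a v)) + t • (- (f _ (w a v)))
  rw [LinearMap.add_apply, LinearMap.smul_apply, map_add, map_smul, smul_neg]; abel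
lemma dd_pert (w : C1 X X) (t : k) :
    dd (pert X w t) (pert X w t) = (dd X X + t • (rkW w - lwW w) : C0 X X →ₗ[k] C1 X X) := by
  refine LinearMap.ext (fun f => funext (fun a => LinearMap.ext (fun v => ?_)))
  change (X.m a + t • w a) (f _ v) - f _ ((X.m a + t • w a) v) =
    (X.m a (f _ v) - f _ (X.m a v)) + t • (w a (f _ v) - (f _ (w a v)))
  rw [LinearMap.add_apply, LinearMap.smul_apply, LinearMap.add_apply, LinearMap.smul_apply, map_add, map_smul, smul_sub]; abel

lemma pert_hom_r (A : Rp Q k) (w : C1 X X) : {t : k | hom A X < hom A (pert X w t)}.Finite := by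
  refine (pencil_ker (dd A X) (rkW w)).subset (fun t ht => ?_)
  simp only [Set.mem_ofPred_eq, hom] at ht ⊢
  exact lt_of_lt_of_eq ht (congrArg (fun M => Module.finrank k (LinearMap.ker M)) (dd_pert_r w t))
lemma pert_hom_l (A : Rp Q k) (w : C1 X X) : {t : k | hom X A < hom (pert X w t) A}.Finite := by
  refine (pencil_ker (dd X A) (- lwW w)).subset (fun t ht => ?_)
  simp only [Set.mem_ofPred_eq, hom] at ht ⊢
  exact lt_of_lt_of_eq ht (congrArg (fun M => Module.finrank k (LinearMap.ker M)) (dd_pert_l w t))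
lemma pert_hom (w : C1 X X) : {t : k | hom X X < hom (pert X w t) (pert X w t)}.Finite := by
  refine (pencil_ker (dd X X) (rkW w - lwW w)).subset (fun t ht => ?_)
  simp only [Set.mem_ofPred_eq, hom] at ht ⊢
  exact lt_of_lt_of_eq ht (congrArg (fun M => Module.finrank k (LinearMap.ker M)) (dd_pert w t))

lemma rigid_step (H : Aff Q δ) {α : Q.V → ℤ} (hq : Q.eulerForm α α = 1) (hg : Good δ α)
    (hX : dv X = α) (hZ : dv Z = α) (h1 : hom X X ≤ 1) (h2 : hom X Z ≤ 1) (h3 : hom Z X ≤ 1) (h4 : hom Z Z ≤ 1) :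
    Iso X Z := by
  have e1 := hom_sub_ext X X
  have e2 := hom_sub_ext X Z
  have e3 := hom_sub_ext Z X
  have e4 := hom_sub_ext Z Z
  rw [hX, hq] at e1
  rw [hX, hZ, hq] at e2
  rw [hZ, hX, hq] at e3
  rw [hZ, hq] at e4
  obtain ⟨f, hf, hf0⟩ := exists_hom (X := X) (Y := Z) (by omega)
  obtain ⟨I, p, j, hp, hj, sp, ij, hjp⟩ := image_factor hf
  have hp0 : p ≠ 0 := by rintro rfl; apply hf0; rw [← hjp]; simp
  have hj0 : j ≠ 0 := by rintro rfl; apply hf0; rw [← hjp]; simp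
  have hI0 : one I ≠ 0 := by intro h; apply hp0; rw [← one_cc p, h]; simp
  have a1 := ext_le_surj (X := X) hp sp
  have a2 := ext_le_inj (Z := Z) hj ij
  have a3 := hom_le_left_inj (X := X) hj ij
  have a4 := hom_pos hp hp0
  have a5 := hom_le_right_surj (Z := Z) hp sp
  have a6 := hom_pos hj hj0
  have a7 := hom_le_left_inj (X := I) hj ij
  have a8 := hom_pos (isHom_one I) hI0
  have a9 := ext_le_inj (Z := I) hj ij
  have a10 := ext_le_surj (X := Z) hp sp
  have b1 := hom_sub_ext X I
  have b2 := hom_sub_ext I Z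
  have b3 := hom_sub_ext I I
  rw [hX] at b1
  rw [hZ] at b2
  have c1 : Q.eulerForm α (dv I) = 1 := by omega
  have c2 : Q.eulerForm (dv I) α = 1 := by omega
  have c3 : Q.eulerForm (dv I) (dv I) = 1 := by omega
  have c4 : Q.eulerForm (α - dv I) (α - dv I) = 0 := by
    simp only [e_sub_l, e_sub_r, c1, c2, c3, hq]; norm_num
  obtain ⟨m, hm⟩ := H.of_q0 c4
  have hα : α = dv I + m • δ := by rw [← hm]; abel
  have hge : ∀ i, 0 ≤ (α - dv I) i := by
    intro i; have := sp.dv_le i; rw [hX] at this; simp only [Pi.sub_apply]; omega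
  by_cases hz : α - dv I = 0
  · have hdv : dv I = α := (sub_eq_zero.mp hz).symm
    have p1 := sp.inj_of_td (td_eq_of_dv (by rw [hX, hdv])).le
    have p2 := ij.surj_of_td (td_eq_of_dv (by rw [hZ, hdv])).le
    rw [← hjp] at hf
    exact Iso.of_bij hf (ij.comp p1) (p2.comp sp)
  · exfalso
    have hm1 := H.mult_pos hm hge hz
    rcases hg with hg | ⟨i, hi⟩
    · apply hg
      rw [hα, e_add_l, e_smul_l, c3] at c1
      have : Q.eulerForm δ (dv I) = 0 := by
        have : m * Q.eulerForm δ (dv I) = 0 := by linarith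
        rcases mul_eq_zero.mp this with h | h
        · omega
        · exact h
      rw [hα, e_add_r, e_smul_r, this, H.dd]; simp
    · have : α i = dv I i + m * δ i := by conv_lhs => rw [hα]
                                          simp
      nlinarith [H.pos i, dv_nonneg I i]

lemma rigid_unique [IsAlgClosed k] (H : Aff Q δ) {α : Q.V → ℤ} (hq : Q.eulerForm α α = 1) (hg : Good δ α)
    (hX : dv X = α) (hY : dv Y = α) (h1 : Brick X) (h2 : Brick Y) : Iso X Y := by
  obtain ⟨m, hm⟩ := exists_withMaps (X := X) (Y := Y) (hX.trans hY.symm)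
  refine Iso.trans ?_ hm
  have hY' : Brick (withMaps X m) := h2.iso hm.symm
  have hdY : dv (withMaps X m) = α := hm.dv_eq.trans hY
  set Y' := withMaps X m with hY'def
  let w : C1 X X := m - X.m
  let w' : C1 Y' Y' := w
  have f1 := pert_hom_r X w
  have f2 := pert_hom_l X w
  have f3 := pert_hom w
  have f4 := pert_hom_r Y' w'
  have f5 := pert_hom_l Y' w'
  have hk : Infinite k := IsAlgClosed.instInfinite
  have hfin := ((f1.union f2).union f3).union ((f4.union f5).image (fun s => s + 1))
  obtain ⟨t, ht⟩ := hfin.infinite_compl.nonempty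
  simp only [Set.mem_compl_iff, Set.mem_union, Set.mem_ofPred_eq, not_or, not_lt, Set.mem_image, not_exists, not_and] at ht
  obtain ⟨⟨⟨g1, g2⟩, g3⟩, g4⟩ := ht
  have g5 : hom Y' (pert Y' w' (t - 1)) ≤ hom Y' Y' := by
    by_contra h; exact g4 (t - 1) (Or.inl (not_le.mp h)) (by ring)
  have g6 : hom (pert Y' w' (t - 1)) Y' ≤ hom Y' Y' := by
    by_contra h; exact g4 (t - 1) (Or.inr (not_le.mp h)) (by ring)
  have heq : pert Y' w' (t - 1) = pert X w t := by
    have : m + (t - 1) • w = X.m + t • w := by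
      simp only [w]
      rw [sub_smul, one_smul]; abel
    change withMaps X (m + (t - 1) • w) = withMaps X (X.m + t • w)
    rw [this]
  rw [heq] at g5 g6
  have hXX : hom X X = 1 := h1
  have hYY : hom Y' Y' = 1 := hY'
  have hdZ : dv (pert X w t) = α := hX
  have i1 := rigid_step H hq hg hX hdZ (by omega) (by omega) (by omega) (by omega)
  have i2 := rigid_step H hq hg hdY hdZ (by omega) (by omega) (by omega) (by omega)
  exact i1.trans i2.symm

end pert

section stab
variable {A B C X Y Z T : Rp Q k}

/-- semistable -/
def Sst (δ : Q.V → ℤ) (X : Rp Q k) : Prop :=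
  Q.eulerForm δ (dv X) = 0 ∧ ∀ (Y : Rp Q k) (j : C0 Y X), IsHom j → Inj j → Q.eulerForm δ (dv Y) ≤ 0
/-- stable -/
def Stb (δ : Q.V → ℤ) (X : Rp Q k) : Prop :=
  one X ≠ 0 ∧ Q.eulerForm δ (dv X) = 0 ∧ ∀ (Y : Rp Q k) (j : C0 Y X), IsHom j → Inj j → one Y ≠ 0 →
    ¬ Surj j → Q.eulerForm δ (dv Y) < 0
/-- all quotients have nonnegative defect -/
def T0 (δ : Q.V → ℤ) (X : Rp Q k) : Prop :=
  ∀ (Y : Rp Q k) (p : C0 X Y), IsHom p → Surj p → 0 ≤ Q.eulerForm δ (dv Y)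

lemma dv_zero (h : one X = 0) : dv X = 0 := td_eq_zero_iff_dv.mp (td_eq_zero_iff.mpr h)

lemma Stb.sst (h : Stb δ X) : Sst δ X := by
  refine ⟨h.2.1, fun Y j hj ij => ?_⟩
  by_cases h0 : one Y = 0
  · rw [dv_zero h0, e_zero_r]
  by_cases hs : Surj j
  · rw [(Iso.of_bij hj ij hs).dv_eq, h.2.1]
  · exact (h.2.2 Y j hj ij h0 hs).le

lemma Sst.t0 (h : Sst δ X) : T0 δ X := by
  intro Y p hp sp
  obtain ⟨K, S, rfl⟩ := ses_of_surj hp sp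
  have h1 := h.2 K S.i S.hi S.inj
  have h2 := h.1
  rw [S.dv_add, e_add_r] at h2
  linarith

lemma Sst.iso (h : Sst δ X) (hi : Iso X Y) : Sst δ Y := by
  refine ⟨hi.dv_eq ▸ h.1, fun Z j hj ij => ?_⟩
  obtain ⟨f, g, hf, hg, h1, h2⟩ := hi
  exact h.2 Z (g ⊚ j) (hg.comp hj) ((Inj.of_left h2).comp ij)

lemma Stb.iso (h : Stb δ X) (hi : Iso X Y) : Stb δ Y := by
  refine ⟨?_, hi.dv_eq ▸ h.2.1, fun Z j hj ij hZ hs => ?_⟩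
  · intro h0; exact h.1 (td_eq_zero_iff.mp (by rw [td_eq_of_dv hi.dv_eq]; exact td_eq_zero_iff.mpr h0))
  obtain ⟨f, g, hf, hg, h1, h2⟩ := hi
  refine h.2.2 Z (g ⊚ j) (hg.comp hj) ((Inj.of_left h2).comp ij) hZ (fun hs' => hs ?_)
  have : f ⊚ (g ⊚ j) = j := by rw [← cc_assoc, h2, one_cc]
  rw [← this]; exact (Surj.of_right h2).comp hs'

lemma T0.surj (hA : T0 δ A) (hT : Stb δ T) {f : C0 A T} (hf : IsHom f) (h0 : f ≠ 0) : Surj f := by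
  obtain ⟨I, p, j, hp, hj, sp, ij, hjp⟩ := image_factor hf
  have hI0 : one I ≠ 0 := by intro h; apply h0; rw [← hjp, ← one_cc p, h]; simp
  have h1 := hA I p hp sp
  rw [← hjp]
  refine Surj.comp ?_ sp
  by_contra hs
  have := hT.2.2 I j hj ij hI0 hs
  linarith

lemma Stb.inj (hT : Stb δ T) (hX : Sst δ X) {f : C0 T X} (hf : IsHom f) (h0 : f ≠ 0) : Inj f := by
  obtain ⟨I, p, j, hp, hj, sp, ij, hjp⟩ := image_factor hf
  obtain ⟨K, S, rfl⟩ := ses_of_surj hp sp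
  have hI0 : one I ≠ 0 := by intro h; apply h0; rw [← hjp, ← one_cc S.p, h]; simp
  have h1 := hX.2 I j hj ij
  have h2 := hT.2.1
  rw [S.dv_add, e_add_r] at h2
  by_cases hK : one K = 0
  · rw [← hjp]; refine Inj.comp ij (sp.inj_of_td ?_)
    rw [S.td_add, td_eq_zero_iff.mpr hK]; omega
  · exfalso
    have := hT.2.2 K S.i S.hi S.inj hK (fun hs => hI0 (by
      have h5 := S.pi
      have h6 : S.p = 0 := hs.cancel0 h5
      apply sp.cancel0; rw [one_cc, h6]))
    linarith

lemma Stb.iso_of (hX : Stb δ X) (hY : Stb δ Y) {f : C0 X Y} (hf : IsHom f) (h0 : f ≠ 0) : Iso X Y :=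
  Iso.of_bij hf (hX.inj hY.sst hf h0) (hX.sst.t0.surj hY hf h0)

lemma Stb.indec (hX : Stb δ X) : Indec X := by
  refine ⟨hX.1, fun e he hee => ?_⟩
  by_cases h0 : e = 0
  · exact Or.inl h0
  · right
    apply (hX.inj hX.sst he h0).cancel
    rw [hee, cc_one]

lemma Stb.brick [IsAlgClosed k] (hX : Stb δ X) : Brick X := by
  by_contra hb
  obtain ⟨f, hf, h0, hff⟩ := exists_nilp_of_not_brick hX.indec hb
  exact h0 ((hX.inj hX.sst hf h0).cancel0 hff)

lemma brick_sst (H : Aff Q δ) {r : ℤ} (hr : 1 ≤ r) (hX : dv X = r • δ) (hb : Brick X) : Sst δ X := by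
  refine ⟨by rw [hX, e_smul_r, H.dd]; simp, fun Y j hj ij => ?_⟩
  by_cases h0 : one Y = 0
  · rw [dv_zero h0, e_zero_r]
  have h1 := ext_le_inj (Z := X) hj ij
  have hj0 : j ≠ 0 := by rintro rfl; apply h0; apply ij.cancel0; simp
  have h2 := hom_pos hj hj0
  have h3 := hom_sub_ext Y X
  have h4 := hom_sub_ext X X
  have h5 : hom X X = 1 := hb
  rw [hX, e_smul_l, e_smul_r, H.dd] at h4
  rw [hX, e_smul_r, H.sym] at h3
  nlinarith

lemma Sst.exists_stb_sub (hX : Sst δ X) (h0 : one X ≠ 0) :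
    ∃ (Y : Rp Q k) (j : C0 Y X), IsHom j ∧ Inj j ∧ Stb δ Y := by
  classical
  have hex : ∃ n, ∃ (Y : Rp Q k) (j : C0 Y X), IsHom j ∧ Inj j ∧ one Y ≠ 0 ∧ Q.eulerForm δ (dv Y) = 0 ∧ td Y = n :=
    ⟨_, X, one X, isHom_one X, Inj.of_left (g := one X) rfl, h0, hX.1, rfl⟩
  obtain ⟨Y, j, hj, ij, hY0, hY, hn⟩ := Nat.find_spec hex
  refine ⟨Y, j, hj, ij, hY0, hY, fun Z i hi ii hZ0 hs => ?_⟩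
  refine lt_of_le_of_ne (hX.2 Z (j ⊚ i) (hj.comp hi) (ij.comp ii)) (fun hZ => hs ?_)
  have := Nat.find_min' hex ⟨Z, j ⊚ i, hj.comp hi, ij.comp ii, hZ0, hZ, rfl⟩
  exact ii.surj_of_td (by omega)

lemma Sst.exists_stb_quot (hX : Sst δ X) (h0 : one X ≠ 0) :
    ∃ (Y : Rp Q k) (p : C0 X Y), IsHom p ∧ Surj p ∧ Stb δ Y := by
  classical
  have hex : ∃ n, ∃ (Y : Rp Q k) (p : C0 X Y), IsHom p ∧ Surj p ∧ one Y ≠ 0 ∧ Q.eulerForm δ (dv Y) = 0 ∧ td Y = n :=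
    ⟨_, X, one X, isHom_one X, Surj.of_right (f := one X) rfl, h0, hX.1, rfl⟩
  obtain ⟨Y, p, hp, sp, hY0, hY, hn⟩ := Nat.find_spec hex
  refine ⟨Y, p, hp, sp, hY0, hY, fun Z i hi ii hZ0 hs => ?_⟩
  obtain ⟨C, S, rfl⟩ := ses_of_inj hi ii
  have h1 := hX.t0 C (S.p ⊚ p) (S.hp.comp hp) (S.surj.comp sp)
  have h2 := S.dv_add
  have h3 := S.td_add
  have hC0 : one C ≠ 0 := by
    intro h; apply hs; apply ii.surj_of_td
    rw [h3, td_eq_zero_iff.mpr h]; omega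
  have hZp := td_pos_iff.mpr hZ0
  have h4 : Q.eulerForm δ (dv C) ≠ 0 := by
    intro h
    have := Nat.find_min' hex ⟨C, S.p ⊚ p, S.hp.comp hp, S.surj.comp sp, hC0, h, rfl⟩
    omega
  rw [h2, e_add_r] at hY
  omega

lemma T0.ker (hA : T0 δ A) (S : SES B A C) (hC : Q.eulerForm δ (dv C) = 0) : T0 δ B := by
  intro Y p hp sp
  obtain ⟨N, S', rfl⟩ := ses_of_surj hp sp
  obtain ⟨P, S'', h⟩ := ses_of_inj (S.hi.comp S'.hi) (S.inj.comp S'.inj)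
  have h1 := hA P S''.p S''.hp S''.surj
  have h2 := S.dv_add
  have h3 := S'.dv_add
  have h4 := S''.dv_add
  rw [h4, h3] at h2
  have h5 : dv P = dv Y + dv C := by
    have : dv N + dv P = dv N + (dv Y + dv C) := by rw [h2]; abel
    exact add_left_cancel this
  rw [h5, e_add_r, hC] at h1
  linarith

variable [IsAlgClosed k]

/-- stable representations of dimension strictly below `δ` are determined by dimension -/
lemma stb_small_q (H : Aff Q δ) (hX : Stb δ X) (h : ∃ i, dv X i < δ i) : Q.eulerForm (dv X) (dv X) = 1 := by
  have h1 := hom_sub_ext X X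
  have h2 : hom X X = 1 := hX.brick
  have h3 := H.psd (dv X)
  have h4 : Q.eulerForm (dv X) (dv X) ≠ 0 := by
    intro h0
    obtain ⟨m, hm⟩ := H.of_q0 h0
    have hm1 := H.mult_pos hm (dv_nonneg X) (dv_ne hX.1)
    obtain ⟨i, hi⟩ := h
    rw [hm] at hi
    simp only [Pi.smul_apply, smul_eq_mul] at hi
    nlinarith [H.pos i]
  omega

def Fam (T : Rp Q k) (z : C1 T T) (t : k) : Prop :=
  Brick (pert T z t) ∧ ∀ f, dd (pert T z t) (pert T z t) f ≠ z

lemma fam_finite (hb : Brick T) (z : C1 T T) (hz : ∀ f, dd T T f ≠ z) : {t | ¬ Fam T z t}.Finite := by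
  let M0 : (C0 T T × k) →ₗ[k] C1 T T := LinearMap.coprod (dd T T) (LinearMap.toSpanSingleton k _ z)
  let M1 : (C0 T T × k) →ₗ[k] C1 T T := LinearMap.coprod (rkW z - lwW z) 0
  have h0 : Module.finrank k (LinearMap.ker M0) ≤ 1 := by
    rw [finrank_le_one_iff]
    refine ⟨⟨(one T, 0), ?_⟩, ?_⟩
    · rw [LinearMap.mem_ker]; simp only [M0, LinearMap.coprod_apply, map_zero, add_zero]; exact isHom_one T
    · rintro ⟨⟨f, c⟩, hfc⟩
      have hfc : dd T T f + c • z = 0 := hfc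
      have hc : c = 0 := by
        by_contra hc
        apply hz (-(c⁻¹ • f))
        rw [map_neg, map_smul, eq_neg_of_add_eq_zero_left hfc, smul_neg, smul_smul, inv_mul_cancel₀ hc, one_smul, neg_neg]
      subst hc
      rw [zero_smul, add_zero] at hfc
      obtain ⟨c, hc⟩ := hb.scalar hfc
      refine ⟨c, Subtype.ext (Prod.ext hc.symm ?_)⟩
      simp
  refine (pencil_ker M0 M1).subset ?_
  intro t ht
  simp only [Set.mem_ofPred_eq] at ht ⊢
  by_contra hle
  apply ht
  rw [not_lt] at hle
  have hle := hle.trans h0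
  have hmem : ∀ (f : C0 T T) (c : k), (f, c) ∈ LinearMap.ker (M0 + t • M1) ↔
      dd (pert T z t) (pert T z t) f + c • z = 0 := by
    intro f c
    rw [LinearMap.mem_ker, dd_pert]
    simp only [M0, M1, LinearMap.add_apply, LinearMap.smul_apply, LinearMap.coprod_apply,
      LinearMap.toSpanSingleton_apply, LinearMap.zero_apply, add_zero]
    rw [add_right_comm]
  have h1 : (one T, (0:k)) ∈ LinearMap.ker (M0 + t • M1) := by
    rw [hmem, zero_smul, add_zero]; exact isHom_one (pert T z t)
  have hne : (⟨_, h1⟩ : LinearMap.ker (M0 + t • M1)) ≠ 0 := by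
    intro h; exact hb.one_ne (congrArg (fun u => u.1.1) h)
  have hfr : Module.finrank k (LinearMap.ker (M0 + t • M1)) = 1 := by
    refine le_antisymm hle ?_
    exact Module.finrank_pos_iff_exists_ne_zero.mpr ⟨_, hne⟩
  have key := (finrank_eq_one_iff_of_nonzero' _ hne).mp hfr
  constructor
  · refine brick_of_scalar (X := pert T z t) hb.one_ne (fun f hf => ?_)
    obtain ⟨c, hc⟩ := key ⟨(f, 0), by rw [hmem, zero_smul, add_zero]; exact hf⟩
    exact ⟨c, (congrArg (fun u => u.1.1) hc).symm⟩
  · intro f hf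
    obtain ⟨c, hc⟩ := key ⟨(f, -1), by rw [hmem, hf]; simp⟩
    have : c * 0 = -1 := congrArg (fun u => u.1.2) hc
    simp at this

lemma fam_sst (H : Aff Q δ) (hT : dv T = δ) {z : C1 T T} {t : k} (h : Fam T z t) : Sst δ (pert T z t) :=
  brick_sst H (r := 1) le_rfl (by rw [one_smul]; exact hT) h.1

lemma fam_hom_finite (H : Aff Q δ) (hT : dv T = δ) (z : C1 T T) (hX : Stb δ X) :
    {t | Fam T z t ∧ hom X (pert T z t) ≠ 0}.Finite := by
  refine (pencil_deriv (dd X T) (rkW z)).subset ?_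
  rintro t ⟨hF, ht⟩
  simp only [Set.mem_ofPred_eq]
  intro hd
  rw [← dd_pert_r] at hd
  obtain ⟨f, hf, hf0⟩ := exists_hom ht
  have hi := hX.inj (fam_sst H hT hF) hf hf0
  obtain ⟨g, hg⟩ := hd f hf
  have hTT : ext (pert T z t) (pert T z t) = 1 := by
    have h1 := hom_sub_ext (pert T z t) (pert T z t)
    have h2 : dv (pert T z t) = δ := hT
    have h3 : hom (pert T z t) (pert T z t) = 1 := hF.1
    rw [h2, H.dd] at h1
    omega
  have hzero : ext X (pert T z t) = 0 := by
    rw [ext_eq_zero_iff]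
    intro w
    obtain ⟨r, hr⟩ := hi.exists_ret
    let mkz : C1 (pert T z t) (pert T z t) ⧸ LinearMap.range (dd (pert T z t) (pert T z t)) := Submodule.Quotient.mk z
    have hne : mkz ≠ 0 := by
      intro h
      obtain ⟨f, hf⟩ := (Submodule.Quotient.mk_eq_zero _).mp h
      exact hF.2 f hf
    obtain ⟨c, hc⟩ := (finrank_eq_one_iff_of_nonzero' _ hne).mp hTT (Submodule.Quotient.mk (rk w r))
    have hc' : (Submodule.Quotient.mk (c • z) : C1 (pert T z t) (pert T z t) ⧸ _) = Submodule.Quotient.mk (rk w r) := hc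
    rw [eq_comm, Submodule.Quotient.eq] at hc'
    obtain ⟨h, hh⟩ := hc'
    refine ⟨h ⊚ f + c • g, ?_⟩
    rw [map_add, map_smul, hg, IsHom.leibR hf, hh, sub_rk, rk_rk, hr, rk_one, smul_rk]
    change w - c • rk z f + c • rk z f = w
    simp
  have h1 := hom_sub_ext X (pert T z t)
  have h2 : dv (pert T z t) = δ := hT
  rw [h2, H.sym, hX.2.1] at h1
  omega

lemma fam_stb_finite (H : Aff Q δ) (hT : dv T = δ) (z : C1 T T) :
    {t | Fam T z t ∧ ¬ Stb δ (pert T z t)}.Finite := by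
  classical
  let Bad : (Q.V → ℤ) → Set k := fun d =>
    if h : ∃ X : Rp Q k, Stb δ X ∧ dv X = d ∧ ∃ i, d i < δ i then {t | Fam T z t ∧ hom h.choose (pert T z t) ≠ 0} else ∅
  have hfin : (⋃ d ∈ Set.Icc (0 : Q.V → ℤ) δ, Bad d).Finite := by
    refine Set.Finite.biUnion (Set.finite_Icc _ _) (fun d _ => ?_)
    simp only [Bad]
    split_ifs with h
    · exact fam_hom_finite H hT z h.choose_spec.1
    · exact Set.finite_empty
  refine hfin.subset ?_
  rintro t ⟨hF, hS⟩
  have hss := fam_sst H hT hF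
  obtain ⟨Y, j, hj, ij, hY⟩ := hss.exists_stb_sub hF.1.one_ne
  have hdT : dv (pert T z t) = δ := hT
  have hle : ∀ i, dv Y i ≤ δ i := fun i => by have := ij.dv_le i; rwa [hdT] at this
  have hsm : ∃ i, dv Y i < δ i := by
    by_contra hn
    push Not at hn
    apply hS
    apply hY.iso
    refine Iso.of_bij hj ij (ij.surj_of_td (td_eq_of_dv ?_).le)
    rw [hdT]; funext i; exact le_antisymm (hn i) (hle i)
  simp only [Set.mem_iUnion]
  refine ⟨dv Y, ⟨fun i => dv_nonneg Y i, hle⟩, ?_⟩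
  have hex : ∃ X : Rp Q k, Stb δ X ∧ dv X = dv Y ∧ ∃ i, dv Y i < δ i := ⟨Y, hY, rfl, hsm⟩
  simp only [Bad]
  rw [dif_pos hex]
  obtain ⟨hc1, hc2, hc3⟩ := hex.choose_spec
  refine ⟨hF, ?_⟩
  have hiso := rigid_unique H (stb_small_q H hY hsm) (Or.inr hsm) hc2 rfl hc1.brick hY.brick
  rw [hiso.hom_left]
  have hj0 : j ≠ 0 := by rintro rfl; apply hY.1; apply ij.cancel0; simp
  have := hom_pos hj hj0
  omega

/-- Existence of a stable of dimension `δ` orthogonal to a given object. -/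
lemma exists_orth (H : Aff Q δ) {A : Rp Q k} (hA : T0 δ A) : ∃ T : Rp Q k, Stb δ T ∧ dv T = δ ∧ hom A T = 0 := by
  obtain ⟨T, hT, hb⟩ := exists_T H k
  have he : ext T T ≠ 0 := by
    have h1 := hom_sub_ext T T
    have h2 : hom T T = 1 := hb
    rw [hT, H.dd] at h1
    omega
  obtain ⟨z, hz⟩ := exists_ext he
  have f1 := fam_finite hb z hz
  have f2 := fam_stb_finite H hT z
  have key : ∀ n, ∀ A : Rp Q k, T0 δ A → td A ≤ n → 
      {t | Fam T z t ∧ Stb δ (pert T z t) ∧ hom A (pert T z t) ≠ 0}.Finite := by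
    intro n
    induction n with
    | zero =>
      intro A hA hn
      convert Set.finite_empty
      ext t
      simp only [Set.mem_ofPred_eq, Set.mem_empty_iff_false, iff_false, not_and, not_not]
      intro _ _
      rw [hom_eq_zero_iff]
      intro f _
      exact zero_of_td_left (by omega) f
    | succ n ih =>
      intro A hA hn
      by_cases hex : ∃ t1, Fam T z t1 ∧ Stb δ (pert T z t1) ∧ hom A (pert T z t1) ≠ 0
      · obtain ⟨t1, h1, h2, h3⟩ := hex
        obtain ⟨f, hf, hf0⟩ := exists_hom h3
        obtain ⟨K, S, -⟩ := ses_of_surj hf (hA.surj h2 hf hf0)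
        have hK := hA.ker S h2.2.1
        have hp := td_pos_iff.mpr h2.1
        have htd := S.td_add
        refine ((ih K hK (by omega)).union (fam_hom_finite H hT z h2)).subset ?_
        rintro t ⟨g1, g2, g3⟩
        by_contra hn
        simp only [Set.mem_union, Set.mem_ofPred_eq, not_or, not_and, not_not] at hn
        exact g3 (S.hom_zero_l (hn.1 g1 g2) (hn.2 g1))
      · convert Set.finite_empty
        ext t
        simp only [Set.mem_ofPred_eq, Set.mem_empty_iff_false, iff_false]
        intro h; exact hex ⟨t, h⟩
  have hk : Infinite k := IsAlgClosed.instInfinite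
  obtain ⟨t, ht⟩ := ((f1.union f2).union (key _ A hA le_rfl)).infinite_compl.nonempty
  simp only [Set.mem_compl_iff, Set.mem_union, Set.mem_ofPred_eq, not_or, not_not, not_and] at ht
  obtain ⟨⟨h1, h2⟩, h3⟩ := ht
  exact ⟨pert T z t, h2 h1, hT, h3 h1 (h2 h1)⟩

end stab
end QR


namespace QR
variable {Q : FinQuiver} {δ : Q.V → ℤ} {k : Type} [Field k]

section serre
variable {E W X Y Z S : Rp Q k}

def IsF (ψ : C1 E Y →ₗ[k] k) : Prop := ∀ f, ψ (dd E Y f) = 0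
def Cof (ψ : C1 E Y →ₗ[k] k) : Prop :=
  ∀ (X : Rp Q k) (h : C0 X Y), IsHom h → (∀ w : C1 E X, ψ (lw h w) = 0) → h = 0

lemma inj_of_mono {f : C0 X Y} (hf : IsHom f) (h : ∀ (K : Rp Q k) (g : C0 K X), IsHom g → f ⊚ g = 0 → g = 0) :
    Inj f := by
  obtain ⟨I, p, j, hp, hj, sp, ij, rfl⟩ := image_factor hf
  obtain ⟨K, S, rfl⟩ := ses_of_surj hp sp
  have h1 : S.i = 0 := h K S.i S.hi (by rw [cc_assoc, S.pi]; simp)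
  have h2 : td K = 0 := by
    rw [td_eq_zero_iff, ← S.ri, h1]; simp
  have h3 := S.td_add
  exact ij.comp (sp.inj_of_td (by omega))

lemma descend (n : ℕ) : ∀ {Y : Rp Q k} (χ : C1 E Y →ₗ[k] k), IsF χ → td Y ≤ n →
    ∃ (Z : Rp Q k) (p : C0 Y Z) (ψ : C1 E Z →ₗ[k] k), IsHom p ∧ Surj p ∧ IsF ψ ∧ Cof ψ ∧ ∀ w, χ w = ψ (lw p w) := by
  induction n with
  | zero =>
    intro Y χ hχ hn
    refine ⟨Y, one Y, χ, isHom_one Y, Surj.of_right (cc_one _), hχ, ?_, fun w => by rw [lw_one]⟩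
    intro X h _ _
    exact zero_of_td_right (by omega) h
  | succ n ih =>
    intro Y χ hχ hn
    by_cases hc : Cof χ
    · exact ⟨Y, one Y, χ, isHom_one Y, Surj.of_right (cc_one _), hχ, hc, fun w => by rw [lw_one]⟩
    unfold Cof at hc
    push Not at hc
    obtain ⟨X, h, hh, hw, h0⟩ := hc
    obtain ⟨I, q, j, hq, hj, sq, ij, rfl⟩ := image_factor hh
    have hj0 : j ≠ 0 := by rintro rfl; apply h0; simp
    have hI : td I ≠ 0 := fun h => hj0 (zero_of_td_left h j)
    obtain ⟨Z, S, rfl⟩ := ses_of_inj hj ij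
    obtain ⟨g, hg⟩ := sq.exists_sec
    have hk : ∀ w, χ (lw S.i w) = 0 := by
      intro w
      have := hw (lw g w)
      rw [lw_lw, cc_assoc, hg, cc_one] at this
      exact this
    have hdesc : ∀ w, χ w = χ (lw S.s (lw S.p w)) := by
      intro w
      have h1 := congrArg (fun u => χ (lw u w)) S.sum
      simp only [add_lw, map_add, lw_one] at h1
      rw [← h1, ← lw_lw, hk, zero_add, lw_lw]
    have hF : IsF (χ ∘ₗ lwL S.s : C1 E Z →ₗ[k] k) := by
      intro f
      change χ (lw S.s (dd E Z f)) = 0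
      have h1 := hχ (S.s ⊚ f)
      rw [leib, map_add, ← S.iz, ← lw_rk, hk] at h1
      simpa using h1
    have := S.td_add
    obtain ⟨Z', p, ψ, hp, sp, hψ, hc, hw'⟩ := ih _ hF (by omega)
    refine ⟨Z', p ⊚ S.p, ψ, hp.comp S.hp, sp.comp S.surj, hψ, hc, fun w => ?_⟩
    rw [hdesc, ← lw_lw, ← hw']; rfl

def pairF (ψ : C1 E Y →ₗ[k] k) (hψ : IsF ψ) (X : Rp Q k) :
    LinearMap.ker (dd X Y) →ₗ[k] (LinearMap.range (dd E X)).dualAnnihilator where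
  toFun h := ⟨ψ ∘ₗ lwL h.1, by
    rw [Submodule.mem_dualAnnihilator]
    rintro _ ⟨f, rfl⟩
    have h2 : IsHom h.1 := h.2
    change ψ (lw h.1 (dd E X f)) = 0
    rw [← h2.leibL]; exact hψ _⟩
  map_add' h h' := by
    apply Subtype.ext; apply LinearMap.ext; intro w
    change ψ (lw (h.1 + h'.1) w) = ψ (lw h.1 w) + ψ (lw h'.1 w)
    rw [add_lw, map_add]
  map_smul' c h := by
    apply Subtype.ext; apply LinearMap.ext; intro w
    change ψ (lw (c • h.1) w) = c • ψ (lw h.1 w)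
    rw [smul_lw, map_smul]

lemma finrank_dualAnn (E X : Rp Q k) :
    Module.finrank k (LinearMap.range (dd E X)).dualAnnihilator = ext E X := by
  rw [← (Submodule.dualQuotEquivDualAnnihilator (LinearMap.range (dd E X))).finrank_eq]
  exact Subspace.dual_finrank_eq

lemma pairF_inj {ψ : C1 E Y →ₗ[k] k} (hψ : IsF ψ) (hc : Cof ψ) (X : Rp Q k) : Function.Injective (pairF ψ hψ X) := by
  rw [injective_iff_map_eq_zero]
  intro h hh
  apply Subtype.ext
  exact hc X h.1 h.2 (fun w => congrArg (fun u => u.1 w) hh)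

lemma cof_hom_le {ψ : C1 E Y →ₗ[k] k} (hψ : IsF ψ) (hc : Cof ψ) (X : Rp Q k) : hom X Y ≤ ext E X := by
  rw [← finrank_dualAnn]
  exact LinearMap.finrank_le_finrank_of_injective (pairF_inj hψ hc X)

lemma exists_max {P : ℕ → Prop} {B : ℕ} (h : ∃ n, P n) (hB : ∀ n, P n → n ≤ B) : ∃ n, P n ∧ ∀ m, P m → m ≤ n := by
  classical
  obtain ⟨n, hn⟩ := h
  exact ⟨Nat.findGreatest P B, Nat.findGreatest_spec (hB n hn) hn, fun m hm => Nat.le_findGreatest (hB m hm) hm⟩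

lemma exists_total (H : Aff Q δ) (k : Type) [Field k] :
    ∃ X : Rp Q k, ∀ Y : Rp Q k, td Y ≤ hom X Y := by
  choose p hp hp' using H.pex
  obtain ⟨X, hX⟩ := exists_rep k (α := ∑ j, p j) (fun i => by
    rw [Finset.sum_apply]; exact Finset.sum_nonneg (fun j _ => hp j i))
  refine ⟨X, fun Y => ?_⟩
  have h := hom_sub_ext X Y
  rw [hX, e_sum_l] at h
  simp only [hp'] at h
  rw [← td_eq] at h
  omega

lemma serre_obj (H : Aff Q δ) (E : Rp Q k) : ∃ (W : Rp Q k) (ψ : C1 E W →ₗ[k] k), IsF ψ ∧ Cof ψ ∧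
    ∀ (Y : Rp Q k) (η : C1 E Y →ₗ[k] k), IsF η → ∃ h : C0 Y W, IsHom h ∧ ∀ w, η w = ψ (lw h w) := by
  obtain ⟨X, hX⟩ := exists_total H k
  obtain ⟨n, ⟨W, ψ, hψ, hc, hn⟩, hmax⟩ := exists_max (P := fun n => ∃ (W : Rp Q k) (ψ : C1 E W →ₗ[k] k), IsF ψ ∧ Cof ψ ∧ td W = n)
    (B := ext E X) (by
      obtain ⟨Z, p, ψ, -, -, h1, h2, -⟩ := descend (E := E) (td E) (0 : C1 E E →ₗ[k] k) (fun _ => rfl) le_rfl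
      exact ⟨_, Z, ψ, h1, h2, rfl⟩) (by
      rintro n ⟨W, ψ, h1, h2, rfl⟩
      exact (hX W).trans (cof_hom_le h1 h2 X))
  refine ⟨W, ψ, hψ, hc, fun Y η hη => ?_⟩
  let B := extRep W Y 0
  let S : SES W B Y := extSES W Y 0
  have hz : S.z = 0 := extSES_z W Y 0
  have hs : IsHom S.s := by unfold IsHom; rw [← S.iz, hz]; simp
  have hr : IsHom S.r := by
    have := S.zp; rw [hz, zero_rk, eq_comm, neg_eq_zero] at this; exact this
  let χ : C1 E B →ₗ[k] k := ψ ∘ₗ lwL S.r + η ∘ₗ lwL S.p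
  have hχ : ∀ w, χ w = ψ (lw S.r w) + η (lw S.p w) := fun w => rfl
  have hF : IsF χ := by
    intro f
    rw [hχ, ← hr.leibL, ← S.hp.leibL, hψ, hη, add_zero]
  obtain ⟨Z, q, φ, hq, sq, hφ, hcφ, hd⟩ := descend (td B) χ hF le_rfl
  have hχi : ∀ w, χ (lw S.i w) = ψ w := by
    intro w; rw [hχ, lw_lw, lw_lw, S.ri, S.pi]; simp
  have hχs : ∀ w, χ (lw S.s w) = η w := by
    intro w; rw [hχ, lw_lw, lw_lw, S.rs, S.ps]; simp
  have hqi : Inj (q ⊚ S.i) := by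
    refine inj_of_mono (hq.comp S.hi) (fun K g hg hg0 => hc K g hg (fun w => ?_))
    rw [← hχi, hd, lw_lw, lw_lw, hg0]; simp
  have hle := hmax _ ⟨Z, φ, hφ, hcφ, rfl⟩
  have hsj := hqi.surj_of_td (by omega)
  obtain ⟨g, hg, hg1, hg2⟩ := exists_inv (hq.comp S.hi) hqi hsj
  have hg3 : (q ⊚ S.i) ⊚ g = one Z := hg2
  refine ⟨g ⊚ q ⊚ S.s, hg.comp (hq.comp hs), fun w => ?_⟩
  rw [← hχs, ← hχi, hd, hd, lw_lw, lw_lw, lw_lw, ← cc_assoc, ← cc_assoc, hg3, one_cc]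

lemma serre_ext_le {ψ : C1 E W →ₗ[k] k} (hψ : IsF ψ) (hc : Cof ψ)
    (hu : ∀ (Y : Rp Q k) (η : C1 E Y →ₗ[k] k), IsF η → ∃ h : C0 Y W, IsHom h ∧ ∀ w, η w = ψ (lw h w))
    (S : Rp Q k) : ext S W ≤ hom E S := by
  let F : C1 S W →ₗ[k] Module.Dual k (LinearMap.ker (dd E S)) :=
    { toFun := fun ξ =>
        { toFun := fun g => ψ (rk ξ g.1)
          map_add' := fun g g' => by
            change ψ (rk ξ (g.1 + g'.1)) = _
            rw [rk_add, map_add]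
          map_smul' := fun c g => by
            change ψ (rk ξ (c • g.1)) = _
            rw [rk_smul, map_smul]; rfl }
      map_add' := fun ξ ξ' => by
        apply LinearMap.ext; intro g
        change ψ (rk (ξ + ξ') g.1) = ψ (rk ξ g.1) + ψ (rk ξ' g.1)
        rw [add_rk, map_add]
      map_smul' := fun c ξ => by
        apply LinearMap.ext; intro g
        change ψ (rk (c • ξ) g.1) = c • ψ (rk ξ g.1)
        rw [smul_rk, map_smul] }
  have hker : LinearMap.ker F ≤ LinearMap.range (dd S W) := by
    intro ξ hξ
    have hξ' : ∀ g : C0 E S, IsHom g → ψ (rk ξ g) = 0 := fun g hg => congrArg (fun u => u ⟨g, hg⟩) hξ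
    let B := extRep W S ξ
    let T : SES W B S := extSES W S ξ
    have hz : T.z = ξ := extSES_z W S ξ
    let L : C1 E W →ₗ[k] (C1 E B ⧸ LinearMap.range (dd E B)) := (LinearMap.range (dd E B)).mkQ ∘ₗ lwL T.i
    have hm : (ψ : Module.Dual k (C1 E W)) ∈ LinearMap.range L.dualMap := by
      rw [LinearMap.range_dualMap_eq_dualAnnihilator_ker, Submodule.mem_dualAnnihilator]
      intro w hw
      have hw' : lw T.i w ∈ LinearMap.range (dd E B) := (Submodule.Quotient.mk_eq_zero _).mp hw
      obtain ⟨h, hh⟩ := hw'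
      obtain ⟨h1, h2⟩ := T.conn hh
      rw [h2, map_add, hψ, hz, hξ' _ h1, add_zero]
    obtain ⟨χ', hχ'⟩ := hm
    have hχ2 : ∀ w, χ' (Submodule.Quotient.mk (lw T.i w)) = ψ w := fun w => congrArg (fun u => u w) hχ'
    let χ : C1 E B →ₗ[k] k := χ' ∘ₗ (LinearMap.range (dd E B)).mkQ
    have hχF : IsF χ := by
      intro f
      change χ' (Submodule.Quotient.mk (dd E B f)) = 0
      rw [(Submodule.Quotient.mk_eq_zero (LinearMap.range (dd E B))).mpr (LinearMap.mem_range_self (dd E B) f), map_zero]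
    obtain ⟨h, hh, hw⟩ := hu B χ hχF
    have h1 : h ⊚ T.i - one W = 0 := by
      refine hc W _ ((hh.comp T.hi).sub (isHom_one W)) (fun w => ?_)
      rw [sub_lw, map_sub, lw_one, ← lw_lw, ← hw, ← hχ2]
      exact sub_self _
    have h2 := T.extend_conv hh
    rw [sub_eq_zero.mp h1, lw_one, hz] at h2
    exact ⟨_, h2⟩
  have h1 := Submodule.finrank_quotient_add_finrank (LinearMap.range (dd S W))
  have h2 := Submodule.finrank_mono hker
  have h3 := LinearMap.finrank_range_add_finrank_ker F
  have h4 := Submodule.finrank_le (LinearMap.range F)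
  rw [Subspace.dual_finrank_eq] at h4
  change Module.finrank k (C1 S W ⧸ LinearMap.range (dd S W)) ≤ Module.finrank k (LinearMap.ker (dd E S))
  omega

lemma serre (H : Aff Q δ) (E : Rp Q k) : ∃ W : Rp Q k, (∀ Y, hom Y W = ext E Y) ∧ (∀ S, ext S W ≤ hom E S) := by
  obtain ⟨W, ψ, hψ, hc, hu⟩ := serre_obj H E
  refine ⟨W, fun Y => ?_, serre_ext_le hψ hc hu⟩
  apply le_antisymm (cof_hom_le hψ hc Y)
  rw [← finrank_dualAnn]
  apply LinearMap.finrank_le_finrank_of_surjective (f := pairF ψ hψ Y)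
  intro η
  obtain ⟨h, hh, hw⟩ := hu Y η.1 (fun f => (Submodule.mem_dualAnnihilator _).mp η.2 _ ⟨f, rfl⟩)
  refine ⟨⟨h, hh⟩, ?_⟩
  apply Subtype.ext; apply LinearMap.ext; intro w
  exact (hw w).symm

lemma serre_zero (H : Aff Q δ) {E T : Rp Q k} (hE : Q.eulerForm δ (dv E) = 0) (hT : dv T = δ) (hET : hom E T = 0) :
    ∃ W : Rp Q k, (∀ Y, hom Y W = ext E Y) ∧ (∀ S, ext S W = hom E S) ∧ Q.eulerForm δ (dv W) = 0 ∧
      ∀ x, (∀ i, 0 ≤ x i) → Q.eulerForm x (dv W) = - Q.eulerForm (dv E) x := by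
  obtain ⟨W, h1, h2⟩ := serre H E
  have hv : ∀ X : Rp Q k, Q.eulerForm (dv X) (dv W) + Q.eulerForm (dv E) (dv X) = hom E X - ext X W := by
    intro X
    rw [← hom_sub_ext, ← hom_sub_ext, h1 X]; ring
  let v : (Q.V → ℤ) → ℤ := fun x => Q.eulerForm x (dv W) + Q.eulerForm (dv E) x
  have vadd : ∀ x y, v (x + y) = v x + v y := fun x y => by simp only [v, e_add_l, e_add_r]; ring
  have vsmul : ∀ (c : ℤ) x, v (c • x) = c * v x := fun c x => by simp only [v, e_smul_l, e_smul_r]; ring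
  have vnn : ∀ x, (∀ i, 0 ≤ x i) → 0 ≤ v x := by
    intro x hx
    obtain ⟨X, rfl⟩ := exists_rep k hx
    have := hv X
    have := h2 X
    simp only [v]; omega
  have hδ : v δ ≤ 0 := by
    have := hv T
    rw [hT, hET] at this
    simp only [v]; omega
  have vz : ∀ x, (∀ i, 0 ≤ x i) → v x = 0 := by
    intro x hx
    have hN : ∀ i, 0 ≤ ((∑ j, x j) • δ - x) i := by
      intro i
      have a1 := Finset.single_le_sum (f := x) (fun j _ => hx j) (Finset.mem_univ i)
      have a2 := H.pos i
      simp only [Pi.sub_apply, Pi.smul_apply, smul_eq_mul]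
      nlinarith [hx i]
    have b1 := vnn _ hN
    have b2 := vnn _ hx
    have b3 := vadd ((∑ j, x j) • δ - x) x
    rw [sub_add_cancel, vsmul] at b3
    have b4 : 0 ≤ ∑ j, x j := Finset.sum_nonneg (fun j _ => hx j)
    nlinarith
  refine ⟨W, h1, fun S => ?_, ?_, fun x hx => ?_⟩
  · have := hv S
    have h3 := vz _ (dv_nonneg S)
    simp only [v] at h3
    omega
  · have h3 := vz δ (fun i => (H.pos i).le)
    simp only [v] at h3
    rw [H.sym, hE] at h3
    omega
  · have h3 := vz x hx
    simp only [v] at h3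
    omega

lemma serre_T [IsAlgClosed k] (H : Aff Q δ) {T : Rp Q k} (hT : Stb δ T) (hd : dv T = δ) (A : Rp Q k) : ext T A = hom A T := by
  obtain ⟨T', -, h2, h3⟩ := exists_orth H hT.sst.t0
  obtain ⟨W, w1, w2, w3, w4⟩ := serre_zero H hT.2.1 h2 h3
  have hw : dv W = δ := by
    apply H.nondeg
    intro z hz
    rw [w4 z hz, hd, H.sym]
  have hb : hom T T = 1 := hT.brick
  have hTT := hom_sub_ext T T
  rw [hd, H.dd] at hTT
  have hW : Sst δ W := by
    apply brick_sst H le_rfl (r := 1) (by rw [hw, one_smul])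
    change hom W W = 1
    rw [w1, w2, hb]
  obtain ⟨f, hf, hf0⟩ := exists_hom (X := T) (Y := W) (by rw [w1]; omega)
  have hi := hT.inj hW hf hf0
  have hs := hi.surj_of_td (td_eq_of_dv (hw.trans hd.symm)).le
  rw [(Iso.of_bij hf hi hs).hom_right, w1]

end serre
end QR


namespace QR
variable {Q : FinQuiver} {δ : Q.V → ℤ} {k : Type} [Field k]

section split
variable {A B C X Y Z T : Rp Q k}

/-- all nonzero subs have negative defect -/
def Neg (δ : Q.V → ℤ) (X : Rp Q k) : Prop :=
  ∀ (Y : Rp Q k) (j : C0 Y X), IsHom j → Inj j → one Y ≠ 0 → Q.eulerForm δ (dv Y) < 0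

lemma ext_zero_of_td (h : td B = 0) : ext B A = 0 := by
  rw [ext_eq_zero_iff]
  intro z
  refine ⟨0, ?_⟩
  rw [← rk_one z, td_eq_zero_iff.mp h]; simp

lemma inj_one (X : Rp Q k) : Inj (one X) := Inj.of_left (cc_one _)
lemma surj_one (X : Rp Q k) : Surj (one X) := Surj.of_right (cc_one _)

lemma ext_neg_aux [IsAlgClosed k] (H : Aff Q δ) (hT : Stb δ T) (hd : dv T = δ) (hA : hom A T = 0) (n : ℕ) :
    ∀ {B : Rp Q k}, Neg δ B → td B ≤ n → ext B A = 0 := by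
  induction n with
  | zero => intro B _ h; exact ext_zero_of_td (by omega)
  | succ n ih =>
    intro B hB hn
    by_cases h0 : one B = 0
    · exact ext_zero_of_td (td_eq_zero_iff.mpr h0)
    have hneg := hB B (one B) (isHom_one B) (inj_one B) h0
    have h1 := hom_sub_ext B T
    rw [hd, H.sym] at h1
    obtain ⟨g, hg, hg0⟩ := exists_hom (X := B) (Y := T) (by omega)
    obtain ⟨I, p, j, hp, hj, sp, ij, rfl⟩ := image_factor hg
    have hI : td I ≠ 0 := fun h => hg0 (by rw [zero_of_td_left h j]; simp)
    obtain ⟨K, S, rfl⟩ := ses_of_surj hp sp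
    have h2 := ext_le_inj (Z := A) hj ij
    rw [serre_T H hT hd, hA] at h2
    have h3 := S.td_add
    refine S.ext_zero_l (ih ?_ (by omega)) (by omega)
    intro Y u hu iu
    exact hB Y (S.i ⊚ u) (S.hi.comp hu) (S.inj.comp iu)

lemma ext_neg [IsAlgClosed k] (H : Aff Q δ) (hA : T0 δ A) (hB : Neg δ B) : ext B A = 0 := by
  obtain ⟨T, h1, h2, h3⟩ := exists_orth H hA
  exact ext_neg_aux H h1 h2 h3 _ hB le_rfl

lemma split_of_ext (S : SES A B C) (h : ext C A = 0) : ∃ G : C0 C B, IsHom G ∧ S.p ⊚ G = one C := by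
  obtain ⟨f, hf⟩ := ext_eq_zero_iff.mp h S.z
  exact S.lift (isHom_one C) (h := f) (by rw [rk_one, hf])

lemma zero_of_split (hB : Indec B) (S : SES A B C) {G : C0 C B} (hG : IsHom G) (h : S.p ⊚ G = one C) :
    one A = 0 ∨ one C = 0 := by
  by_cases h0 : one C = 0
  · exact Or.inr h0
  left
  have h1 := indec_smd hB hG S.hp h h0
  have h2 : S.i = 0 := by
    rw [← one_cc S.i, ← h1, cc_assoc, S.pi]; simp
  rw [← S.ri, h2]; simp

lemma indec_cases [IsAlgClosed k] (H : Aff Q δ) (hX : Indec X) (hd : Q.eulerForm δ (dv X) ≤ 0) : Neg δ X ∨ Sst δ X := by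
  classical
  let D : Set (Q.V → ℤ) := {d | ∃ (Y : Rp Q k) (j : C0 Y X), IsHom j ∧ Inj j ∧ dv Y = d}
  have hfin : D.Finite := by
    refine (Set.finite_Icc (0 : Q.V → ℤ) (dv X)).subset ?_
    rintro d ⟨Y, j, -, ij, rfl⟩
    exact ⟨fun i => dv_nonneg Y i, fun i => ij.dv_le i⟩
  have h0 : (0 : Q.V → ℤ) ∈ D := by
    obtain ⟨Y, hY⟩ := exists_rep k (α := (0 : Q.V → ℤ)) (fun i => le_rfl)
    have : td Y = 0 := td_eq_zero_iff_dv.mpr hY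
    refine ⟨Y, 0, isHom_zero, Inj.of_left (g := 0) ?_, hY⟩
    rw [td_eq_zero_iff.mp this]; simp
  obtain ⟨d, hdD, hdmax⟩ := Set.exists_max_image D (fun d => Q.eulerForm δ d) hfin ⟨0, h0⟩
  let D' := {x ∈ D | Q.eulerForm δ x = Q.eulerForm δ d}
  obtain ⟨d', hd'D, hd'max⟩ := Set.exists_max_image D' (fun d => ∑ i, d i) (hfin.subset (fun x hx => hx.1)) ⟨d, hdD, rfl⟩
  obtain ⟨⟨X', j, hj, ij, rfl⟩, hd'⟩ := hd'D
  set M := Q.eulerForm δ d with hM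
  have hM0 : 0 ≤ M := by have := hdmax 0 h0; simp only [e_zero_r] at this; exact this
  have hle : ∀ (Y : Rp Q k) (j : C0 Y X), IsHom j → Inj j → Q.eulerForm δ (dv Y) ≤ M :=
    fun Y j hj ij => hdmax _ ⟨Y, j, hj, ij, rfl⟩
  have hle' : ∀ (Y : Rp Q k) (j : C0 Y X), IsHom j → Inj j → Q.eulerForm δ (dv Y) = M → td Y ≤ td X' := by
    intro Y j hj ij h
    have := hd'max (dv Y) ⟨⟨Y, j, hj, ij, rfl⟩, h⟩
    zify; rw [td_eq, td_eq]; exact this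
  obtain ⟨C, S, rfl⟩ := ses_of_inj hj ij
  have hT0 : T0 δ X' := by
    intro Y p hp sp
    obtain ⟨K, S', rfl⟩ := ses_of_surj hp sp
    have h1 := hle K (S.i ⊚ S'.i) (S.hi.comp S'.hi) (S.inj.comp S'.inj)
    have h2 := S'.dv_add
    rw [h2, e_add_r] at hd'
    omega
  have hN : Neg δ C := by
    intro Y u hu iu hY
    obtain ⟨F, S1, rfl⟩ := ses_of_inj hu iu
    obtain ⟨P, S2, hS2⟩ := ses_of_surj (S1.hp.comp S.hp) (S1.surj.comp S.surj)
    have e1 := S.dv_add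
    have e2 := S1.dv_add
    have e3 := S2.dv_add
    have e4 : dv P = dv X' + dv Y := by
      have : dv P + dv F = dv X' + dv Y + dv F := by rw [← e3, e1, e2]; abel
      exact add_right_cancel this
    have t1 := S.td_add
    have t2 := S1.td_add
    have t3 := S2.td_add
    have tY := td_pos_iff.mpr hY
    by_contra hc
    have h1 := hle P S2.i S2.hi S2.inj
    have h2 : Q.eulerForm δ (dv P) = M := by
      rw [e4, e_add_r] at h1 ⊢; omega
    have h3 := hle' P S2.i S2.hi S2.inj h2
    omega
  obtain ⟨G, hG, hpG⟩ := split_of_ext S (ext_neg H hT0 hN)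
  rcases zero_of_split hX S hG hpG with h | h
  · left
    intro Y u hu iu hY
    have hz := dv_zero h
    rw [hz, e_zero_r] at hd'
    have h1 := hle Y u hu iu
    by_contra hc
    have h2 := hle' Y u hu iu (by omega)
    have h3 := td_pos_iff.mpr hY
    have h4 := td_eq_zero_iff.mpr h
    omega
  · right
    have e1 := S.dv_add
    rw [dv_zero h, add_zero] at e1
    rw [← e1] at hd'
    refine ⟨by omega, fun Y u hu iu => ?_⟩
    have := hle Y u hu iu
    omega

lemma indec_sst [IsAlgClosed k] (H : Aff Q δ) (hX : Indec X) (hd : Q.eulerForm δ (dv X) = 0) : Sst δ X := by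
  rcases indec_cases H hX hd.le with h | h
  · have := h X (one X) (isHom_one X) (inj_one X) hX.1
    omega
  · exact h

lemma indec_neg_brick [IsAlgClosed k] (H : Aff Q δ) (hX : Indec X) (hd : Q.eulerForm δ (dv X) < 0) : Brick X := by
  by_contra hb
  obtain ⟨U, j, hU, hj, ij, r, -, hr⟩ := imag_sub H hX hb
  rcases indec_cases H hX hd.le with h | h
  · have := h U j hj ij hU.one_ne
    rw [hr, e_smul_r, H.dd] at this
    omega
  · have := h.1
    omega

lemma unique_neg [IsAlgClosed k] (H : Aff Q δ) {α : Q.V → ℤ} (hq : Q.eulerForm α α = 1) (hd : Q.eulerForm δ α < 0)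
    (hX : dv X = α) (hY : dv Y = α) (iX : Indec X) (iY : Indec Y) : Iso X Y :=
  rigid_unique H hq (Or.inl hd.ne) hX hY (indec_neg_brick H iX (by rw [hX]; exact hd))
    (indec_neg_brick H iY (by rw [hY]; exact hd))

end split
end QR


namespace QR
variable {Q : FinQuiver} {δ : Q.V → ℤ} {k : Type} [Field k]

section reg
variable {A B C D E F G K W X Y Z T : Rp Q k}

/-- the class of a cochain is nonzero -/
def Nsp (z : C1 X Y) : Prop := ∀ f, dd X Y f ≠ z

lemma Nsp.ext_ne {z : C1 X Y} (h : Nsp z) : ext X Y ≠ 0 := by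
  intro h0
  obtain ⟨f, hf⟩ := ext_eq_zero_iff.mp h0 z
  exact h f hf

lemma Nsp.span {z : C1 X Y} (h : Nsp z) (h1 : ext X Y = 1) (w : C1 X Y) : ∃ (c : k) (f : C0 X Y), w = c • z + dd X Y f := by
  let mk := (LinearMap.range (dd X Y)).mkQ
  have hz : mk z ≠ 0 := by
    intro h0
    obtain ⟨f, hf⟩ := (Submodule.Quotient.mk_eq_zero _).mp h0
    exact h f hf
  obtain ⟨c, hc⟩ := (finrank_eq_one_iff_of_nonzero' (mk z) hz).mp h1 (mk w)
  have h3 : mk (w - c • z) = 0 := by rw [map_sub, map_smul, hc, sub_self]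
  obtain ⟨f, hf⟩ := (Submodule.Quotient.mk_eq_zero _).mp h3
  exact ⟨c, f, by rw [hf]; abel⟩

lemma Nsp.push {z : C1 X Y} (h : Nsp z) (h1 : ext X Y = 1) {q : C0 Y Z} (hq : IsHom q) (sq : Surj q)
    (h2 : ext X Z ≠ 0) : Nsp (lw q z) := by
  intro f hf
  apply h2
  rw [ext_eq_zero_iff]
  intro w
  obtain ⟨t, ht⟩ := sq.exists_sec
  obtain ⟨c, g, hg⟩ := h.span h1 (lw t w)
  refine ⟨c • f + q ⊚ g, ?_⟩
  rw [map_add, map_smul, hf, hq.leibL, ← lw_smul, ← lw_add, ← hg, lw_lw, ht, lw_one]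

lemma Sst.ker (hX : Sst δ X) (S : SES A X C) (hC : Q.eulerForm δ (dv C) = 0) : Sst δ A := by
  have h1 := S.dv_add
  have h2 := hX.1
  rw [h1, e_add_r, hC, add_zero] at h2
  exact ⟨h2, fun Y j hj ij => hX.2 Y (S.i ⊚ j) (S.hi.comp hj) (S.inj.comp ij)⟩

lemma pullback (S : SES A X C) (S1 : SES Y C F) : ∃ (P : Rp Q k) (S2 : SES P X F), dv P = dv A + dv Y := by
  obtain ⟨P, S2, hS2⟩ := ses_of_surj (S1.hp.comp S.hp) (S1.surj.comp S.surj)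
  refine ⟨P, S2, ?_⟩
  have : dv P + dv F = dv A + dv Y + dv F := by rw [← S2.dv_add, S.dv_add, S1.dv_add]; abel
  exact add_right_cancel this

lemma Sst.quot (hX : Sst δ X) (S : SES A X C) (hA : Q.eulerForm δ (dv A) = 0) : Sst δ C := by
  have h1 := S.dv_add
  have h2 := hX.1
  rw [h1, e_add_r, hA, zero_add] at h2
  refine ⟨h2, fun Y j hj ij => ?_⟩
  obtain ⟨F, S1, rfl⟩ := ses_of_inj hj ij
  obtain ⟨P, S2, hP⟩ := pullback S S1
  have := hX.2 P S2.i S2.hi S2.inj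
  rw [hP, e_add_r, hA] at this
  omega

lemma Sst.extn (S : SES A X C) (hA : Sst δ A) (hC : Sst δ C) : Sst δ X := by
  refine ⟨by rw [S.dv_add, e_add_r, hA.1, hC.1, add_zero], fun Y j hj ij => ?_⟩
  obtain ⟨I, p, u, hp, hu, sp, iu, hup⟩ := image_factor (S.hp.comp hj)
  obtain ⟨N, S1, rfl⟩ := ses_of_surj hp sp
  have h0 : S.p ⊚ (j ⊚ S1.i) = 0 := by
    rw [← cc_assoc, ← hup, cc_assoc, S1.pi]; simp
  obtain ⟨h1, h2⟩ := S.factor_i (hj.comp S1.hi) h0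
  have h3 : Inj (S.r ⊚ j ⊚ S1.i) := by
    have : Inj (S.i ⊚ S.r ⊚ j ⊚ S1.i) := by rw [h2]; exact ij.comp S1.inj
    exact this.of_comp
  have h4 := hA.2 N _ h1 h3
  have h5 := hC.2 I u hu iu
  rw [S1.dv_add, e_add_r]
  omega

lemma Sst.smd (hX : Sst δ X) {i : C0 D X} {r : C0 X D} (hi : IsHom i) (hr : IsHom r) (h : r ⊚ i = one D) : Sst δ D := by
  have ii := Inj.of_left h
  have sr := Surj.of_right h
  have h1 := hX.2 D i hi ii
  have h2 := hX.t0 D r hr sr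
  exact ⟨by omega, fun Y j hj ij => hX.2 Y (i ⊚ j) (hi.comp hj) (ii.comp ij)⟩

/-- induction over filtration by stables -/
lemma Sst.induct {P : Rp Q k → Prop} (h0 : ∀ X, one X = 0 → P X)
    (h1 : ∀ {A X C : Rp Q k}, SES A X C → Stb δ A → P C → P X) (n : ℕ) : ∀ {X : Rp Q k}, Sst δ X → td X ≤ n → P X := by
  induction n with
  | zero => intro X _ h; exact h0 X (td_eq_zero_iff.mp (by omega))
  | succ n ih =>
    intro X hX hn
    by_cases hz : one X = 0
    · exact h0 X hz
    obtain ⟨Y, j, hj, ij, hY⟩ := hX.exists_stb_sub hz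
    obtain ⟨C, S, rfl⟩ := ses_of_inj hj ij
    have h2 := S.td_add
    have h3 := td_pos_iff.mpr hY.1
    exact h1 S hY (ih (hX.quot S hY.2.1) (by omega))

lemma Sst.ext_zero (h : ∀ Y : Rp Q k, Stb δ Y → ext Y G = 0) (hX : Sst δ X) : ext X G = 0 := by
  refine Sst.induct (P := fun X => ext X G = 0) (fun X hX => ext_zero_of_td (td_eq_zero_iff.mpr hX)) ?_ _ hX le_rfl
  intro A X C S hA hC
  exact S.ext_zero_l (h A hA) hC

lemma Sst.e_zero {x : Q.V → ℤ} (h : ∀ Y : Rp Q k, Stb δ Y → Q.eulerForm x (dv Y) = 0) (hX : Sst δ X) :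
    Q.eulerForm x (dv X) = 0 := by
  refine Sst.induct (P := fun X => Q.eulerForm x (dv X) = 0) (fun X hX => by rw [dv_zero hX, e_zero_r]) ?_ _ hX le_rfl
  intro A X C S hA hC
  rw [S.dv_add, e_add_r, h A hA, hC, add_zero]

lemma norm_root (H : Aff Q δ) (x : Q.V → ℤ) : ∃ m : ℤ, (∀ i, 0 ≤ (x + m • δ) i) ∧ ∃ i, (x + m • δ) i < δ i := by
  have i0 := H.ne.some
  obtain ⟨m, hm, hmin⟩ := Int.exists_least_of_bdd (P := fun m : ℤ => ∀ i, 0 ≤ (x + m • δ) i) (by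
    refine ⟨- |x i0|, fun z hz => ?_⟩
    have h1 := hz i0
    simp only [Pi.add_apply, Pi.smul_apply, smul_eq_mul] at h1
    have h2 := H.pos i0
    have h3 := le_abs_self (x i0)
    have h4 := abs_nonneg (x i0)
    by_contra hc
    nlinarith) (by
    refine ⟨∑ j, |x j|, fun i => ?_⟩
    have h1 := Finset.single_le_sum (f := fun j => |x j|) (fun j _ => abs_nonneg _) (Finset.mem_univ i)
    have h2 := H.pos i
    have h3 := neg_abs_le (x i)
    have h4 := abs_nonneg (x i)
    simp only [Pi.add_apply, Pi.smul_apply, smul_eq_mul] at h1 ⊢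
    nlinarith)
  refine ⟨m, hm, ?_⟩
  by_contra hc
  push Not at hc
  have := hmin (m - 1) (fun i => by
    have := hc i
    simp only [Pi.add_apply, Pi.smul_apply, smul_eq_mul] at this ⊢
    linarith)
  omega

/-- Auslander-Reiten translate, as a relation -/
def Tau (δ : Q.V → ℤ) (E W : Rp Q k) : Prop :=
  Stb δ W ∧ (∀ X, hom X W = ext E X) ∧ ∀ X, ext X W = hom E X

lemma Tau.iso_r (h : Tau δ E W) (hi : Iso W Z) : Tau δ E Z :=
  ⟨h.1.iso hi, fun X => by rw [← h.2.1, hi.hom_right], fun X => by rw [← h.2.2, hi.ext_right]⟩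

variable [IsAlgClosed k]

lemma stb_hom_self (hX : Stb δ X) (hY : Stb δ Y) (h : Iso X Y) : hom X Y = 1 := by
  rw [← h.hom_right]; exact hX.brick

open Classical in
lemma stb_hom (hX : Stb δ X) (hY : Stb δ Y) : hom X Y = if Iso X Y then 1 else 0 := by
  split_ifs with h
  · exact stb_hom_self hX hY h
  · by_contra h0
    obtain ⟨f, hf, hf0⟩ := exists_hom h0
    exact h (hX.iso_of hY hf hf0)

lemma iso_of_hom (hX : Stb δ X) (hY : Stb δ Y) (h : hom X Y ≠ 0) : Iso X Y := by
  obtain ⟨f, hf, hf0⟩ := exists_hom h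
  exact hX.iso_of hY hf hf0

lemma exists_tau (H : Aff Q δ) (hE : Stb δ E) : ∃ W, Tau δ E W := by
  obtain ⟨T', -, h2, h3⟩ := exists_orth H hE.sst.t0
  obtain ⟨W, w1, w2, w3, -⟩ := serre_zero H hE.2.1 h2 h3
  have hEE : hom E E = 1 := hE.brick
  have hb : Brick W := by
    change hom W W = 1
    rw [w1, w2, hEE]
  have hW : Sst δ W := indec_sst H hb.indec w3
  refine ⟨W, ?_, w1, w2⟩
  obtain ⟨G, p, hp, sp, hG⟩ := hW.exists_stb_quot hb.one_ne
  by_cases ip : Inj p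
  · exact hG.iso (Iso.of_bij hp ip sp).symm
  exfalso
  have hEG : ext E G = 0 := by
    rw [← w1]
    by_contra h0
    obtain ⟨g, hg, hg0⟩ := exists_hom h0
    have h1 : g ⊚ p ≠ 0 := fun h => hg0 (sp.cancel0 h)
    exact ip (hb.inj (hg.comp hp) h1).of_comp
  have hall : ∀ Y : Rp Q k, Stb δ Y → ext Y G = 0 := by
    intro Y hY
    by_cases h0 : hom E Y = 0
    · have := ext_le_surj (X := Y) hp sp
      rw [w2, h0] at this
      omega
    · rw [← (iso_of_hom hE hY h0).ext_left]; exact hEG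
  have hGG := hom_sub_ext G G
  have hG1 : hom G G = 1 := hG.brick
  rw [hG1, hall G hG] at hGG
  obtain ⟨m, hm1, hm2⟩ := norm_root H (- dv G)
  have hq : Q.eulerForm (-dv G + m • δ) (-dv G + m • δ) = 1 := by
    rw [H.q_add]
    have : -dv G = (-1 : ℤ) • dv G := by simp
    rw [this, e_smul_l, e_smul_r, ← hGG]; norm_num
  obtain ⟨X, hX, iX⟩ := exists_indec H k hm1 hq (Or.inr hm2)
  have hn : -dv G = (-1 : ℤ) • dv G := by simp
  have hX0 : Q.eulerForm δ (dv X) = 0 := by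
    rw [hX, e_add_r, e_smul_r, H.dd, hn, e_smul_r, hG.2.1]; simp
  have hXs := indec_sst H iX hX0
  have h5 := hXs.ext_zero hall
  have h6 := hom_sub_ext X G
  rw [hX, e_add_l, e_smul_l, hG.2.1, hn, e_smul_l, ← hGG, h5] at h6
  push_cast at h6
  omega

lemma tau_iso (hE : Stb δ E) (h : Tau δ E W) (h' : Tau δ F Z) (hi : Iso E F) : Iso W Z := by
  apply iso_of_hom h.1 h'.1
  rw [h'.2.1, ← hi.ext_left, h.2.2]
  have : hom E E = 1 := hE.brick
  omega

end reg
end QR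


namespace QR
variable {Q : FinQuiver} {δ : Q.V → ℤ} {k : Type} [Field k]

section uni
variable {A B C D E F G K W X Y Z T A' B' C' : Rp Q k}

lemma ses_map (S : SES A B C) (S' : SES A' B' C') {a : C0 A A'} {c : C0 C C'} (ha : IsHom a) (hc : IsHom c)
    {h : C0 C A'} (hh : lw a S.z = rk S'.z c + dd C A' h) :
    ∃ F : C0 B B', IsHom F ∧ F ⊚ S.i = S'.i ⊚ a ∧ S'.p ⊚ F = c ⊚ S.p := by
  refine ⟨S'.i ⊚ a ⊚ S.r + (S'.s ⊚ c + S'.i ⊚ h) ⊚ S.p, ?_, ?_, ?_⟩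
  · have h1 : dd B B' (S'.i ⊚ a ⊚ S.r) = - rk (lw S'.i (lw a S.z)) S.p := by
      rw [S'.hi.leibL, ha.leibL, ← lw_rk, ← lw_rk, S.zp, lw_neg, lw_neg, neg_neg]
    have h2 : dd C B' (S'.s ⊚ c + S'.i ⊚ h) = lw S'.i (lw a S.z) := by
      rw [map_add, hc.leibR, ← S'.iz, ← lw_rk, S'.hi.leibL, ← lw_add, hh]
    unfold IsHom
    rw [map_add, S.hp.leibR, h1, h2]; simp
  · rw [add_cc, cc_assoc, cc_assoc, cc_assoc, S.ri, S.pi]; simp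
  · rw [cc_add, ← cc_assoc, S'.pi, zero_cc, zero_add, ← cc_assoc, cc_add S'.p, ← cc_assoc, ← cc_assoc, S'.ps, S'.pi]; simp

lemma ses_map_inj (S : SES A B C) (S' : SES A' B' C') {a : C0 A A'} {c : C0 C C'} {F : C0 B B'} (hF : IsHom F)
    (h1 : F ⊚ S.i = S'.i ⊚ a) (h2 : S'.p ⊚ F = c ⊚ S.p) (ia : Inj a) (ic : Inj c) : Inj F := by
  apply inj_of_mono hF
  intro K g hg h0
  have h3 : S.p ⊚ g = 0 := by
    apply ic.cancel0
    rw [← cc_assoc, ← h2, cc_assoc, h0]; simp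
  obtain ⟨-, h4⟩ := S.factor_i hg h3
  have h5 : S.r ⊚ g = 0 := by
    apply (S'.inj.comp ia).cancel0
    rw [← h1, cc_assoc, h4, h0]
  rw [← h4, h5]; simp

lemma ses_map_surj (S : SES A B C) (S' : SES A' B' C') {a : C0 A A'} {c : C0 C C'} {F : C0 B B'}
    (h1 : F ⊚ S.i = S'.i ⊚ a) (h2 : S'.p ⊚ F = c ⊚ S.p) (sa : Surj a) (sc : Surj c) : Surj F := by
  obtain ⟨t, ht⟩ := sa.exists_sec
  obtain ⟨u, hu⟩ := sc.exists_sec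
  have h3 : S'.p ⊚ F ⊚ S.s ⊚ u ⊚ S'.p = S'.p := by
    rw [← cc_assoc, h2, cc_assoc, ← cc_assoc S.p, S.ps, one_cc, ← cc_assoc, hu, one_cc]
  have h4 : S'.i ⊚ S'.r = one B' - S'.s ⊚ S'.p := by rw [← S'.sum]; simp
  apply Surj.of_right (f := S.s ⊚ u ⊚ S'.p + S.i ⊚ t ⊚ S'.r ⊚ (one B' - F ⊚ S.s ⊚ u ⊚ S'.p))
  rw [cc_add, ← cc_assoc F S.i, h1, cc_assoc S'.i a, ← cc_assoc a t, ht, one_cc, ← cc_assoc S'.i, h4]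
  rw [sub_cc, cc_sub, cc_assoc S'.s, cc_sub, h3, one_cc, one_cc, cc_one, sub_self]; simp

/-- uniserial regular objects with top `E`, and `Z` the translate of the socle -/
def Uni (δ : Q.V → ℤ) : ℕ → Rp Q k → Rp Q k → Rp Q k → Prop
  | 0, E, X, Z => Stb δ E ∧ Tau δ E Z ∧ Iso X E
  | l + 1, E, X, Z => Stb δ E ∧ ∃ W K, Tau δ E W ∧ Uni δ l W K Z ∧ ∃ S : SES K X E, Nsp S.z

lemma Uni.stb : ∀ {l : ℕ} {E X Z : Rp Q k}, Uni δ l E X Z → Stb δ E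
  | 0, _, _, _, h => h.1
  | _ + 1, _, _, _, h => h.1

lemma Uni.stbZ : ∀ {l : ℕ} {E X Z : Rp Q k}, Uni δ l E X Z → Stb δ Z
  | 0, _, _, _, h => h.2.1.1
  | l + 1, _, _, _, ⟨_, _, _, _, h, _⟩ => Uni.stbZ (l := l) h

lemma Uni.sst : ∀ {l : ℕ} {E X Z : Rp Q k}, Uni δ l E X Z → Sst δ X
  | 0, _, _, _, h => h.1.sst.iso h.2.2.symm
  | l + 1, _, _, _, ⟨h1, _, _, _, h, S, _⟩ => Sst.extn S (Uni.sst (l := l) h) h1.sst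

lemma Uni.isoZ : ∀ {l : ℕ} {E X Z Z' : Rp Q k}, Uni δ l E X Z → Iso Z Z' → Uni δ l E X Z'
  | 0, _, _, _, _, h, hi => ⟨h.1, h.2.1.iso_r hi, h.2.2⟩
  | l + 1, _, _, _, _, ⟨h1, W, K, h2, h, h3⟩, hi => ⟨h1, W, K, h2, Uni.isoZ (l := l) h hi, h3⟩

lemma Uni.td_lt : ∀ {l : ℕ} {E X Z : Rp Q k}, Uni δ l E X Z → l < td X
  | 0, _, _, _, h => by
    have h1 := td_eq_of_dv h.2.2.dv_eq
    have h2 := td_pos_iff.mpr h.1.1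
    omega
  | l + 1, _, _, _, ⟨h1, _, _, _, h, S, _⟩ => by
    have h3 := Uni.td_lt (l := l) h
    have h4 := S.td_add
    have h2 := td_pos_iff.mpr h1.1
    omega

lemma Uni.one_ne {l : ℕ} (h : Uni δ l E X Z) : one X ≠ 0 := by
  rw [← td_pos_iff]
  have := h.td_lt
  omega

lemma SES.iso_mid (S : SES A B C) {f : C0 B B'} {g : C0 B' B} (hf : IsHom f) (hg : IsHom g) (h1 : g ⊚ f = one B)
    (h2 : f ⊚ g = one B') : ∃ S' : SES A B' C, S'.z = S.z := by
  have key : ∀ {X Y : Rp Q k} (w : C0 X B) (v : C0 B Y), (v ⊚ g) ⊚ f ⊚ w = v ⊚ w := by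
    intro X Y w v
    rw [cc_assoc, ← cc_assoc g, h1, one_cc]
  refine ⟨⟨f ⊚ S.i, S.p ⊚ g, f ⊚ S.s, S.r ⊚ g, hf.comp S.hi, S.hp.comp hg, ?_, ?_, ?_, ?_, ?_⟩, ?_⟩
  · rw [key, S.ri]
  · rw [key, S.ps]
  · have : f ⊚ (S.i ⊚ S.r + S.s ⊚ S.p) ⊚ g = one B' := by rw [S.sum, one_cc, h2]
    rw [← this, add_cc, cc_add]
    rfl
  · rw [key, S.pi]
  · rw [key, S.rs]
  · change lw (S.r ⊚ g) (dd C B' (f ⊚ S.s)) = lw S.r (dd C B S.s)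
    rw [hf.leibL, lw_lw, cc_assoc, h1, cc_one]

lemma Uni.isoX {l : ℕ} (h : Uni δ l E X Z) (hi : Iso X Y) : Uni δ l E Y Z := by
  cases l with
  | zero => exact ⟨h.1, h.2.1, hi.symm.trans h.2.2⟩
  | succ l =>
    obtain ⟨h1, W, K, h2, h3, S, hS⟩ := h
    obtain ⟨f, g, hf, hg, h4, h5⟩ := hi
    obtain ⟨S', hS'⟩ := S.iso_mid hf hg h4 h5
    exact ⟨h1, W, K, h2, h3, S', by rw [hS']; exact hS⟩

variable [IsAlgClosed k]

lemma Uni.top : ∀ {l : ℕ} {E X Z : Rp Q k}, Uni δ l E X Z →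
    hom X E = 1 ∧ ∀ G, Stb δ G → hom X G ≠ 0 → Iso G E
  | 0, E, X, Z, h => by
    constructor
    · rw [h.2.2.hom_left]; exact h.1.brick
    · intro G hG h0
      rw [h.2.2.hom_left] at h0
      exact (iso_of_hom h.1 hG h0).symm
  | l + 1, E, X, Z, ⟨hE, W, K, hW, hK, S, hS⟩ => by
    obtain ⟨h1, h2⟩ := Uni.top (l := l) hK
    have key : ∀ G, Stb δ G → ∀ f : C0 X G, IsHom f → f ⊚ S.i = 0 := by
      intro G hG f hf
      by_contra h0
      have hi := h2 G hG (by have := hom_pos (hf.comp S.hi) h0; omega)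
      have s := hK.sst.t0.surj hG (hf.comp S.hi) h0
      have h3 : ext E K = 1 := by rw [← hW.2.1, h1]
      have h4 : ext E G ≠ 0 := by
        rw [← hW.2.1]
        have := stb_hom_self hG hW.1 hi
        omega
      exact (hS.push h3 (hf.comp S.hi) s h4) _ (S.extend_conv hf)
    constructor
    · have h3 : hom E E = 1 := hE.brick
      have h4 := hom_le_right_surj (Z := E) S.hp S.surj
      have h5 : hom X E ≤ hom E E := hom_le_of (ccR S.s) (fun f hf => (S.factor_p hf (key E hE f hf)).1)
        (fun f hf h0 => by
          rw [← (S.factor_p hf (key E hE f hf)).2]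
          change f ⊚ S.s = 0 at h0
          rw [h0]; simp)
      omega
    · intro G hG h0
      obtain ⟨f, hf, hf0⟩ := exists_hom h0
      obtain ⟨h5, h6⟩ := S.factor_p hf (key G hG f hf)
      refine (hE.iso_of hG h5 ?_).symm
      intro h7; apply hf0; rw [← h6, h7]; simp

lemma Uni.indec {l : ℕ} (h : Uni δ l E X Z) : Indec X := by
  by_contra hc
  obtain ⟨U, V, S, hs, hr, hU, hV⟩ := split_of_not_indec h.one_ne hc
  obtain ⟨ht, hG⟩ := h.top
  have h1 := hom_split_l E S hr
  have aux : ∀ U' (p : C0 X U') (i : C0 U' X), IsHom p → IsHom i → p ⊚ i = one U' → one U' ≠ 0 → 1 ≤ hom U' E := by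
    intro U' p i hp hi hpi h0
    obtain ⟨G, q, hq, sq, sG⟩ := (h.sst.smd hi hp hpi).exists_stb_quot h0
    have hq0 : q ≠ 0 := by
      intro h3
      apply sG.1
      apply sq.cancel0
      rw [one_cc, h3]
    have h4 : q ⊚ p ≠ 0 := fun h5 => hq0 ((Surj.of_right hpi).cancel0 h5)
    have h5 := hG G sG (by have := hom_pos (hq.comp hp) h4; omega)
    have h6 := hom_pos hq hq0
    rwa [h5.hom_right] at h6
  have h2 := aux U S.r S.i hr S.hi S.ri hU
  have h3 := aux V S.p S.s S.hp hs S.ps hV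
  omega

lemma Uni.unique : ∀ {l : ℕ} {E X Z E' X' Z' : Rp Q k}, Uni δ l E X Z → Uni δ l E' X' Z' → Iso E E' → Iso X X'
  | 0, E, X, Z, E', X', Z', h, h', hi => h.2.2.trans (hi.trans h'.2.2.symm)
  | l + 1, E, X, Z, E', X', Z', ⟨hE, W, K, hW, hK, S, hS⟩, ⟨hE', W', K', hW', hK', S', hS'⟩, hi => by
    have hWW := tau_iso hE hW hW' hi
    have hKK := Uni.unique (l := l) hK hK' hWW
    obtain ⟨φ, φ', hφ, hφ', h1, h2⟩ := hKK
    obtain ⟨ε, ε', hε, hε', h3, h4⟩ := hi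
    have e1 : ext E K' = 1 := by
      rw [← hW.2.1, ← Iso.hom_left ⟨φ, φ', hφ, hφ', h1, h2⟩, hK.top.1]
    have hN : Nsp (rk S'.z ε) := by
      intro f hf
      apply hS' (f ⊚ ε')
      rw [hε'.leibR, hf, rk_rk, h4, rk_one]
    obtain ⟨c, h, hc⟩ := hN.span e1 (lw φ S.z)
    have hc0 : c ≠ 0 := by
      rintro rfl
      apply hS (φ' ⊚ h)
      rw [zero_smul, zero_add] at hc
      rw [hφ'.leibL, ← hc, lw_lw, h1, lw_one]
    obtain ⟨F, hF, f1, f2⟩ := ses_map S S' hφ (hε.smul c) (h := h) (by rw [hc, ← rk_smul])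
    have iε : Inj (c • ε) := by
      apply Inj.of_left (g := c⁻¹ • ε')
      rw [cc_smul, smul_cc, smul_smul, mul_inv_cancel₀ hc0, one_smul, h3]
    have sε : Surj (c • ε) := by
      apply Surj.of_right (f := c⁻¹ • ε')
      rw [cc_smul, smul_cc, smul_smul, inv_mul_cancel₀ hc0, one_smul, h4]
    exact Iso.of_bij hF (ses_map_inj S S' hF f1 f2 (Inj.of_left h1) iε)
      (ses_map_surj S S' f1 f2 (Surj.of_right h2) sε)

lemma Uni.quot (H : Aff Q δ) : ∀ {m l : ℕ} {E X Z : Rp Q k}, Uni δ l E X Z → m ≤ l →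
    ∃ X' Z' : Rp Q k, Uni δ m E X' Z' ∧ ∃ q : C0 X X', IsHom q ∧ Surj q
  | 0, l, E, X, Z, h, _ => by
    obtain ⟨W, hW⟩ := exists_tau H h.stb
    obtain ⟨f, hf, hf0⟩ := exists_hom (X := X) (Y := E) (by rw [h.top.1]; omega)
    exact ⟨E, W, ⟨h.stb, hW, Iso.refl E⟩, f, hf, h.sst.t0.surj h.stb hf hf0⟩
  | m + 1, 0, _, _, _, _, hm => by omega
  | m + 1, l + 1, E, X, Z, ⟨hE, W, K, hW, hK, S, hS⟩, hm => by
    obtain ⟨K', Z', hK', q, hq, sq⟩ := Uni.quot H (m := m) hK (by omega)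
    have e1 : ext E K = 1 := by rw [← hW.2.1, hK.top.1]
    have e2 : ext E K' ≠ 0 := by rw [← hW.2.1, hK'.top.1]; omega
    let S' := extSES K' E (lw q S.z)
    have hz : S'.z = lw q S.z := extSES_z _ _ _
    obtain ⟨F, hF, f1, f2⟩ := ses_map S S' hq (isHom_one E) (h := 0) (by rw [hz, rk_one]; simp)
    refine ⟨_, Z', ⟨hE, W, K', hW, hK', S', ?_⟩, F, hF, ses_map_surj S S' f1 f2 sq (surj_one E)⟩
    rw [hz]
    exact hS.push e1 hq sq e2

lemma Uni.concat : ∀ {l m : ℕ} {E X Z Y Z2 : Rp Q k}, Uni δ l E X Z → Uni δ m Z Y Z2 →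
    ∃ M : Rp Q k, Uni δ (l + m + 1) E M Z2 ∧ dv M = dv X + dv Y := by
  have key : ∀ {m : ℕ} {E Z Y Z2 : Rp Q k}, Stb δ E → Tau δ E Z → Uni δ m Z Y Z2 →
      ∃ M : Rp Q k, Uni δ (m + 1) E M Z2 ∧ dv M = dv E + dv Y := by
    intro m E Z Y Z2 hE hZ hY
    obtain ⟨z, hz⟩ := exists_ext (X := E) (Y := Y) (by rw [← hZ.2.1, hY.top.1]; omega)
    have h1 := extSES_z Y E z
    refine ⟨_, ⟨hE, Z, Y, hZ, hY, extSES Y E z, ?_⟩, ?_⟩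
    · rw [h1]; exact hz
    · rw [(extSES Y E z).dv_add, add_comm]
  intro l
  induction l with
  | zero =>
    intro m E X Z Y Z2 h h'
    obtain ⟨M, h1, h2⟩ := key h.1 h.2.1 h'
    refine ⟨M, ?_, ?_⟩
    · rw [zero_add]; exact h1
    · rw [h2, h.2.2.dv_eq]
  | succ l ih =>
    intro m E X Z Y Z2 h h'
    obtain ⟨hE, W, K, hW, hK, S, hS⟩ := h
    obtain ⟨M, h1, h2⟩ := ih hK h'
    obtain ⟨M', h3, h4⟩ := key hE hW h1
    refine ⟨M', ?_, ?_⟩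
    · rw [show l + 1 + m + 1 = l + m + 1 + 1 by omega]; exact h3
    · rw [h4, h2, S.dv_add]; abel

open Classical in
lemma Uni.euler : ∀ {l : ℕ} {E X Z : Rp Q k}, Uni δ l E X Z → ∀ {G : Rp Q k}, Stb δ G →
    Q.eulerForm (dv X) (dv G) = (if Iso G E then 1 else 0) - (if Iso G Z then 1 else 0) := by
  have base : ∀ {E W : Rp Q k}, Stb δ E → Tau δ E W → ∀ {G : Rp Q k}, Stb δ G →
    Q.eulerForm (dv E) (dv G) = (if Iso G E then 1 else 0) - (if Iso G W then 1 else 0) := by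
    intro E W hE hW G hG
    rw [← hom_sub_ext, ← hW.2.1, stb_hom hG hW.1, stb_hom hE hG]
    have : Iso E G ↔ Iso G E := ⟨Iso.symm, Iso.symm⟩
    simp only [this]
    push_cast
    rfl
  intro l
  induction l with
  | zero => intro E X Z h G hG; rw [h.2.2.dv_eq]; exact base h.1 h.2.1 hG
  | succ l ih =>
    rintro E X Z ⟨hE, W, K, hW, hK, S, hS⟩ G hG
    rw [S.dv_add, e_add_l, ih hK hG, base hE hW hG]
    ring

lemma Uni.ne {l : ℕ} (h : Uni δ l E X Z) (hq : Q.eulerForm (dv X) (dv X) = 1) : ¬ Iso E Z := by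
  intro hi
  have := h.sst.e_zero (x := dv X) (fun Y hY => by
    rw [h.euler hY]
    have : Iso Y E ↔ Iso Y Z := ⟨fun g => g.trans hi, fun g => g.trans hi.symm⟩
    by_cases h' : Iso Y Z <;> simp [this, h'])
  omega

end uni
end QR


namespace QR
variable {Q : FinQuiver} {δ : Q.V → ℤ} {k : Type} [Field k]

section uni2
variable {A B C D E F G K W X Y Z T A' B' C' : Rp Q k}

lemma Nsp.one_ne {z : C1 E K} (h : Nsp z) : one K ≠ 0 := by
  intro h0
  obtain ⟨f, hf⟩ := ext_eq_zero_iff.mp (show ext E K = 0 by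
    rw [ext_eq_zero_iff]
    intro w
    refine ⟨0, ?_⟩
    rw [map_zero, ← lw_one w, h0]; simp) z
  exact h f hf

lemma SES.lw_sum (S : SES A B C) (z : C1 X B) : lw S.i (lw S.r z) + lw S.s (lw S.p z) = z := by
  rw [lw_lw, lw_lw, ← add_lw, S.sum, lw_one]

lemma Nsp.exists_smd (n : ℕ) : ∀ {K : Rp Q k} (z : C1 E K), td K ≤ n → Nsp z →
    ∃ (D : Rp Q k) (i : C0 D K) (r : C0 K D), Indec D ∧ IsHom i ∧ IsHom r ∧ r ⊚ i = one D ∧ Nsp (lw r z) := by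
  induction n with
  | zero => intro K z h hz; exact absurd (td_eq_zero_iff.mp (by omega)) hz.one_ne
  | succ n ih =>
    intro K z hn hz
    by_cases hi : Indec K
    · exact ⟨K, one K, one K, hi, isHom_one K, isHom_one K, one_cc _, by rw [lw_one]; exact hz⟩
    obtain ⟨U, V, S, hs, hr, hU, hV⟩ := split_of_not_indec hz.one_ne hi
    have ht := S.td_add
    have h1 := td_pos_iff.mpr hU
    have h2 := td_pos_iff.mpr hV
    by_cases h3 : Nsp (lw S.r z)
    · obtain ⟨D, i, r, hD, hi', hr', hri, hN⟩ := ih _ (by omega) h3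
      refine ⟨D, S.i ⊚ i, r ⊚ S.r, hD, S.hi.comp hi', hr'.comp hr, ?_, ?_⟩
      · rw [cc_assoc, ← cc_assoc S.r, S.ri, one_cc, hri]
      · rw [← lw_lw]; exact hN
    by_cases h4 : Nsp (lw S.p z)
    · obtain ⟨D, i, r, hD, hi', hr', hri, hN⟩ := ih _ (by omega) h4
      refine ⟨D, S.s ⊚ i, r ⊚ S.p, hD, hs.comp hi', hr'.comp S.hp, ?_, ?_⟩
      · rw [cc_assoc, ← cc_assoc S.p, S.ps, one_cc, hri]
      · rw [← lw_lw]; exact hN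
    exfalso
    unfold Nsp at h3 h4
    push Not at h3 h4
    obtain ⟨f, hf⟩ := h3
    obtain ⟨g, hg⟩ := h4
    apply hz (S.i ⊚ f + S.s ⊚ g)
    rw [map_add, S.hi.leibL, hs.leibL, hf, hg, S.lw_sum]

variable [IsAlgClosed k]

lemma uni_claim (H : Aff Q δ) {l : ℕ} {Z : Rp Q k} (hK : Sst δ K) (hW : Tau δ E W) (z : C1 E K) {π : C0 K D}
    (hD : Uni δ l F D Z) (hN : Nsp (lw π z)) (hWF : Iso W F)
    (IH : ∀ C : Rp Q k, Sst δ C → Indec C → td C ≤ td K → ∃ l E Z, Uni δ l E C Z)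
    (hmax : ∀ m (C G Z' : Rp Q k) (j : C0 C K) (p : C0 K C), IsHom j → IsHom p → p ⊚ j = one C → Uni δ m G C Z' →
      Nsp (lw p z) → m ≤ l) (n : ℕ) : ∀ {C : Rp Q k} (j : C0 C K) (p : C0 K C), IsHom j → IsHom p → p ⊚ j = one C →
      td C ≤ n → ∃ (h : C0 D C) (u : C0 E C), IsHom h ∧ lw h (lw π z) = lw p z + dd E C u := by
  induction n with
  | zero =>
    intro C j p hj hp hpj hn
    obtain ⟨f, hf⟩ := ext_eq_zero_iff.mp (show ext E C = 0 by
      by_contra h0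
      obtain ⟨w, hw⟩ := exists_ext h0
      exact Nsp.one_ne hw (td_eq_zero_iff.mp (by omega))) (lw p z)
    refine ⟨0, -f, isHom_zero, ?_⟩
    rw [map_neg, hf]; simp
  | succ n ih =>
    intro C j p hj hp hpj hn
    by_cases hC : Nsp (lw p z)
    swap
    · unfold Nsp at hC
      push Not at hC
      obtain ⟨f, hf⟩ := hC
      refine ⟨0, -f, isHom_zero, ?_⟩
      rw [map_neg, hf]; simp
    by_cases hi : Indec C
    · obtain ⟨m, G, Z', hU⟩ := IH C (hK.smd hj hp hpj) hi (Inj.of_left hpj).td_le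
      have hm := hmax m C G Z' j p hj hp hpj hU hC
      have hWG : Iso W G := hU.top.2 W hW.1 (by rw [hW.2.1]; exact hC.ext_ne)
      obtain ⟨X', Z'', hX', q, hq, sq⟩ := hD.quot H hm
      obtain ⟨f, g, hf, hg, h1, h2⟩ := hX'.unique hU (hWF.symm.trans hWG)
      have e1 : ext E D = 1 := by rw [← hW.2.1, hWF.hom_right, hD.top.1]
      have e2 : ext E C = 1 := by rw [← hW.2.1, hWG.hom_right, hU.top.1]
      have hpush := hN.push e1 (hf.comp hq) ((Surj.of_right h2).comp sq) hC.ext_ne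
      obtain ⟨c, t, ht⟩ := hpush.span e2 (lw p z)
      refine ⟨c • (f ⊚ q), -t, (hf.comp hq).smul c, ?_⟩
      rw [ht, smul_lw, map_neg]; simp
    · obtain ⟨U, V, S, hs, hr, hU, hV⟩ := split_of_not_indec hC.one_ne hi
      have ht := S.td_add
      have h1 := td_pos_iff.mpr hU
      have h2 := td_pos_iff.mpr hV
      obtain ⟨h, u, hh, hu⟩ := ih (j ⊚ S.i) (S.r ⊚ p) (hj.comp S.hi) (hr.comp hp)
        (by rw [cc_assoc, ← cc_assoc p, hpj, one_cc, S.ri]) (by omega)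
      obtain ⟨h', u', hh', hu'⟩ := ih (j ⊚ S.s) (S.p ⊚ p) (hj.comp hs) (S.hp.comp hp)
        (by rw [cc_assoc, ← cc_assoc p, hpj, one_cc, S.ps]) (by omega)
      refine ⟨S.i ⊚ h + S.s ⊚ h', S.i ⊚ u + S.s ⊚ u', (S.hi.comp hh).add (hs.comp hh'), ?_⟩
      rw [add_lw, ← lw_lw, ← lw_lw, hu, hu', lw_add, lw_add, map_add, S.hi.leibL, hs.leibL, ← lw_lw, ← lw_lw]
      nth_rewrite 3 [← S.lw_sum (lw p z)]
      abel

lemma exists_uni (H : Aff Q δ) (n : ℕ) : ∀ {X : Rp Q k}, Sst δ X → Indec X → td X ≤ n →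
    ∃ l E Z, Uni δ l E X Z := by
  induction n with
  | zero => intro X _ h hn; exact absurd (td_eq_zero_iff.mp (by omega)) h.1
  | succ n ih =>
    intro X hX iX hn
    obtain ⟨E, p, hp, sp, hE⟩ := hX.exists_stb_quot iX.1
    obtain ⟨K, S, rfl⟩ := ses_of_surj hp sp
    obtain ⟨W, hW⟩ := exists_tau H hE
    have htd := S.td_add
    by_cases hK0 : one K = 0
    · have := td_eq_zero_iff.mpr hK0
      exact ⟨0, E, W, hE, hW, Iso.of_bij S.hp (S.surj.inj_of_td (by omega)) S.surj⟩
    have hEt := td_pos_iff.mpr hE.1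
    have hN : Nsp S.z := by
      intro f hf
      obtain ⟨G, hG, hG1⟩ := S.lift (isHom_one E) (h := f) (by rw [rk_one, hf])
      rcases zero_of_split iX S hG hG1 with h | h
      · exact hK0 h
      · exact hE.1 h
    have hK : Sst δ K := hX.ker S hE.2.1
    have IH : ∀ C : Rp Q k, Sst δ C → Indec C → td C ≤ td K → ∃ l E Z, Uni δ l E C Z :=
      fun C h1 h2 h3 => ih h1 h2 (by omega)
    let P : ℕ → Prop := fun l => ∃ (D F Z : Rp Q k) (i : C0 D K) (r : C0 K D), IsHom i ∧ IsHom r ∧ r ⊚ i = one D ∧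
      Uni δ l F D Z ∧ Nsp (lw r S.z)
    have hP : ∃ l, P l := by
      obtain ⟨D, i, r, hD, hi, hr, hri, hN'⟩ := Nsp.exists_smd _ S.z le_rfl hN
      obtain ⟨l, F, Z, hU⟩ := IH D (hK.smd hi hr hri) hD (Inj.of_left hri).td_le
      exact ⟨l, D, F, Z, i, r, hi, hr, hri, hU, hN'⟩
    obtain ⟨l, ⟨D, F, Z, i, π, hi, hπ, hπi, hU, hN'⟩, hmax⟩ := exists_max (B := td K) hP (by
      rintro m ⟨D, F, Z, i, r, hi, hr, hri, hU, -⟩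
      have h1 := hU.td_lt
      have h2 := (Inj.of_left hri).td_le
      omega)
    have hWF : Iso W F := hU.top.2 W hW.1 (by rw [hW.2.1]; exact hN'.ext_ne)
    have hid : (i ⊚ π) ⊚ (i ⊚ π) = i ⊚ π := by
      rw [cc_assoc, ← cc_assoc π, hπi, one_cc]
    obtain ⟨C, p, j, hp, hj, hpj, hjp⟩ := split_idem ((isHom_one K).sub (hi.comp hπ)) (idem_compl hid)
    obtain ⟨h, u, hh, hu⟩ := uni_claim H hK hW S.z hU hN' hWF IH
      (fun m C G Z' j p hj hp hpj hU hN => hmax m ⟨C, G, Z', j, p, hj, hp, hpj, hU, hN⟩) _ j p hj hp hpj le_rfl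
    have hπj : π ⊚ j = 0 := by
      apply (Inj.of_left hπi).cancel0
      have h1 : j = (one K - i ⊚ π) ⊚ j := by rw [← hjp, cc_assoc, hpj, cc_one]
      rw [sub_cc, one_cc, cc_assoc] at h1
      exact sub_eq_self.mp h1.symm
    obtain ⟨P', hP', hP1⟩ := S.extend (Y := C) (f := p - h ⊚ π) (hp.sub (hh.comp hπ)) (h := -u) (by
      rw [sub_lw, ← lw_lw, hu, map_neg]; abel)
    have hone : P' ⊚ (S.i ⊚ j) = one C := by
      rw [← cc_assoc, hP1, sub_cc, cc_assoc, hπj, hpj]; simp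
    have hC0 : one C = 0 := by
      by_contra hC
      have h1 := indec_smd iX (S.hi.comp hj) hP' hone hC
      have h2 : S.p = 0 := by
        rw [← cc_one S.p, ← h1, cc_assoc, ← cc_assoc S.p, S.pi]; simp
      apply hE.1
      rw [← S.ps, h2]; simp
    have hiπ : i ⊚ π = one K := by
      have h1 : j ⊚ p = 0 := by rw [← one_cc p, hC0]; simp
      rw [hjp] at h1
      exact (sub_eq_zero.mp h1).symm
    exact ⟨l + 1, E, Z, hE, F, K, hW.iso_r hWF, hU.isoX ⟨i, π, hi, hπ, hπi, hiπ⟩, S, hN⟩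

lemma reg_unique (H : Aff Q δ) (h0 : Q.eulerForm δ (dv X) = 0) (hq : Q.eulerForm (dv X) (dv X) = 1)
    (hXY : dv X = dv Y) (iX : Indec X) (iY : Indec Y) : Iso X Y := by
  classical
  obtain ⟨l, E, Z, hX⟩ := exists_uni H _ (indec_sst H iX h0) iX le_rfl
  obtain ⟨m, F, Z', hY⟩ := exists_uni H _ (indec_sst H iY (hXY ▸ h0)) iY le_rfl
  have hn := hX.ne hq
  have hEF : Iso E F := by
    have h1 := hX.euler hX.stb
    rw [hXY, hY.euler hX.stb, if_neg hn, if_pos (Iso.refl E)] at h1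
    by_contra hc
    rw [if_neg hc] at h1
    split_ifs at h1 <;> omega
  have ht : td X = td Y := td_eq_of_dv hXY
  have key : ∀ {l m : ℕ} {X Y E F Z Z' : Rp Q k}, Uni δ l E X Z → Uni δ m F Y Z' → Iso E F → td X = td Y → m ≤ l →
      Iso X Y := by
    intro l m X Y E F Z Z' hX hY hEF ht hm
    obtain ⟨X', Z'', hX', q, hq, sq⟩ := hX.quot H hm
    have h2 := hX'.unique hY hEF
    have h3 := td_eq_of_dv h2.dv_eq
    exact (Iso.of_bij hq (sq.inj_of_td (by omega)) sq).trans h2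
  rcases le_total m l with h | h
  · exact key hX hY hEF ht h
  · exact (key hY hX hEF.symm ht.symm h).symm

variable (k) in
lemma reg_exists (H : Aff Q δ) {α : Q.V → ℤ} (hα : ∀ i, 0 ≤ α i) (h0 : Q.eulerForm δ α = 0) (hq : Q.eulerForm α α = 1) :
    ∃ X : Rp Q k, dv X = α ∧ Indec X := by
  classical
  obtain ⟨m, hm1, i0, hm2⟩ := norm_root H α
  generalize hβ : α + m • δ = β at hm1 hm2
  have hβ0 : Q.eulerForm δ β = 0 := by rw [← hβ, e_add_r, e_smul_r, H.dd, h0]; simp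
  have hβq : Q.eulerForm β β = 1 := by rw [← hβ, H.q_add, hq]
  have hneg : Q.eulerForm (-β) (-β) = 1 := by
    have hn : -β = (-1 : ℤ) • β := by simp
    rw [hn, e_smul_l, e_smul_r, hβq]; norm_num
  have hγq : Q.eulerForm (-β + (1 : ℤ) • δ) (-β + (1 : ℤ) • δ) = 1 := by
    rw [H.q_add, hneg]
  have hγ1 : ∀ i, 0 ≤ (-β + (1 : ℤ) • δ) i := by
    rcases H.root_sign hγq with h | h
    · exact h
    · have := h i0
      simp only [Pi.add_apply, Pi.neg_apply, Pi.smul_apply, one_smul] at this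
      omega
  have hγ2 : ∃ i, (-β + (1 : ℤ) • δ) i < δ i := by
    by_contra hc
    push Not at hc
    have : β = 0 := by
      funext i
      have h1 := hc i
      have h2 := hm1 i
      simp only [Pi.add_apply, Pi.neg_apply, Pi.smul_apply, one_smul, Pi.zero_apply] at h1 h2 ⊢
      omega
    rw [this, e_zero_l] at hβq
    omega
  have hγ0 : Q.eulerForm δ (-β + (1 : ℤ) • δ) = 0 := by
    have hn : -β = (-1 : ℤ) • β := by simp
    rw [e_add_r, e_smul_r, H.dd, hn, e_smul_r, hβ0]; simp
  obtain ⟨X, hX, iX⟩ := exists_indec H k hm1 hβq (Or.inr ⟨i0, hm2⟩)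
  obtain ⟨Y, hY, iY⟩ := exists_indec H k hγ1 hγq (Or.inr hγ2)
  obtain ⟨l, E, Z, uX⟩ := exists_uni H _ (indec_sst H iX (by rw [hX, hβ0])) iX le_rfl
  obtain ⟨m', F, Z', uY⟩ := exists_uni H _ (indec_sst H iY (by rw [hY, hγ0])) iY le_rfl
  have nX := uX.ne (by rw [hX, hβq])
  have nY := uY.ne (by rw [hY, hγq])
  have hsum : ∀ G : Rp Q k, Stb δ G → Q.eulerForm (dv X) (dv G) + Q.eulerForm (dv Y) (dv G) = 0 := by
    intro G hG
    rw [← e_add_l, hX, hY]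
    have : β + (-β + (1 : ℤ) • δ) = δ := by rw [one_smul]; abel
    rw [this, hG.2.1]
  have hEZ : Iso E Z' := by
    have h1 := hsum E uX.stb
    rw [uX.euler uX.stb, uY.euler uX.stb, if_neg nX, if_pos (Iso.refl E)] at h1
    by_contra hc
    rw [if_neg hc] at h1
    split_ifs at h1 <;> omega
  have hZF : Iso Z F := by
    have h1 := hsum Z uX.stbZ
    rw [uX.euler uX.stbZ, uY.euler uX.stbZ, if_neg (fun h => nX h.symm), if_pos (Iso.refl Z)] at h1
    by_contra hc
    rw [if_neg hc] at h1
    split_ifs at h1 <;> omega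
  have step : ∀ a : ℕ, ∃ (l : ℕ) (M : Rp Q k), Uni δ l E M F ∧ dv M = β + (a : ℤ) • δ := by
    intro a
    induction a with
    | zero => exact ⟨l, X, uX.isoZ hZF, by rw [hX]; simp⟩
    | succ a ih =>
      obtain ⟨l', M, hM, hd⟩ := ih
      obtain ⟨N, hN, hNd⟩ := hM.concat (uY.isoZ hEZ.symm)
      obtain ⟨R, hR, hRd⟩ := hN.concat uX
      refine ⟨_, R, hR.isoZ hZF, ?_⟩
      rw [hRd, hNd, hd, hX, hY]
      push_cast
      rw [add_smul]
      abel_nf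
  have hm0 : m ≤ 0 := by
    have h1 := hα i0
    have h2 := H.pos i0
    rw [← hβ] at hm2
    simp only [Pi.add_apply, Pi.smul_apply, smul_eq_mul] at hm2
    by_contra hc
    nlinarith
  obtain ⟨l', M, hM, hd⟩ := step (-m).toNat
  refine ⟨M, ?_, hM.indec⟩
  rw [hd, ← hβ, Int.toNat_of_nonneg (by omega), neg_smul]
  abel

end uni2
end QR


namespace QR
variable {Q : FinQuiver} {δ : Q.V → ℤ} {k : Type} [Field k]

section dual

/-- opposite quiver -/
abbrev opq (Q : FinQuiver) : FinQuiver where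
  V := Q.V
  A := Q.A
  src := Q.tgt
  tgt := Q.src

/-- dual representation -/
def Du (X : Rp Q k) : Rp (opq Q) k where
  X := fun i : Q.V => Module.Dual k (X.X i)
  acg := fun i : Q.V => inferInstanceAs (AddCommGroup (Module.Dual k (X.X i)))
  mod := fun i : Q.V => inferInstanceAs (Module k (Module.Dual k (X.X i)))
  fd := fun i : Q.V => inferInstanceAs (FiniteDimensional k (Module.Dual k (X.X i)))
  m := fun a : Q.A => (X.m a).dualMap

lemma dualMap_inj {V W : Type} [AddCommGroup V] [Module k V] [AddCommGroup W] [Module k W]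
    {f g : V →ₗ[k] W} (h : f.dualMap = g.dualMap) : f = g := by
  ext v
  rw [← sub_eq_zero, ← Module.forall_dual_apply_eq_zero_iff k]
  intro φ
  have := LinearMap.congr_fun (LinearMap.congr_fun h φ) v
  simp only [LinearMap.dualMap_apply] at this
  rw [map_sub, this, sub_self]

lemma dualMap_surj {V W : Type} [AddCommGroup V] [Module k V] [AddCommGroup W] [Module k W] [FiniteDimensional k W]
    (g : Module.Dual k W →ₗ[k] Module.Dual k V) : ∃ f : V →ₗ[k] W, f.dualMap = g := by
  refine ⟨(Module.evalEquiv k W).symm.toLinearMap ∘ₗ g.dualMap ∘ₗ Module.Dual.eval k V, ?_⟩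
  ext φ v
  simp [LinearMap.dualMap_apply]

variable {X Y Z : Rp Q k}

def DuF (f : C0 X Y) : C0 (Du Y) (Du X) := fun i : Q.V => (f i).dualMap

lemma DuF_inj {f g : C0 X Y} (h : DuF f = DuF g) : f = g := by
  funext i
  exact dualMap_inj (congrFun h i)

lemma DuF_surj (g : C0 (Du Y) (Du X)) : ∃ f : C0 X Y, DuF f = g := by
  choose f hf using fun i : Q.V => dualMap_surj (V := X.X i) (W := Y.X i) (g i)
  exact ⟨f, funext hf⟩

lemma DuF_cc (g : C0 Y Z) (f : C0 X Y) : DuF (g ⊚ f) = DuF f ⊚ DuF g := rfl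
lemma DuF_one : DuF (one X) = one (Du X) := rfl
lemma DuF_zero : DuF (0 : C0 X Y) = 0 := by
  funext i
  change (0 : X.X i →ₗ[k] Y.X i).dualMap = 0
  apply LinearMap.ext; intro φ
  apply LinearMap.ext; intro v
  change φ 0 = 0
  simp

lemma isHom_DuF {f : C0 X Y} (h : IsHom (DuF f)) : IsHom f := by
  refine isHom_iff.mpr ?_
  intro a v
  rw [← sub_eq_zero, ← Module.forall_dual_apply_eq_zero_iff k]
  intro φ
  have h1 := isHom_iff.mp h a φ
  have h2 := LinearMap.congr_fun h1 v
  change φ (f _ (X.m a v)) = φ (Y.m a (f _ v)) at h2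
  rw [map_sub]
  simp [h2]

lemma Du_indec (h : Indec X) : Indec (Du X) := by
  constructor
  · rw [← DuF_one, ← DuF_zero]
    intro h1
    exact h.1 (DuF_inj h1)
  · intro e he hee
    obtain ⟨f, rfl⟩ := DuF_surj e
    have hf : f ⊚ f = f := DuF_inj (by rw [DuF_cc, hee])
    rcases h.2 f (isHom_DuF he) hf with rfl | rfl
    · exact Or.inl DuF_zero
    · exact Or.inr DuF_one

lemma Du_iso (h : Iso (Du X) (Du Y)) : Iso X Y := by
  obtain ⟨f, g, hf, hg, h1, h2⟩ := h
  obtain ⟨f, rfl⟩ := DuF_surj f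
  obtain ⟨g, rfl⟩ := DuF_surj g
  exact ⟨g, f, isHom_DuF hg, isHom_DuF hf, DuF_inj (by rw [DuF_cc, h1, DuF_one]), DuF_inj (by rw [DuF_cc, h2, DuF_one])⟩

lemma dv_Du (X : Rp Q k) : dv (Du X) = dv X := by
  funext i
  change ((Module.finrank k (Module.Dual k (X.X i)) : ℕ) : ℤ) = _
  rw [Subspace.dual_finrank_eq]
  rfl

lemma e_op (x y : Q.V → ℤ) : (opq Q).eulerForm x y = Q.eulerForm y x := by
  change (∑ i : Q.V, x i * y i) - ∑ a : Q.A, x (Q.tgt a) * y (Q.src a) = _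
  unfold FinQuiver.eulerForm
  simp only [mul_comm]

lemma Aff.op (H : Aff Q δ) : Aff (opq Q) δ where
  ne := H.ne
  pos := H.pos
  psd x := by rw [e_op]; exact H.psd x
  rad x := by
    rw [← H.rad x]
    exact forall_congr' fun y => by rw [e_op, e_op, add_comm]
  pex j := by
    obtain ⟨p, h1, h2⟩ := H.pex' j
    exact ⟨p, h1, fun y => by rw [e_op, h2]⟩
  pex' j := by
    obtain ⟨p, h1, h2⟩ := H.pex j
    exact ⟨p, h1, fun y => by rw [e_op, h2]⟩

variable [IsAlgClosed k]

variable (k) in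
lemma main_rp (H : Aff Q δ) {α : Q.V → ℤ} (hα : ∀ i, 0 ≤ α i) (hq : Q.eulerForm α α = 1) :
    (∃ X : Rp Q k, dv X = α ∧ Indec X) ∧
      ∀ X Y : Rp Q k, dv X = α → dv Y = α → Indec X → Indec Y → Iso X Y := by
  rcases lt_trichotomy (Q.eulerForm δ α) 0 with h | h | h
  · exact ⟨exists_indec H k hα hq (Or.inl h.ne), fun X Y hX hY iX iY => unique_neg H hq h hX hY iX iY⟩
  · exact ⟨reg_exists k H hα h hq, fun X Y hX hY iX iY =>
      reg_unique H (by rw [hX, h]) (by rw [hX, hq]) (hX.trans hY.symm) iX iY⟩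
  · have h' : (opq Q).eulerForm δ α < 0 := by
      rw [e_op]
      have := (H.rad δ).mpr ⟨1, (one_smul _ _).symm⟩ α
      omega
    refine ⟨exists_indec H k hα hq (Or.inl h.ne'), fun X Y hX hY iX iY => Du_iso ?_⟩
    exact unique_neg (Q := opq Q) (α := α) H.op (by rw [e_op]; exact hq) h' (by rw [dv_Du, hX]) (by rw [dv_Du, hY]) (Du_indec iX) (Du_indec iY)

end dual
end QR


namespace QR

section aff
variable {Q : FinQuiver}

lemma pex_of_wf (hwf : WellFounded (fun i j : Q.V => ∃ a, Q.src a = i ∧ Q.tgt a = j)) (j : Q.V) :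
    ∃ p : Q.V → ℤ, (∀ i, 0 ≤ p i) ∧ ∀ y, Q.eulerForm p y = y j := by
  let Fx : (i : Q.V) → ((i' : Q.V) → (∃ a, Q.src a = i' ∧ Q.tgt a = i) → ℤ) → ℤ := fun i rec =>
    (if i = j then 1 else 0) + ∑ a : {a : Q.A // Q.tgt a = i}, rec (Q.src a.1) ⟨a.1, rfl, a.2⟩
  let p : Q.V → ℤ := hwf.fix Fx
  have hp : ∀ i, p i = (if i = j then 1 else 0) + ∑ a : {a : Q.A // Q.tgt a = i}, p (Q.src a.1) := by
    intro i
    exact hwf.fix_eq Fx i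
  refine ⟨p, ?_, ?_⟩
  · intro i
    induction i using hwf.induction with
    | _ i ih =>
      rw [hp i]
      apply add_nonneg
      · split_ifs <;> norm_num
      · exact Finset.sum_nonneg fun a _ => ih _ ⟨a.1, rfl, a.2⟩
  · intro y
    unfold FinQuiver.eulerForm
    have h1 : ∑ a : Q.A, p (Q.src a) * y (Q.tgt a) =
        ∑ i : Q.V, ∑ a : {a : Q.A // Q.tgt a = i}, p (Q.src a.1) * y i := by
      rw [← Finset.sum_fiberwise (s := Finset.univ) (g := Q.tgt)]
      refine Finset.sum_congr rfl fun i _ => ?_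
      rw [Finset.sum_subtype (p := fun a => Q.tgt a = i) (F := inferInstance) _ (by simp)]
      exact Finset.sum_congr rfl fun a _ => by rw [a.2]
    rw [h1, ← Finset.sum_sub_distrib, Finset.sum_eq_single j]
    · rw [hp j, ← Finset.sum_mul]; simp; ring
    · intro i _ hi
      rw [hp i, ← Finset.sum_mul, if_neg hi]; ring
    · intro h; exact absurd (Finset.mem_univ j) h

lemma exists_path {i j : Q.V} (h : Relation.TransGen (fun i j : Q.V => ∃ a, Q.src a = i ∧ Q.tgt a = j) i j) :
    ∃ (n : ℕ) (g : Fin (n + 1) → Q.A), Q.src (g 0) = i ∧ Q.tgt (g (Fin.last n)) = j ∧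
      ∀ l : Fin n, Q.tgt (g l.castSucc) = Q.src (g l.succ) := by
  induction h using Relation.TransGen.head_induction_on with
  | single h =>
    obtain ⟨a, h1, h2⟩ := h
    exact ⟨0, fun _ => a, h1, h2, fun l => l.elim0⟩
  | head h _ ih =>
    obtain ⟨a, h1, h2⟩ := h
    obtain ⟨n, g, g1, g2, g3⟩ := ih
    refine ⟨n + 1, Fin.cons a g, ?_, ?_, ?_⟩
    · rw [Fin.cons_zero, h1]
    · rw [← Fin.succ_last, Fin.cons_succ, g2]
    · intro l
      refine Fin.cases ?_ (fun l => ?_) l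
      · rw [Fin.castSucc_zero, Fin.cons_zero, Fin.cons_succ, h2, g1]
      · rw [← Fin.succ_castSucc, Fin.cons_succ, Fin.cons_succ, g3]

lemma trans_irrefl (h : Q.Acyclic) (i : Q.V) :
    ¬ Relation.TransGen (fun i j : Q.V => ∃ a, Q.src a = i ∧ Q.tgt a = j) i i := by
  intro hi
  obtain ⟨n, g, g1, g2, g3⟩ := exists_path hi
  apply h
  refine ⟨n, g, fun l => ?_⟩
  refine Fin.lastCases ?_ (fun l => ?_) l
  · rw [Fin.last_add_one, g1, g2]
  · rw [Fin.coeSucc_eq_succ, g3]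

lemma wf_of_acyclic (h : Q.Acyclic) : WellFounded (fun i j : Q.V => ∃ a, Q.src a = i ∧ Q.tgt a = j) := by
  let R := Relation.TransGen (fun i j : Q.V => ∃ a, Q.src a = i ∧ Q.tgt a = j)
  have : Std.Irrefl R := ⟨trans_irrefl h⟩
  have : IsTrans Q.V R := ⟨fun _ _ _ => Relation.TransGen.trans⟩
  have := Finite.wellFounded_of_trans_of_irrefl R
  exact Subrelation.wf (fun h => Relation.TransGen.single h) this

lemma wf_of_acyclic_op (h : Q.Acyclic) :
    WellFounded (fun i j : (opq Q).V => ∃ a, (opq Q).src a = i ∧ (opq Q).tgt a = j) := by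
  let R : Q.V → Q.V → Prop := fun i j => Relation.TransGen (fun i j : Q.V => ∃ a, Q.src a = i ∧ Q.tgt a = j) j i
  have : Std.Irrefl R := ⟨trans_irrefl h⟩
  have : IsTrans Q.V R := ⟨fun _ _ _ h1 h2 => Relation.TransGen.trans h2 h1⟩
  have := Finite.wellFounded_of_trans_of_irrefl R
  refine Subrelation.wf (fun {i j} h => ?_) this
  obtain ⟨a, h1, h2⟩ := h
  exact Relation.TransGen.single ⟨a, h2, h1⟩

lemma aff_of (Q : AffineQuiver) : Aff Q.toFinQuiver Q.δ where
  ne := Q.connected.nonempty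
  pos := Q.delta_pos
  psd := Q.posSemidef
  rad := Q.radical_iff
  pex := pex_of_wf (wf_of_acyclic Q.acyclic)
  pex' j := by
    obtain ⟨p, h1, h2⟩ := pex_of_wf (wf_of_acyclic_op Q.acyclic) j
    exact ⟨p, h1, fun y => by rw [← h2 y, e_op]⟩

end aff

section conv
variable {Q : FinQuiver} {k : Type} [Field k] {d : Q.V → ℕ}

/-- matrix representation as representation -/
def toRp (x : MRep Q k d) : Rp Q k where
  X := fun i => Fin (d i) → k
  m := fun a => (x a).mulVecLin

lemma dv_toRp (x : MRep Q k d) : dv (toRp x) = fun i => (d i : ℤ) := by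
  funext i
  change ((Module.finrank k (Fin (d i) → k) : ℕ) : ℤ) = _
  simp

lemma indec_toRp {x : MRep Q k d} (h : MIndec x) : Indec (toRp x) := by
  constructor
  · obtain ⟨i, hi⟩ := h.1
    rw [← td_pos_iff]
    have h1 : Module.finrank k ((toRp x).X i) ≤ td (toRp x) :=
      Finset.single_le_sum (f := fun i => Module.finrank k ((toRp x).X i)) (fun _ _ => Nat.zero_le _) (Finset.mem_univ i)
    have h2 : Module.finrank k ((toRp x).X i) = d i := by
      change Module.finrank k (Fin (d i) → k) = _
      simp
    omega
  · intro e he hee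
    have hid : ∀ i v, e i (e i v) = e i v := fun i v => LinearMap.congr_fun (congrFun hee i) v
    have hh := isHom_iff.mp he
    have q1 : MSub x (fun i => LinearMap.range (e i)) := by
      rintro a _ ⟨v, rfl⟩
      exact ⟨_, (hh a v).symm⟩
    have q2 : MSub x (fun i => LinearMap.ker (e i)) := by
      intro a v hv
      have h2 := hh a v
      have h3 : e _ v = 0 := hv
      rw [h3, map_zero] at h2
      exact h2.symm
    have q3 : ∀ i, IsCompl (LinearMap.range (e i)) (LinearMap.ker (e i)) := by
      intro i
      have h2 : IsIdempotentElem (e i) := congrFun hee i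
      exact (LinearMap.IsIdempotentElem.isCompl h2)
    rcases h.2 _ _ q1 q2 q3 with h1 | h1
    · left
      funext i
      exact LinearMap.range_eq_bot.mp (h1 i)
    · right
      funext i
      apply LinearMap.ext
      intro v
      have h2 := LinearMap.ker_eq_bot.mp (h1 i)
      exact h2 (hid i v)

lemma mindec_of {x : MRep Q k d} (h : Indec (toRp x)) : MIndec x := by
  constructor
  · by_contra hc
    push Not at hc
    apply h.1
    funext i
    apply LinearMap.ext
    intro v
    have : d i = 0 := by have := hc i; omega
    funext t
    exact absurd t.2 (by omega)
  · intro U W hU hW hc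
    let e' : ∀ i, (Fin (d i) → k) →ₗ[k] (Fin (d i) → k) := fun i => (U i).projection (W i) (hc i)
    have eU : ∀ i (v : Fin (d i) → k), v ∈ U i → e' i v = v :=
      fun i v hv => (Submodule.projection_eq_self_iff (hc i) v).mpr hv
    have eW : ∀ i (v : Fin (d i) → k), v ∈ W i → e' i v = 0 :=
      fun i v hv => (Submodule.projection_apply_eq_zero_iff (hc i)).mpr hv
    have em : ∀ i (v : Fin (d i) → k), e' i v ∈ U i := fun i v => Submodule.projection_apply_mem (hc i) v
    have hcom : ∀ a (v : Fin (d (Q.src a)) → k), (x a).mulVec (e' _ v) = e' _ ((x a).mulVec v) := by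
      intro a v
      obtain ⟨u, hu, w, hw, rfl⟩ := Submodule.mem_sup.mp
        (show v ∈ U (Q.src a) ⊔ W (Q.src a) by rw [(hc _).sup_eq_top]; trivial)
      rw [map_add, Matrix.mulVec_add, Matrix.mulVec_add, map_add, eU _ u hu, eW _ w hw,
        eU _ _ (hU a u hu), eW _ _ (hW a w hw), Matrix.mulVec_zero]
    let e : C0 (toRp x) (toRp x) := e'
    have he : IsHom e := by
      refine isHom_iff.mpr ?_
      intro a v
      exact hcom a v
    rcases h.2 e he (by
      funext i; apply LinearMap.ext; intro v; exact eU i _ (em i v)) with h1 | h1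
    · left
      intro i
      rw [eq_bot_iff]
      intro v hv
      have h2 : e i v = v := eU i v hv
      rw [h1] at h2
      exact h2.symm
    · right
      intro i
      rw [eq_bot_iff]
      intro v hv
      have h2 : e i v = 0 := eW i v hv
      rw [h1] at h2
      exact h2

lemma exists_toRp {X : Rp Q k} (h : dv X = fun i => (d i : ℤ)) : ∃ x : MRep Q k d, Iso X (toRp x) := by
  have hd : ∀ i, Module.finrank k (X.X i) = Module.finrank k (Fin (d i) → k) := by
    intro i
    have := congrFun h i
    simp only [dv] at this
    simp only [Module.finrank_fin_fun]
    omega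
  let φ : ∀ i, X.X i ≃ₗ[k] (Fin (d i) → k) := fun i => LinearEquiv.ofFinrankEq _ _ (hd i)
  let x : MRep Q k d := fun a => LinearMap.toMatrix' ((φ (Q.tgt a)).toLinearMap ∘ₗ X.m a ∘ₗ (φ (Q.src a)).symm.toLinearMap)
  have hx : ∀ a v, (toRp x).m a v = φ _ (X.m a ((φ _).symm v)) := by
    intro a v
    change (x a).mulVecLin v = _
    rw [← Matrix.toLin'_apply', Matrix.toLin'_toMatrix']
    rfl
  refine ⟨x, Iso.of_bij (f := fun i => (φ i).toLinearMap) ?_ (fun i => (φ i).injective) (fun i => (φ i).surjective)⟩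
  refine isHom_iff.mpr ?_
  intro a v
  rw [hx]
  change φ _ (X.m a ((φ _).symm (φ _ v))) = φ _ (X.m a v)
  rw [LinearEquiv.symm_apply_apply]

lemma miso_of {x y : MRep Q k d} (h : Iso (toRp x) (toRp y)) : MIso x y := by
  obtain ⟨f, g, hf, -, h1, h2⟩ := h
  let f' : ∀ i, (Fin (d i) → k) →ₗ[k] (Fin (d i) → k) := f
  let g' : ∀ i, (Fin (d i) → k) →ₗ[k] (Fin (d i) → k) := g
  have h1' : ∀ i, g' i ∘ₗ f' i = LinearMap.id := fun i => congrFun h1 i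
  have h2' : ∀ i, f' i ∘ₗ g' i = LinearMap.id := fun i => congrFun h2 i
  have hf' : ∀ a, (y a).mulVecLin ∘ₗ f' (Q.src a) = f' (Q.tgt a) ∘ₗ (x a).mulVecLin := by
    intro a
    apply LinearMap.ext
    intro v
    exact isHom_iff.mp hf a v
  have m1 : ∀ i, LinearMap.toMatrix' (g' i) * LinearMap.toMatrix' (f' i) = 1 := fun i => by
    rw [← LinearMap.toMatrix'_comp, h1', LinearMap.toMatrix'_id]
  have m2 : ∀ i, LinearMap.toMatrix' (f' i) * LinearMap.toMatrix' (g' i) = 1 := fun i => by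
    rw [← LinearMap.toMatrix'_comp, h2', LinearMap.toMatrix'_id]
  refine ⟨fun i => ⟨LinearMap.toMatrix' (f' i), LinearMap.toMatrix' (g' i), m2 i, m1 i⟩, fun a => ?_⟩
  have h3 := congrArg LinearMap.toMatrix' (hf' a)
  rw [LinearMap.toMatrix'_comp, LinearMap.toMatrix'_comp, ← Matrix.toLin'_apply', ← Matrix.toLin'_apply',
    LinearMap.toMatrix'_toLin', LinearMap.toMatrix'_toLin'] at h3
  change y a = (LinearMap.toMatrix' (f' (Q.tgt a)) * x a) * LinearMap.toMatrix' (g' (Q.src a))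
  rw [← h3, Matrix.mul_assoc, m2, Matrix.mul_one]

end conv
end QR

/-- For an affine quiver over an algebraically closed field and a positive real root
`α`, there is exactly one isomorphism class of indecomposable representations with
dimension vector `α`. -/
theorem unique_indecomposable_of_real_root
    (Q : AffineQuiver) (k : Type) [Field k] [IsAlgClosed k]
    (α : Q.V → ℤ) (hpos : ∀ i, 0 ≤ α i) (hreal : Q.titsForm α = 1) :
    Nat.card (Quot (fun x y : {x : MRep Q.toFinQuiver k (fun i => (α i).toNat) // MIndec x} =>
        MIso x.1 y.1)) = 1 := by
  have H := QR.aff_of Q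
  obtain ⟨⟨X, hX, iX⟩, huniq⟩ := QR.main_rp k H hpos hreal
  have hd : α = fun i => (((α i).toNat : ℕ) : ℤ) := by
    funext i
    exact (Int.toNat_of_nonneg (hpos i)).symm
  rw [Nat.card_eq_one_iff_unique]
  constructor
  · constructor
    intro a b
    induction a using Quot.ind with
    | _ x =>
      induction b using Quot.ind with
      | _ y =>
        apply Quot.sound
        exact QR.miso_of (huniq _ _ ((QR.dv_toRp x.1).trans hd.symm) ((QR.dv_toRp y.1).trans hd.symm)
          (QR.indec_toRp x.2) (QR.indec_toRp y.2))
  · obtain ⟨x, hx⟩ := QR.exists_toRp (d := fun i => (α i).toNat) (hX.trans hd)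
    exact ⟨Quot.mk _ ⟨x, QR.mindec_of (iX.iso hx)⟩⟩
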